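/- Let d ≥ 2 be an even integer and n = d + 2, and let Σ = {(α, λ) ∈ ℂ^{d−1} × ℂ : there exists a nonzero solution of the Schrödinger equation with parameters (α, λ) subdominant in each of S₀, S₂, …, S_{n−2}}. For m ∈ ℕ let Σ_m = {(α, λ) ∈ Σ : some nonzero solution subdominant in each of S₀, S₂, …, S_{n−2} has exactly m zeros}. Then for every m ∈ ℕ the set Σ_m is nonempty, connected, and both open and closed in the subspace topology of Σ; consequently the sets Σ_m, m = 0, 1, 2, …, are precisely the connected components of Σ. -/

import Mathlib

open Complex Filter Topology

/-- The polynomial potential `P_α(z) = z^d + α_{d-1} z^{d-1} + ⋯ + α₁ z`. -/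
noncomputable def Pol (d : ℕ) (α : Fin (d - 1) → ℂ) (z : ℂ) : ℂ :=
  z ^ d + ∑ i : Fin (d - 1), α i * z ^ ((i : ℕ) + 1)

/-- `y` is an (entire) solution of the Schrödinger equation `y'' = (P_α - λ) y`. -/
def IsSol (d : ℕ) (α : Fin (d - 1) → ℂ) (lam : ℂ) (y : ℂ → ℂ) : Prop :=
  Differentiable ℂ y ∧ ∀ z : ℂ, deriv (deriv y) z = (Pol d α z - lam) * y z

/-- `θ` is a ray direction of the Stokes sector `S_j`. -/
def DirIn (n j : ℕ) (θ : ℝ) : Prop :=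
  |θ - 2 * Real.pi * j / n| < Real.pi / n

/-- `y` is subdominant in the Stokes sector `S_j`: it tends to `0` along every ray in `S_j`. -/
def Subdominant (n j : ℕ) (y : ℂ → ℂ) : Prop :=
  ∀ θ : ℝ, DirIn n j θ →
    Tendsto (fun r : ℝ => y ((r : ℂ) * Complex.exp (θ * Complex.I))) atTop (𝓝 0)

namespace SymTensor

/-- Symmetric tensors of rank `r` over the polynomials of degree at most `m`, in coordinates. -/
abbrev Tensor (m r : ℕ) : Type := Sym (Fin (m + 1)) r → ℂ

/-- Evaluation of one of the variables of a symmetric tensor at the point `x`. -/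
def contract {m r : ℕ} (x : ℂ) : Tensor m (r + 1) →ₗ[ℂ] Tensor m r where
  toFun Ψ := fun μ => ∑ a : Fin (m + 1), x ^ (a : ℕ) * Ψ (a ::ₛ μ)
  map_add' Ψ Φ := by
    ext μ
    simp [mul_add, Finset.sum_add_distrib]
  map_smul' c Ψ := by
    ext μ
    simp only [Pi.smul_apply, smul_eq_mul, RingHom.id_apply, Finset.mul_sum]
    exact Finset.sum_congr rfl fun a _ => by ring

theorem contract_apply {m r : ℕ} (x : ℂ) (Ψ : Tensor m (r + 1)) (μ : Sym (Fin (m + 1)) r) :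
    contract x Ψ μ = ∑ a : Fin (m + 1), x ^ (a : ℕ) * Ψ (a ::ₛ μ) := rfl

theorem contract_comm {m r : ℕ} (x y : ℂ) (Ψ : Tensor m (r + 2)) :
    contract x (contract y Ψ) = contract y (contract x Ψ) := by
  ext μ
  simp only [contract_apply, Finset.mul_sum]
  rw [Finset.sum_comm]
  refine Finset.sum_congr rfl fun a _ => Finset.sum_congr rfl fun b _ => ?_
  rw [Sym.cons_swap]
  ring

theorem eq_zero_of_cofinite_sum_pow {n : ℕ} {f : ℕ → ℂ}
    (h : ∀ᶠ y : ℂ in cofinite, ∑ j ∈ Finset.range n, y ^ j * f j = 0) :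
    ∀ j < n, f j = 0 := by
  intro j hj
  set p : Polynomial ℂ := ∑ j ∈ Finset.range n, Polynomial.monomial j (f j) with hp
  have hp0 : p = 0 := by
    apply Polynomial.eq_zero_of_infinite_isRoot
    have : {x | p.IsRoot x} = {y : ℂ | ∑ j ∈ Finset.range n, y ^ j * f j = 0} := by
      ext x
      simp [hp, Polynomial.IsRoot, Polynomial.eval_finsetSum, mul_comm]
    rw [this]
    have h2 : {y : ℂ | ∑ j ∈ Finset.range n, y ^ j * f j = 0}ᶜ.Finite := h
    simpa using h2.infinite_compl
  have := congrArg (fun q => q.coeff j) hp0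
  simpa [hp, Polynomial.coeff_monomial, Polynomial.finsetSum_coeff, hj] using this

theorem eq_zero_of_cofinite_sum_pow_smul {ι : Type*} {n : ℕ} {B : ℕ → ι → ℂ}
    (h : ∀ᶠ y : ℂ in cofinite, ∑ j ∈ Finset.range n, y ^ j • B j = 0) :
    ∀ j < n, B j = 0 := by
  intro j hj
  ext i
  refine eq_zero_of_cofinite_sum_pow (f := fun j => B j i) (n := n) ?_ j hj
  filter_upwards [h] with y hy
  simpa using congrFun hy i

theorem eq_zero_of_cofinite_contract {m r : ℕ} {Ψ : Tensor m (r + 1)}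
    (h : ∀ᶠ y : ℂ in cofinite, contract y Ψ = 0) : Ψ = 0 := by
  ext ν
  obtain ⟨a, μ, rfl⟩ := Sym.exists_eq_cons_of_succ ν
  have := eq_zero_of_cofinite_sum_pow (n := m + 1)
    (f := fun j => if h : j < m + 1 then Ψ ((⟨j, h⟩ : Fin (m + 1)) ::ₛ μ) else 0) ?_ a a.2
  · simpa [Nat.lt_succ_iff, Fin.is_le] using this
  · filter_upwards [h] with y hy
    rw [Finset.sum_range]
    simpa [contract_apply, Fin.is_le] using congrFun hy μ

theorem eq_zero_of_sum_contract_of_root {m r n : ℕ}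
    (ih : ∀ Ψ : ℕ → Tensor m (r + 1),
      (∀ᶠ x : ℂ in cofinite, ∑ i ∈ Finset.range n, x ^ i • contract x (Ψ i) = 0) →
      ∀ i < n, Ψ i = 0)
    {B : ℕ → Tensor m (r + 1)} {x₀ : ℂ} (h₀ : ∑ j ∈ Finset.range (n + 1), x₀ ^ j • B j = 0)
    (h : ∀ᶠ y : ℂ in cofinite, ∑ j ∈ Finset.range (n + 1), y ^ j • contract y (B j) = 0) :
    ∀ j < n + 1, B j = 0 := by
  set B' : ℕ → Tensor m (r + 1) := fun j =>
    ∑ i ∈ Finset.range (n + 1), if j < i then x₀ ^ (i - 1 - j) • B i else 0 with hB'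
  have key : ∀ y : ℂ, ∑ j ∈ Finset.range (n + 1), y ^ j • B j =
      (y - x₀) • ∑ j ∈ Finset.range n, y ^ j • B' j := by
    intro y
    have e1 : ∑ j ∈ Finset.range n, y ^ j • B' j =
        ∑ i ∈ Finset.range (n + 1),
          (∑ j ∈ Finset.range i, y ^ j * x₀ ^ (i - 1 - j)) • B i := by
      simp only [hB', Finset.smul_sum]
      rw [Finset.sum_comm]
      refine Finset.sum_congr rfl fun i hi => ?_
      rw [Finset.sum_smul]
      simp only [smul_ite, smul_zero, smul_smul]
      rw [← Finset.sum_filter]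
      refine Finset.sum_congr ?_ fun _ _ => rfl
      ext j
      simp only [Finset.mem_filter, Finset.mem_range] at hi ⊢
      omega
    rw [e1, Finset.smul_sum, ← sub_zero (∑ j ∈ Finset.range (n + 1), y ^ j • B j), ← h₀,
      ← Finset.sum_sub_distrib]
    refine Finset.sum_congr rfl fun i _ => ?_
    rw [smul_smul, mul_comm, (Commute.all y x₀).geom_sum₂_mul, sub_smul]
  have hB0 : ∀ j < n, B' j = 0 := by
    refine ih B' ?_
    filter_upwards [h, (Set.finite_singleton x₀).compl_mem_cofinite] with y hy hne
    have h1 := congrArg (contract y) (key y)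
    simp only [map_sum, map_smul] at h1
    rw [hy] at h1
    exact (smul_eq_zero.mp h1.symm).resolve_left (sub_ne_zero.mpr hne)
  refine eq_zero_of_cofinite_sum_pow_smul (Eventually.of_forall fun y => ?_)
  rw [key y, Finset.sum_eq_zero fun j hj => by rw [hB0 j (Finset.mem_range.mp hj), smul_zero],
    smul_zero]

theorem eq_zero_of_sum_contract {m r : ℕ} : ∀ n ≤ r + 1, ∀ Ψ : ℕ → Tensor m (r + 1),
    (∀ᶠ x : ℂ in cofinite, ∑ i ∈ Finset.range n, x ^ i • contract x (Ψ i) = 0) →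
    ∀ i < n, Ψ i = 0 := by
  induction r with
  | zero =>
    intro n hn Ψ h i hi
    obtain rfl : n = 1 := by omega
    obtain rfl : i = 0 := by omega
    exact eq_zero_of_cofinite_contract (by simpa using h)
  | succ r ih =>
    intro n hn Ψ h i hi
    obtain ⟨n, rfl⟩ : ∃ k, n = k + 1 := ⟨n - 1, by omega⟩
    refine eq_zero_of_cofinite_contract ?_
    filter_upwards [h] with x hx
    refine eq_zero_of_sum_contract_of_root (ih n (by omega)) (B := fun i => contract x (Ψ i))
      hx ?_ i hi
    filter_upwards [h] with y hy
    have := congrArg (contract x) hy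
    simpa only [map_sum, map_smul, map_zero, contract_comm x y] using this

theorem eq_zero_of_antisymm_sum_contract {m r : ℕ} (A : ℕ → ℕ → Tensor m (r + 2))
    (hA : ∀ i j, A i j = - A j i)
    (h : ∀ x y : ℂ, ∑ i ∈ Finset.range (r + 2), ∑ j ∈ Finset.range (r + 2),
      (x ^ i * y ^ j) • contract y (contract x (A i j)) = 0) :
    ∀ i < r + 2, ∀ j < r + 2, A i j = 0 := by
  have h1 : ∀ x : ℂ, ∀ j < r + 2,
      ∑ i ∈ Finset.range (r + 2), x ^ i • contract x (A i j) = 0 := by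
    intro x
    refine eq_zero_of_sum_contract_of_root (n := r + 1) (x₀ := x)
      (eq_zero_of_sum_contract (r + 1) le_rfl) ?_ ?_
    · set s := ∑ j ∈ Finset.range (r + 1 + 1), x ^ j •
        ∑ i ∈ Finset.range (r + 2), x ^ i • contract x (A i j) with hs
      have : s = - s := by
        conv_lhs => rw [hs]
        simp only [hs, Finset.smul_sum, ← Finset.sum_neg_distrib]
        rw [Finset.sum_comm]
        refine Finset.sum_congr rfl fun i _ => Finset.sum_congr rfl fun j _ => ?_
        rw [hA i j, map_neg, smul_neg, smul_neg, smul_comm]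
      exact self_eq_neg.mp this
    · refine Eventually.of_forall fun y => ?_
      have := h x y
      rw [Finset.sum_comm] at this
      rw [← this]
      refine Finset.sum_congr rfl fun j _ => ?_
      rw [map_sum, Finset.smul_sum]
      refine Finset.sum_congr rfl fun i _ => ?_
      rw [map_smul, smul_smul, mul_comm]
  intro i hi j hj
  exact eq_zero_of_sum_contract (r + 2) le_rfl (fun i => A i j)
    (Eventually.of_forall fun x => h1 x j hj) i hi

end SymTensor

namespace SymTensor

/-- The action of a matrix on the first variable of a symmetric tensor. -/
def leftAct {R : Type*} {m r : ℕ} (N : Matrix R (Fin (m + 1)) ℂ) :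
    Tensor m (r + 1) →ₗ[ℂ] (R → Tensor m r) where
  toFun Ψ := fun a μ => ∑ b, N a b * Ψ (b ::ₛ μ)
  map_add' Ψ Φ := by
    ext a μ
    simp [mul_add, Finset.sum_add_distrib]
  map_smul' c Ψ := by
    ext a μ
    simp only [Pi.smul_apply, smul_eq_mul, RingHom.id_apply, Finset.mul_sum]
    exact Finset.sum_congr rfl fun a _ => by ring

theorem leftAct_apply {R : Type*} {m r : ℕ} (N : Matrix R (Fin (m + 1)) ℂ)
    (Ψ : Tensor m (r + 1)) (a : R) (μ : Sym (Fin (m + 1)) r) :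
    leftAct N Ψ a μ = ∑ b, N a b * Ψ (b ::ₛ μ) := rfl

/-- Multiplication by `z ^ i`, as a matrix on coefficients. -/
def shift (m k i : ℕ) : Matrix (Fin (m + k + 1)) (Fin (m + 1)) ℂ :=
  fun a b => if (a : ℕ) = b + i then 1 else 0

theorem sum_pow_shift {m k i : ℕ} (hi : i ≤ k) (x : ℂ) (b : Fin (m + 1)) :
    ∑ a : Fin (m + k + 1), x ^ (a : ℕ) * shift m k i a b = x ^ i * x ^ (b : ℕ) := by
  rw [Finset.sum_eq_single (⟨b + i, by omega⟩ : Fin (m + k + 1))]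
  · simp [shift, pow_add, mul_comm]
  · intro a _ ha
    have : (a : ℕ) ≠ b + i := fun h => ha (Fin.ext h)
    simp [shift, this]
  · simp

theorem sum_pow_leftAct_shift {m k r i : ℕ} (hi : i ≤ k) (x : ℂ) (Ψ : Tensor m (r + 1)) :
    ∑ a : Fin (m + k + 1), x ^ (a : ℕ) • leftAct (shift m k i) Ψ a = x ^ i • contract x Ψ := by
  ext μ
  simp only [Finset.sum_apply, Pi.smul_apply, smul_eq_mul, leftAct_apply, contract_apply,
    Finset.mul_sum]
  rw [Finset.sum_comm]
  refine Finset.sum_congr rfl fun b _ => ?_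
  rw [← mul_assoc, ← sum_pow_shift hi x b, Finset.sum_mul]
  exact Finset.sum_congr rfl fun a _ => by ring

/-- The family `(Ψ i)` is sent to the tensor `∑ i, z ^ i Ψ i (z, ·)`. -/
def assemble (m k : ℕ) :
    (Fin (k + 1) → Tensor m (k + 1)) →ₗ[ℂ] (Fin (m + k + 1) → Tensor m k) :=
  ∑ i : Fin (k + 1), (leftAct (shift m k i)).comp (LinearMap.proj i)

theorem assemble_apply {m k : ℕ} (Ψ : Fin (k + 1) → Tensor m (k + 1)) :
    assemble m k Ψ = ∑ i : Fin (k + 1), leftAct (shift m k i) (Ψ i) := by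
  simp [assemble]

theorem assemble_injective (m k : ℕ) : Function.Injective (assemble m k) := by
  rw [← LinearMap.ker_eq_bot, LinearMap.ker_eq_bot']
  intro Ψ h
  rw [assemble_apply] at h
  ext1 i
  have := eq_zero_of_sum_contract (k + 1) le_rfl
    (fun i => if h : i < k + 1 then Ψ ⟨i, h⟩ else 0) (Eventually.of_forall fun x => ?_) i i.2
  · simpa [Nat.lt_succ_iff, Fin.is_le] using this
  · rw [Finset.sum_range]
    have h2 : ∑ a : Fin (m + k + 1), x ^ (a : ℕ) •
        (∑ i : Fin (k + 1), leftAct (shift m k i) (Ψ i)) a = 0 := by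
      rw [h]
      simp
    simp only [Finset.sum_apply, Finset.smul_sum] at h2
    rw [Finset.sum_comm] at h2
    rw [← h2]
    refine Finset.sum_congr rfl fun i _ => ?_
    rw [sum_pow_leftAct_shift (Nat.lt_succ_iff.mp i.2)]
    simp [Fin.is_le]

theorem card_sym_eq (m k : ℕ) : Fintype.card (Sym (Fin (m + 1)) k) = (m + k).choose k := by
  rw [Sym.card_sym_eq_choose, Fintype.card_fin]
  congr 1
  omega

/-- `assemble` as a linear equivalence. -/
noncomputable def assembleEquiv (m k : ℕ) :
    (Fin (k + 1) → Tensor m (k + 1)) ≃ₗ[ℂ] (Fin (m + k + 1) → Tensor m k) :=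
  LinearEquiv.ofInjectiveOfFinrankEq (assemble m k) (assemble_injective m k) (by
    simp only [Module.finrank_pi_fintype, Finset.sum_const,
      Finset.card_univ, Fintype.card_fin, smul_eq_mul, card_sym_eq]
    have := Nat.add_one_mul_choose_eq (m + k) k
    simp only [Module.finrank_self, mul_one, ← add_assoc]
    linarith)

/-- The operators `H i` on symmetric tensors with `N Ψ = ∑ i, z ^ i H i Ψ`. -/
noncomputable def joint (m k : ℕ) (i : Fin (k + 1)) :
    Matrix (Fin (m + k + 1)) (Fin (m + 1)) ℂ →ₗ[ℂ] Module.End ℂ (Tensor m (k + 1)) where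
  toFun N := ((LinearMap.proj i).comp (assembleEquiv m k).symm.toLinearMap).comp (leftAct N)
  map_add' N N' := by
    refine LinearMap.ext fun Ψ => ?_
    have : leftAct (N + N') Ψ = leftAct N Ψ + leftAct N' Ψ := by
      ext a μ
      simp [leftAct_apply, add_mul, Finset.sum_add_distrib]
    simp [this]
  map_smul' c N := by
    refine LinearMap.ext fun Ψ => ?_
    have : leftAct (c • N) Ψ = c • leftAct N Ψ := by
      ext a μ
      simp [leftAct_apply, mul_assoc, Finset.mul_sum]
    simp [this]

theorem sum_leftAct_joint {m k : ℕ} (N : Matrix (Fin (m + k + 1)) (Fin (m + 1)) ℂ)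
    (Ψ : Tensor m (k + 1)) :
    ∑ i : Fin (k + 1), leftAct (shift m k i) (joint m k i N Ψ) = leftAct N Ψ := by
  have := (assembleEquiv m k).apply_symm_apply (leftAct N Ψ)
  conv_rhs => rw [← this]
  exact (assemble_apply _).symm

theorem joint_eq_of_sum {m k : ℕ} {N : Matrix (Fin (m + k + 1)) (Fin (m + 1)) ℂ}
    {Ψ : Tensor m (k + 1)} {Φ : Fin (k + 1) → Tensor m (k + 1)}
    (h : ∑ i : Fin (k + 1), leftAct (shift m k i) (Φ i) = leftAct N Ψ) (i : Fin (k + 1)) :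
    joint m k i N Ψ = Φ i := by
  have : (assembleEquiv m k).symm (leftAct N Ψ) = Φ := by
    rw [LinearEquiv.symm_apply_eq, ← h]
    exact (assemble_apply _).symm
  exact congrFun this i

theorem leftAct_leftAct_joint {m k : ℕ} (N : Matrix (Fin (m + (k + 1) + 1)) (Fin (m + 1)) ℂ)
    (Ψ : Tensor m (k + 2)) (a b : Fin (m + (k + 1) + 1)) :
    leftAct N (leftAct N Ψ a) b = ∑ i : Fin (k + 2), ∑ j : Fin (k + 2),
      leftAct (shift m (k + 1) j)
        (leftAct (shift m (k + 1) i) (joint m (k + 1) j N (joint m (k + 1) i N Ψ)) a) b := by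
  have swap : ∀ (M M' : Matrix (Fin (m + (k + 1) + 1)) (Fin (m + 1)) ℂ) (Φ : Tensor m (k + 2)),
      leftAct M (leftAct M' Φ a) b = leftAct M' (leftAct M Φ b) a := by
    intro M M' Φ
    ext μ
    simp only [leftAct_apply, Finset.mul_sum]
    rw [Finset.sum_comm]
    refine Finset.sum_congr rfl fun _ _ => Finset.sum_congr rfl fun _ _ => ?_
    rw [Sym.cons_swap]
    ring
  conv_lhs => rw [← sum_leftAct_joint N Ψ]
  rw [Finset.sum_apply, map_sum, Finset.sum_apply]
  refine Finset.sum_congr rfl fun i _ => ?_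
  rw [swap, ← sum_leftAct_joint N (joint m (k + 1) i N Ψ), Finset.sum_apply, map_sum,
    Finset.sum_apply]
  refine Finset.sum_congr rfl fun j _ => ?_
  rw [swap]

theorem sum_sum_contract_joint {m k : ℕ} (N : Matrix (Fin (m + (k + 1) + 1)) (Fin (m + 1)) ℂ)
    (Ψ : Tensor m (k + 2)) (x y : ℂ) :
    ∑ i : Fin (k + 2), ∑ j : Fin (k + 2), (x ^ (i : ℕ) * y ^ (j : ℕ)) •
      contract y (contract x (joint m (k + 1) j N (joint m (k + 1) i N Ψ))) =
    ∑ a : Fin (m + (k + 1) + 1), ∑ b : Fin (m + (k + 1) + 1), (x ^ (a : ℕ) * y ^ (b : ℕ)) • leftAct N (leftAct N Ψ a) b := by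
  simp only [leftAct_leftAct_joint, Finset.smul_sum]
  symm
  calc _ = ∑ i : Fin (k + 2), ∑ j : Fin (k + 2), ∑ b : Fin (m + (k + 1) + 1),
        y ^ (b : ℕ) • leftAct (shift m (k + 1) j)
        (∑ a : Fin (m + (k + 1) + 1), x ^ (a : ℕ) • leftAct (shift m (k + 1) i)
          (joint m (k + 1) j N (joint m (k + 1) i N Ψ)) a) b := by
        simp only [map_sum, map_smul, Finset.sum_apply, Pi.smul_apply, Finset.smul_sum, smul_smul]
        rw [Finset.sum_congr rfl fun a _ => Finset.sum_comm, Finset.sum_comm]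
        refine Finset.sum_congr rfl fun i _ => ?_
        rw [Finset.sum_congr rfl fun a _ => Finset.sum_comm, Finset.sum_comm]
        refine Finset.sum_congr rfl fun j _ => ?_
        rw [Finset.sum_comm]
        simp only [mul_comm]
    _ = _ := by
        refine Finset.sum_congr rfl fun i _ => Finset.sum_congr rfl fun j _ => ?_
        rw [sum_pow_leftAct_shift (Nat.lt_succ_iff.mp i.2),
          sum_pow_leftAct_shift (Nat.lt_succ_iff.mp j.2), map_smul, smul_smul, mul_comm]

theorem joint_commute {m k : ℕ} (N : Matrix (Fin (m + k + 1)) (Fin (m + 1)) ℂ)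
    (i j : Fin (k + 1)) : Commute (joint m k i N) (joint m k j N) := by
  cases k with
  | zero =>
    have : i = j := Subsingleton.elim (α := Fin 1) i j
    rw [this]
  | succ k =>
    refine LinearMap.ext fun Ψ => ?_
    set H : ℕ → Module.End ℂ (Tensor m (k + 2)) := fun i =>
      if h : i < k + 2 then joint m (k + 1) ⟨i, h⟩ N else 0 with hH
    have hHi : ∀ i : Fin (k + 2), H i = joint m (k + 1) i N := fun i => by
      simp only [hH, i.2, dif_pos]
    have := eq_zero_of_antisymm_sum_contract (fun i j => H i (H j Ψ) - H j (H i Ψ))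
      (fun i j => by simp) (fun x y => ?_) i i.2 j j.2
    · rw [hHi, hHi] at this
      exact sub_eq_zero.mp this
    · simp only [map_sub, smul_sub, Finset.sum_sub_distrib]
      rw [sub_eq_zero]
      simp only [Finset.sum_range, hHi]
      rw [sum_sum_contract_joint N Ψ x y, Finset.sum_comm]
      have e := sum_sum_contract_joint N Ψ y x
      calc _ = ∑ i : Fin (k + 2), ∑ j : Fin (k + 2), (y ^ (i : ℕ) * x ^ (j : ℕ)) •
          contract x (contract y (joint m (k + 1) j N (joint m (k + 1) i N Ψ))) := by
            refine Finset.sum_congr rfl fun i _ => Finset.sum_congr rfl fun j _ => ?_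
            rw [contract_comm, mul_comm]
        _ = _ := by
            rw [e, Finset.sum_comm]
            refine Finset.sum_congr rfl fun a _ => Finset.sum_congr rfl fun b _ => ?_
            rw [mul_comm]
            congr 1
            ext μ
            simp only [leftAct_apply, Finset.mul_sum]
            rw [Finset.sum_comm]
            refine Finset.sum_congr rfl fun _ _ => Finset.sum_congr rfl fun _ _ => ?_
            rw [Sym.cons_swap]
            ring

/-- The symmetric power of a coefficient vector. -/
def power {m : ℕ} (r : ℕ) (q : Fin (m + 1) → ℂ) : Tensor m r := fun ν => (ν.1.map q).prod

theorem power_cons {m r : ℕ} (q : Fin (m + 1) → ℂ) (a : Fin (m + 1)) (μ : Sym (Fin (m + 1)) r) :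
    power (r + 1) q (a ::ₛ μ) = q a * power r q μ := by
  simp [power, Sym.coe_cons, Multiset.map_cons, Multiset.prod_cons]

theorem power_replicate {m r : ℕ} (q : Fin (m + 1) → ℂ) (a : Fin (m + 1)) :
    power r q (Sym.replicate r a) = q a ^ r := by
  simp [power, Sym.replicate]

theorem joint_power {m k : ℕ} {N : Matrix (Fin (m + k + 1)) (Fin (m + 1)) ℂ}
    {q : Fin (m + 1) → ℂ} {u : Fin (k + 1) → ℂ}
    (h : N.mulVec q = (∑ i, u i • shift m k i).mulVec q) (i : Fin (k + 1)) :
    joint m k i N (power (k + 1) q) = u i • power (k + 1) q := by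
  refine joint_eq_of_sum (Φ := fun i => u i • power (k + 1) q) ?_ i
  ext a μ
  have := congrFun h a
  simp only [Matrix.mulVec, dotProduct, Matrix.sum_apply, Matrix.smul_apply, smul_eq_mul,
    Finset.sum_mul] at this
  simp only [map_smul, Finset.sum_apply, Pi.smul_apply, leftAct_apply, power_cons, smul_eq_mul,
    Finset.mul_sum]
  calc _ = (∑ b, ∑ i, u i * shift m k i a b * q b) * power k q μ := by
        rw [Finset.sum_comm, Finset.sum_mul]
        refine Finset.sum_congr rfl fun b _ => ?_
        rw [Finset.sum_mul]
        exact Finset.sum_congr rfl fun i _ => by ring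
    _ = _ := by
        rw [← this, Finset.sum_mul]
        exact Finset.sum_congr rfl fun i _ => by ring

theorem exists_mulVec_eq_of_joint {m k : ℕ} {N : Matrix (Fin (m + k + 1)) (Fin (m + 1)) ℂ}
    {Ψ : Tensor m (k + 1)} (hΨ : Ψ ≠ 0) {u : Fin (k + 1) → ℂ}
    (h : ∀ i, joint m k i N Ψ = u i • Ψ) :
    ∃ q : Fin (m + 1) → ℂ, q ≠ 0 ∧ N.mulVec q = (∑ i, u i • shift m k i).mulVec q := by
  obtain ⟨ν, hν⟩ := Function.ne_iff.mp hΨ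
  obtain ⟨a, μ, rfl⟩ := Sym.exists_eq_cons_of_succ ν
  refine ⟨fun b => Ψ (b ::ₛ μ), fun h0 => hν (congrFun h0 a), ?_⟩
  ext b
  have := congrFun (congrFun (sum_leftAct_joint N Ψ) b) μ
  simp only [h, map_smul, Finset.sum_apply, Pi.smul_apply, leftAct_apply, smul_eq_mul,
    Finset.mul_sum] at this
  simp only [Matrix.mulVec, dotProduct, Matrix.sum_apply, Matrix.smul_apply, smul_eq_mul,
    Finset.sum_mul]
  rw [← this, Finset.sum_comm]
  exact Finset.sum_congr rfl fun i _ => Finset.sum_congr rfl fun i _ => by ring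

end SymTensor

namespace Involution

variable {A : Type*} [NormedRing A] [NormedAlgebra ℂ A] [CompleteSpace A]

theorem exists_local_sqrt : ∃ r : A → A, r 1 = 1 ∧ ContDiffAt ℂ 1 r 1 ∧
    (∀ᶠ w in 𝓝 1, r w * r w = w) ∧ ∀ᶠ w in 𝓝 1, ∀ B, Commute B w → Commute B (r w) := by
  have hc : ContDiffAt ℂ 1 (fun x : A => x * x) 1 := (contDiff_id.mul contDiff_id).contDiffAt
  let e : A ≃L[ℂ] A := ContinuousLinearEquiv.smulLeft (Units.mk0 (2 : ℂ) two_ne_zero)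
  have hd : HasFDerivAt (fun x : A => x * x) (e : A →L[ℂ] A) 1 := by
    refine ((hasFDerivAt_id (𝕜 := ℂ) (1 : A)).mul' (hasFDerivAt_id (𝕜 := ℂ) (1 : A))).congr_fderiv
      (ContinuousLinearMap.ext fun x => ?_)
    have : e x = (2 : ℂ) • x := rfl
    simp [this, two_smul]
  have hs := hc.hasStrictFDerivAt' hd one_ne_zero
  have hcr := hc.to_localInverse hd one_ne_zero
  have h1 := hc.localInverse_apply_image hd one_ne_zero
  set r := hc.localInverse hd one_ne_zero with hr
  have hright : ∀ᶠ w in 𝓝 (1 : A), r w * r w = w := by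
    have := hs.eventually_right_inverse
    simp only [mul_one] at this
    exact this
  have hleft : ∀ᶠ x in 𝓝 (1 : A), r (x * x) = x := hs.eventually_left_inverse
  simp only [mul_one] at h1 hcr
  have hct : Tendsto r (𝓝 1) (𝓝 1) := by
    have := hcr.continuousAt.tendsto
    rwa [h1] at this
  refine ⟨r, h1, hcr, hright, ?_⟩
  filter_upwards [hright, hct.eventually hleft.eventually_nhds] with w hw hw2 B hB
  -- conjugation by `1 + ε B` preserves `w`, hence its square root
  have hunit : ∀ᶠ ε : ℂ in 𝓝 0, IsUnit (1 + ε • B) := by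
    have : ContinuousAt (fun ε : ℂ => 1 + ε • B) 0 := by fun_prop
    refine this.eventually (p := fun x => IsUnit x) ?_
    simp only [zero_smul, add_zero]
    exact Units.isOpen.mem_nhds (isUnit_one (M := A))
  have hconj : Tendsto (fun ε : ℂ => (1 + ε • B) * r w * Ring.inverse (1 + ε • B)) (𝓝 0)
      (𝓝 (r w)) := by
    have hinv : ContinuousAt (fun ε : ℂ => Ring.inverse (1 + ε • B)) 0 := by
      refine ContinuousAt.comp (g := Ring.inverse) ?_ (by fun_prop)
      simpa using NormedRing.inverse_continuousAt (1 : Aˣ)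
    have h0 : ContinuousAt (fun ε : ℂ => (1 + ε • B) * r w * Ring.inverse (1 + ε • B)) 0 := by
      fun_prop
    simpa [ContinuousAt] using h0
  obtain ⟨ε, ⟨⟨⟨u, hu⟩, h2⟩, hε⟩⟩ := (((hunit.filter_mono nhdsWithin_le_nhds).and
    ((hconj.eventually hw2).filter_mono nhdsWithin_le_nhds)).and
    (self_mem_nhdsWithin (s := {0}ᶜ) (a := (0 : ℂ)))).exists
  have hcu : Commute (u : A) w := by
    rw [hu]
    exact (Commute.one_left w).add_left (hB.smul_left ε)
  rw [← hu, Ring.inverse_unit] at h2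
  have h3 : (u : A) * r w * ↑u⁻¹ * (↑u * r w * ↑u⁻¹) = w := by
    calc (u : A) * r w * ↑u⁻¹ * (↑u * r w * ↑u⁻¹) = ↑u * (r w * (↑u⁻¹ * ↑u) * r w) * ↑u⁻¹ := by
          noncomm_ring
      _ = w := by
          rw [Units.inv_mul, mul_one, hw, hcu.eq, mul_assoc, Units.mul_inv, mul_one]
  rw [h3] at h2
  have h4 : Commute (u : A) (r w) := by
    have := congrArg (· * (u : A)) h2
    simp only [mul_assoc, Units.inv_mul, mul_one] at this
    exact this.symm
  rw [hu] at h4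
  have h5 : Commute (ε • B) (r w) := by
    have := h4.sub_left (Commute.one_left (r w))
    simpa using this
  have := h5.smul_left ε⁻¹
  rwa [smul_smul, inv_mul_cancel₀ hε, one_smul] at this

/-- Near an involution `x₀` there is a holomorphic retraction to the set of involutions. -/
theorem exists_local_retraction {x₀ : A} (h₀ : x₀ * x₀ = 1) :
    ∃ S : A → A, ∀ᶠ x in 𝓝 x₀, DifferentiableAt ℂ S x ∧ S x * S x = 1 ∧ ‖S x - x‖ < 1 / 2 ∧
      ∀ B, Commute B x → Commute B (S x) := by
  obtain ⟨r, h1, hcr, hsq, hcomm⟩ := exists_local_sqrt (A := A)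
  set f : A → A := fun x => Ring.inverse (x * x) with hf
  have hf0 : f x₀ = 1 := by simp [hf, h₀]
  have hfc : Tendsto f (𝓝 x₀) (𝓝 1) := by
    have : ContinuousAt f x₀ := by
      refine ContinuousAt.comp (g := Ring.inverse) ?_ (by fun_prop)
      rw [h₀]
      simpa using NormedRing.inverse_continuousAt (1 : Aˣ)
    simpa [ContinuousAt, hf0] using this
  have hunit : ∀ᶠ x in 𝓝 x₀, IsUnit (x * x) := by
    have : ContinuousAt (fun x : A => x * x) x₀ := by fun_prop
    refine this.eventually (p := fun x => IsUnit x) ?_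
    simp only [h₀]
    exact Units.isOpen.mem_nhds (isUnit_one (M := A))
  have hrd : ∀ᶠ w in 𝓝 (1 : A), DifferentiableAt ℂ r w :=
    (hcr.eventually (by simp)).mono fun w hw => hw.differentiableAt one_ne_zero
  have hclose : ∀ᶠ x in 𝓝 x₀, ‖x * r (f x) - x‖ < 1 / 2 := by
    have h2 : Tendsto (fun x => x * r (f x) - x) (𝓝 x₀) (𝓝 (x₀ * 1 - x₀)) := by
      have := hcr.continuousAt.tendsto
      rw [h1] at this
      exact (tendsto_id.mul (this.comp hfc)).sub tendsto_id
    have h3 := h2.norm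
    simp only [mul_one, sub_self, norm_zero] at h3
    exact h3.eventually (gt_mem_nhds (by norm_num))
  refine ⟨fun x => x * r (f x), ?_⟩
  filter_upwards [hunit, hclose, hfc.eventually hsq, hfc.eventually hcomm, hfc.eventually hrd]
    with x hx hx1 hx2 hx3 hx4
  have hB : ∀ B, Commute B x → Commute B (r (f x)) := fun B hB => by
    refine hx3 B ?_
    obtain ⟨u, hu⟩ := hx
    have : Commute B (u : A) := by
      rw [hu]
      exact hB.mul_right hB
    simp only [hf, ← hu, Ring.inverse_unit]
    exact this.units_inv_right
  refine ⟨?_, ?_, hx1, fun B h => h.mul_right (hB B h)⟩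
  · have : DifferentiableAt ℂ f x :=
      (differentiableAt_inverse (𝕜 := ℂ) hx).comp (f := fun x => x * x) x
        (differentiableAt_id.mul differentiableAt_id)
    exact differentiableAt_id.mul (hx4.comp x this)
  · have hc := hB x (Commute.refl x)
    calc x * r (f x) * (x * r (f x)) = x * (r (f x) * x) * r (f x) := by noncomm_ring
      _ = x * x * (r (f x) * r (f x)) := by
          rw [← hc.eq]
          noncomm_ring
      _ = 1 := by
          rw [hx2]
          exact Ring.mul_inverse_cancel _ hx

end Involution

namespace CommutingFamily

open Polynomial

section Algebraic

variable {V : Type*} [AddCommGroup V] [Module ℂ V] [FiniteDimensional ℂ V] {κ : Type*}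

/-- `Ψ` is a nonzero joint eigenvector of the family `H`, with eigenvalues `v`. -/
def IsJoint (H : κ → Module.End ℂ V) (v : κ → ℂ) (Ψ : V) : Prop :=
  Ψ ≠ 0 ∧ ∀ i, H i Ψ = v i • Ψ

theorem exists_isJoint_mem {H : κ → Module.End ℂ V} (hH : ∀ i j, Commute (H i) (H j))
    (W : Submodule ℂ V) (hW : W ≠ ⊥) (hinv : ∀ i, ∀ x ∈ W, H i x ∈ W) :
    ∃ v, ∃ Ψ ∈ W, IsJoint H v Ψ := by
  induction hn : Module.finrank ℂ W using Nat.strong_induction_on generalizing W with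
  | _ n ih =>
    by_cases hsc : ∀ i, ∃ c : ℂ, ∀ x ∈ W, H i x = c • x
    · choose v hv using hsc
      obtain ⟨Ψ, hΨ, h0⟩ := W.ne_bot_iff.mp hW
      exact ⟨v, Ψ, hΨ, h0, fun i => hv i Ψ hΨ⟩
    · push Not at hsc
      obtain ⟨i, hi⟩ := hsc
      have : Nontrivial W := Submodule.nontrivial_iff_ne_bot.mpr hW
      obtain ⟨μ, hμ⟩ := Module.End.exists_eigenvalue ((H i).restrict (hinv i))
      obtain ⟨x, hx⟩ := hμ.exists_hasEigenvector
      have hlt : W ⊓ (H i).eigenspace μ < W := by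
        refine lt_of_le_of_ne inf_le_left fun h => ?_
        obtain ⟨y, hy, hy2⟩ := hi μ
        rw [← h] at hy
        exact hy2 (Module.End.mem_eigenspace_iff.mp hy.2)
      have hne : W ⊓ (H i).eigenspace μ ≠ ⊥ := by
        refine (Submodule.ne_bot_iff _).mpr ⟨x, ⟨x.2, ?_⟩, ?_⟩
        · have := hx.apply_eq_smul
          exact Module.End.mem_eigenspace_iff.mpr (congrArg Subtype.val this)
        · simpa using hx.2
      have hinv' : ∀ j, ∀ y ∈ W ⊓ (H i).eigenspace μ, H j y ∈ W ⊓ (H i).eigenspace μ := by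
        rintro j y ⟨hy1, hy2⟩
        refine ⟨hinv j y hy1, Module.End.mem_eigenspace_iff.mpr ?_⟩
        have h2 := Module.End.mem_eigenspace_iff.mp hy2
        have h3 := LinearMap.congr_fun (hH i j).eq y
        simp only [Module.End.mul_apply] at h3
        rw [h3, h2, map_smul]
      have hrank := Submodule.finrank_lt_finrank_of_lt hlt
      obtain ⟨v, Ψ, hΨ, h⟩ := ih _ (hn ▸ hrank) _ hne hinv' rfl
      exact ⟨v, Ψ, hΨ.1, h⟩

theorem exists_isJoint_of_hasEigenvalue {H : κ → Module.End ℂ V}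
    (hH : ∀ i j, Commute (H i) (H j)) {T : Module.End ℂ V} (hT : ∀ i, Commute T (H i)) {μ : ℂ}
    (hμ : T.HasEigenvalue μ) : ∃ v Ψ, T Ψ = μ • Ψ ∧ IsJoint H v Ψ := by
  obtain ⟨v, Ψ, hΨ, h⟩ := exists_isJoint_mem hH (T.eigenspace μ) hμ fun i x hx => by
    rw [Module.End.mem_eigenspace_iff] at hx ⊢
    have h3 := LinearMap.congr_fun (hT i).eq x
    simp only [Module.End.mul_apply] at h3
    rw [h3, hx, map_smul]
  exact ⟨v, Ψ, Module.End.mem_eigenspace_iff.mp hΨ, h⟩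

theorem isNilpotent_of_forall_hasEigenvalue {T : Module.End ℂ V}
    (h : ∀ μ, T.HasEigenvalue μ → μ = 0) : IsNilpotent T := by
  rw [LinearMap.isNilpotent_iff_charpoly]
  have hs := IsAlgClosed.splits T.charpoly
  have hr : T.charpoly.roots = Multiset.replicate (Module.finrank ℂ V) 0 := by
    rw [Multiset.eq_replicate, ← hs.natDegree_eq_card_roots, LinearMap.charpoly_natDegree]
    refine ⟨rfl, fun μ hμ => h μ ?_⟩
    rw [Module.End.hasEigenvalue_iff_isRoot_charpoly]
    exact isRoot_of_mem_roots hμ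
  have := hs.eq_prod_roots_of_monic (LinearMap.charpoly_monic T)
  rw [this, hr]
  simp

/-- Two idempotents in the bicommutant that agree on joint eigenvectors are equal. -/
theorem eq_of_isIdempotentElem {H : κ → Module.End ℂ V} (hH : ∀ i j, Commute (H i) (H j))
    {P P' : Module.End ℂ V} (hP : IsIdempotentElem P) (hP' : IsIdempotentElem P')
    (hc : ∀ B, (∀ i, Commute B (H i)) → Commute B P)
    (hc' : ∀ B, (∀ i, Commute B (H i)) → Commute B P') {e : (κ → ℂ) → ℂ}
    (he : ∀ v Ψ, IsJoint H v Ψ → P Ψ = e v • Ψ) (he' : ∀ v Ψ, IsJoint H v Ψ → P' Ψ = e v • Ψ) :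
    P = P' := by
  have hPH : ∀ i, Commute P (H i) := fun i => (hc _ fun j => hH i j).symm
  have hPH' : ∀ i, Commute P' (H i) := fun i => (hc' _ fun j => hH i j).symm
  have hPP : Commute P P' := hc' P hPH
  have key : ∀ Q Q' : Module.End ℂ V, IsIdempotentElem Q → IsIdempotentElem Q' → Commute Q Q' →
      (∀ i, Commute Q (H i)) → (∀ i, Commute Q' (H i)) →
      (∀ v Ψ, IsJoint H v Ψ → Q Ψ = Q' Ψ) → Q * (1 - Q') = 0 := by
    intro Q Q' hQ hQ' hQQ hQH hQH' hj
    by_contra hne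
    have hcom : ∀ i, Commute (Q * (1 - Q')) (H i) := fun i =>
      (hQH i).mul_left ((Commute.one_left _).sub_left (hQH' i))
    obtain ⟨v, Ψ, ⟨Φ, rfl⟩, hΨ⟩ := exists_isJoint_mem hH (LinearMap.range (Q * (1 - Q')))
      (by rwa [Ne, LinearMap.range_eq_bot]) (by
        rintro i _ ⟨x, rfl⟩
        have := LinearMap.congr_fun (hcom i).eq x
        exact ⟨H i x, this⟩)
    have h1 : Q ((Q * (1 - Q')) Φ) = (Q * (1 - Q')) Φ := by
      rw [← Module.End.mul_apply, ← mul_assoc, hQ.eq]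
    have h2 : Q' ((Q * (1 - Q')) Φ) = 0 := by
      have h3 : Q' * (Q * (1 - Q')) = 0 := by
        rw [← mul_assoc, ← hQQ.eq, mul_assoc, mul_sub, mul_one, hQ'.eq, sub_self, mul_zero]
      rw [← Module.End.mul_apply, h3, LinearMap.zero_apply]
    exact hΨ.1 (by rw [← h1, hj v _ hΨ, h2])
  have a1 := key P P' hP hP' hPP hPH hPH' fun v Ψ h => (he v Ψ h).trans (he' v Ψ h).symm
  have a2 := key P' P hP' hP hPP.symm hPH' hPH fun v Ψ h => (he' v Ψ h).trans (he v Ψ h).symm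
  rw [mul_sub, mul_one, sub_eq_zero] at a1 a2
  rw [a1, hPP.eq, ← a2]

theorem exists_idempotent_polynomial {N : ℕ} (hN : N ≠ 0) : ∃ p : ℂ[X], p.eval 0 = 0 ∧
    p.eval 1 = 1 ∧ (X * (1 - X)) ^ N ∣ p * (1 - p) := by
  have hc : IsCoprime (X : ℂ[X]) (1 - X) := ⟨1, 1, by ring⟩
  obtain ⟨a, b, h⟩ := hc.pow (m := N) (n := N)
  refine ⟨a * X ^ N, by simp [hN], ?_, ⟨a * b, ?_⟩⟩
  · have := congrArg (eval 1) h
    simpa [hN] using this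
  · have : 1 - a * X ^ N = b * (1 - X) ^ N := by linear_combination -h
    rw [this, mul_pow]
    ring

theorem commute_aeval {A : Type*} [Ring A] [Algebra ℂ A] {T B : A} (h : Commute T B) (p : ℂ[X]) :
    Commute (aeval T p) B := by
  induction p using Polynomial.induction_on' with
  | add p q hp hq => simpa using hp.add_left hq
  | monomial n a =>
    rw [aeval_monomial]
    exact (Algebra.commute_algebraMap_left a B).mul_left (h.pow_left n)

theorem aeval_apply_of_apply_eq {V : Type*} [AddCommGroup V] [Module ℂ V] {T : Module.End ℂ V}
    {μ : ℂ} {Ψ : V} (h : T Ψ = μ • Ψ)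
    (p : ℂ[X]) : aeval T p Ψ = p.eval μ • Ψ := by
  induction p using Polynomial.induction_on' with
  | add p q hp hq => simp [hp, hq, add_smul]
  | monomial n a =>
    have : ∀ n : ℕ, (T ^ n) Ψ = μ ^ n • Ψ := fun n => by
      induction n with
      | zero => simp
      | succ n ih => rw [pow_succ', Module.End.mul_apply, ih, map_smul, h, smul_smul, pow_succ]
    simp [aeval_monomial, this, smul_smul, mul_comm]

theorem exists_separating [Finite κ] {F : Set (κ → ℂ)} (hF : F.Finite) :
    ∃ φ : (κ → ℂ) →ₗ[ℂ] ℂ, Set.InjOn φ F := by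
  classical
  let ι := {x : F × F // x.1 ≠ x.2}
  have := hF.to_subtype
  obtain ⟨φ, hφ⟩ := Module.exists_dual_forall_apply_ne_zero (K := ℂ)
    (fun x : ι => (x.1.1 : κ → ℂ) - x.1.2) fun x => sub_ne_zero.mpr fun h =>
      x.2 (Subtype.ext h)
  refine ⟨φ, fun x hx y hy h => ?_⟩
  by_contra hne
  refine hφ ⟨(⟨x, hx⟩, ⟨y, hy⟩), fun h => hne (congrArg Subtype.val h)⟩ ?_
  simp [h]

theorem finite_joint [Finite κ] (H : κ → Module.End ℂ V) : {v | ∃ Ψ, IsJoint H v Ψ}.Finite := by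
  refine (Set.Finite.pi (t := fun i => {μ | (H i).HasEigenvalue μ}) fun i =>
    Module.End.finite_hasEigenvalue (H i)).subset ?_
  rintro v ⟨Ψ, h0, h⟩ i _
  exact Module.End.hasEigenvalue_of_hasEigenvector ⟨Module.End.mem_eigenspace_iff.mpr (h i), h0⟩

/-- A combination and a polynomial giving the spectral idempotent of a commuting family. -/
theorem exists_isIdempotentElem_aeval [Fintype κ] {H : κ → Module.End ℂ V}
    (hH : ∀ i j, Commute (H i) (H j)) {e : (κ → ℂ) → ℂ}
    (he : ∀ v Ψ, IsJoint H v Ψ → e v = 0 ∨ e v = 1) :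
    ∃ (a : κ → ℂ) (p : ℂ[X]), IsIdempotentElem (aeval (∑ i, a i • H i) p) ∧
      ∀ v Ψ, IsJoint H v Ψ → p.eval (∑ i, a i * v i) = e v := by
  classical
  have hfin := finite_joint H
  obtain ⟨φ, hφ⟩ := exists_separating hfin
  set a : κ → ℂ := fun i => φ (Pi.single i 1) with ha
  have hφa : ∀ v, φ v = ∑ i, a i * v i := fun v => by
    rw [LinearMap.pi_apply_eq_sum_univ φ v]
    exact Finset.sum_congr rfl fun i _ => by
      rw [smul_eq_mul, mul_comm]
      congr 2
      ext j
      simp [Pi.single_apply, eq_comm]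
  set q : ℂ[X] := Lagrange.interpolate hfin.toFinset φ e with hq
  have hqe : ∀ v Ψ, IsJoint H v Ψ → q.eval (∑ i, a i * v i) = e v := fun v Ψ h => by
    rw [← hφa]
    exact Lagrange.eval_interpolate_at_node e (by simpa using hφ) (by simpa using ⟨Ψ, h⟩)
  set T := ∑ i, a i • H i with hT
  have hTj : ∀ v Ψ, IsJoint H v Ψ → T Ψ = (∑ i, a i * v i) • Ψ := fun v Ψ h => by
    simp only [hT, LinearMap.sum_apply, LinearMap.smul_apply, h.2, smul_smul, Finset.sum_smul]
  have hTH : ∀ i, Commute T (H i) := fun i =>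
    Commute.sum_left _ _ _ fun j _ => (hH j i).smul_left _
  have hnil : IsNilpotent (aeval T (q * (1 - q))) := by
    refine isNilpotent_of_forall_hasEigenvalue fun μ hμ => ?_
    obtain ⟨v, Ψ, h1, h2⟩ := exists_isJoint_of_hasEigenvalue hH
      (fun i => commute_aeval (hTH i) (q * (1 - q))) hμ
    have h3 := aeval_apply_of_apply_eq (hTj v Ψ h2) (q * (1 - q))
    rw [h1] at h3
    have h4 := smul_left_injective ℂ h2.1 h3
    rw [h4, eval_mul, eval_sub, eval_one, hqe v Ψ h2]
    rcases he v Ψ h2 with h | h <;> simp [h]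
  obtain ⟨N, hN⟩ := hnil
  obtain ⟨p, hp0, hp1, hpd⟩ := exists_idempotent_polynomial N.succ_ne_zero
  refine ⟨a, p.comp q, ?_, fun v Ψ h => ?_⟩
  · obtain ⟨c, hc⟩ := hpd
    have : (p * (1 - p)).comp q = (q * (1 - q)) ^ N * ((q * (1 - q)) * c.comp q) := by
      rw [hc]
      simp only [mul_comp, pow_comp, sub_comp, X_comp, one_comp, pow_succ]
      ring
    have h2 := congrArg (aeval T) this
    rw [map_mul, map_pow, hN, zero_mul, mul_comp, sub_comp, one_comp, map_mul, map_sub, map_one,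
      mul_sub, mul_one, sub_eq_zero] at h2
    exact h2.symm
  · rw [eval_comp, hqe v Ψ h]
    rcases he v Ψ h with h | h <;> simp [h, hp0, hp1]

end Algebraic

end CommutingFamily

namespace CommutingFamily

open Polynomial Module.End

variable {V : Type*} [NormedAddCommGroup V] [NormedSpace ℂ V] [FiniteDimensional ℂ V]
  {κ : Type*} [Fintype κ]

/-- The joint spectral curve of a one-parameter commuting family. -/
def curve (H : κ → ℂ → Module.End ℂ V) : Set (ℂ × (κ → ℂ)) :=
  {x | ∃ Ψ, IsJoint (fun i => H i x.1) x.2 Ψ}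

local notation "Φ" => Module.End.toContinuousLinearMap V

theorem differentiable_toCLM {f : ℂ → Module.End ℂ V} (hf : ∀ x, Differentiable ℂ fun s => f s x) :
    Differentiable ℂ fun s => Φ (f s) :=
  (contDiff_clm_apply_iff.mpr fun x => (hf x).contDiff (n := 1)).differentiable one_ne_zero

/-- An open property of the spectral curve along a fibre holds for all nearby points. -/
theorem eventually_forall_isJoint {H : κ → ℂ → Module.End ℂ V}
    (hd : ∀ i x, Differentiable ℂ fun s => H i s x) (s₀ : ℂ) {P : ℂ × (κ → ℂ) → Prop}
    (hP : ∀ v, (s₀, v) ∈ curve H → ∀ᶠ x in 𝓝[curve H] (s₀, v), P x) :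
    ∀ᶠ s in 𝓝 s₀, ∀ v, (s, v) ∈ curve H → P (s, v) := by
  have hc : ∀ i, Continuous fun s => Φ (H i s) := fun i => (differentiable_toCLM (hd i)).continuous
  set R : ℝ := ∑ i, ‖Φ (H i s₀)‖ + 1 with hR
  have hRpos : 0 ≤ R := by positivity
  have hbound : ∀ᶠ s in 𝓝 s₀, ∀ i, ‖Φ (H i s)‖ < R := by
    refine eventually_all.mpr fun i => (hc i).norm.continuousAt.eventually_lt_const ?_
    have := Finset.single_le_sum (f := fun i => ‖Φ (H i s₀)‖) (fun i _ => norm_nonneg _)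
      (Finset.mem_univ i)
    linarith
  have hcompact : IsCompact (Metric.closedBall (0 : κ → ℂ) R ×ˢ Metric.sphere (0 : V) 1) :=
    have := FiniteDimensional.proper ℂ V
    (isCompact_closedBall _ _).prod (isCompact_sphere _ _)
  have key : ∀ᶠ s in 𝓝 s₀, ∀ y ∈ Metric.closedBall (0 : κ → ℂ) R ×ˢ Metric.sphere (0 : V) 1,
      (∀ i, H i s y.2 = y.1 i • y.2) → P (s, y.1) := by
    refine hcompact.eventually_forall_of_forall_eventually
      (P := fun s y => (∀ i, H i s y.2 = y.1 i • y.2) → P (s, y.1)) ?_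
    rintro ⟨v, Ψ⟩ ⟨-, hΨ⟩
    have hΨ0 : Ψ ≠ 0 := by
      rintro rfl
      simp at hΨ
    by_cases hj : ∀ i, H i s₀ Ψ = v i • Ψ
    · have h1 := eventually_nhdsWithin_iff.mp (hP v ⟨Ψ, hΨ0, hj⟩)
      have h2 : Tendsto (fun z : ℂ × (κ → ℂ) × V => (z.1, z.2.1)) (𝓝 (s₀, v, Ψ)) (𝓝 (s₀, v)) :=
        Continuous.tendsto (by fun_prop) _
      have h3 : ∀ᶠ z : ℂ × (κ → ℂ) × V in 𝓝 (s₀, v, Ψ), z.2.2 ≠ 0 :=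
        (Continuous.tendsto (by fun_prop) _).eventually_ne hΨ0
      filter_upwards [h2.eventually h1, h3] with z hz hz0 hzj
      exact hz ⟨z.2.2, hz0, hzj⟩
    · push Not at hj
      obtain ⟨i, hi⟩ := hj
      have h1 : Continuous fun z : ℂ × (κ → ℂ) × V => Φ (H i z.1) z.2.2 - z.2.1 i • z.2.2 := by
        have := (hc i).comp (continuous_fst (X := ℂ) (Y := (κ → ℂ) × V))
        fun_prop
      filter_upwards [h1.continuousAt.eventually_ne (sub_ne_zero.mpr hi)] with z hz hzj
      exact absurd (sub_eq_zero.mpr (hzj i)) hz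
  filter_upwards [key, hbound] with s hs hb v ⟨Ψ, hΨ0, hΨ⟩
  have hn : ‖Ψ‖ ≠ 0 := norm_ne_zero_iff.mpr hΨ0
  refine hs (v, ((‖Ψ‖ : ℂ)⁻¹) • Ψ) ⟨?_, ?_⟩ fun i => ?_
  · rw [mem_closedBall_zero_iff, pi_norm_le_iff_of_nonneg hRpos]
    intro i
    have h1 := (Φ (H i s)).le_opNorm Ψ
    have h2 : Φ (H i s) Ψ = v i • Ψ := hΨ i
    rw [h2, norm_smul] at h1
    exact (le_of_mul_le_mul_right h1 (norm_pos_iff.mpr hΨ0)).trans (hb i).le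
  · simp [norm_smul, hn]
  · rw [map_smul, hΨ, smul_comm]

theorem exists_local_projector {H : κ → ℂ → Module.End ℂ V}
    (hd : ∀ i x, Differentiable ℂ fun s => H i s x) (hH : ∀ s i j, Commute (H i s) (H j s))
    {e : ℂ × (κ → ℂ) → ℂ} (hec : ContinuousOn e (curve H))
    (he : ∀ x ∈ curve H, e x = 0 ∨ e x = 1) (s₀ : ℂ) :
    ∃ E : ℂ → (V →L[ℂ] V), ∀ᶠ s in 𝓝 s₀, DifferentiableAt ℂ E s ∧ IsIdempotentElem (E s) ∧
      (∀ B, (∀ i, Commute B (Φ (H i s))) → Commute B (E s)) ∧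
      ∀ v Ψ, IsJoint (fun i => H i s) v Ψ → E s Ψ = e (s, v) • Ψ := by
  obtain ⟨a, p, hp, hpe⟩ := exists_isIdempotentElem_aeval (hH s₀) (e := fun v => e (s₀, v))
    fun v Ψ h => he (s₀, v) ⟨Ψ, h⟩
  set T : ℂ → (V →L[ℂ] V) := fun s => ∑ i, a i • Φ (H i s) with hT
  have hTd : Differentiable ℂ T :=
    Differentiable.fun_sum fun i _ => (differentiable_toCLM (hd i)).fun_const_smul (a i)
  set J : ℂ → (V →L[ℂ] V) := fun s => (2 : ℂ) • aeval (T s) p - 1 with hJ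
  have hJd : Differentiable ℂ J := by
    simp only [hJ, aeval_eq_sum_range]
    have : ∀ i : ℕ, Differentiable ℂ fun s => p.coeff i • T s ^ i := fun i =>
      (hTd.fun_pow i).fun_const_smul _
    exact ((Differentiable.fun_sum fun i _ => this i).fun_const_smul (2 : ℂ)).sub_const 1
  have hTΦ : ∀ s, T s = Φ (∑ i, a i • H i s) := fun s => by simp [hT]
  have hJ₀ : J s₀ * J s₀ = 1 := by
    have : IsIdempotentElem (aeval (T s₀) p) := by
      rw [hTΦ]
      have h2 : aeval (Φ (∑ i, a i • H i s₀)) p = Φ (aeval (∑ i, a i • H i s₀) p) :=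
        aeval_algHom_apply (Module.End.toContinuousLinearMap V).toAlgHom _ p
      rw [h2]
      exact hp.map (Module.End.toContinuousLinearMap V)
    simp only [hJ, sub_mul, mul_sub, smul_mul_smul_comm, this.eq, one_mul, mul_one]
    module
  have hJc : ∀ s B, (∀ i, Commute B (Φ (H i s))) → Commute B (J s) := fun s B hB => by
    have h1 : Commute (T s) B := Commute.sum_left _ _ _ fun i _ => (hB i).symm.smul_left _
    exact (((commute_aeval h1 p).smul_left _).sub_left (Commute.one_left _)).symm
  have hJe : ∀ s v Ψ, IsJoint (fun i => H i s) v Ψ →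
      J s Ψ = (2 * p.eval (∑ i, a i * v i) - 1) • Ψ := fun s v Ψ h => by
    have h1 : (∑ i, a i • H i s) Ψ = (∑ i, a i * v i) • Ψ := by
      simp only [LinearMap.sum_apply, LinearMap.smul_apply, h.2, smul_smul, Finset.sum_smul]
    have h2 := aeval_apply_of_apply_eq h1 p
    have h3 : aeval (T s) p Ψ = aeval (∑ i, a i • H i s) p Ψ := by
      rw [hTΦ]
      exact congrArg (· Ψ) (aeval_algHom_apply (Module.End.toContinuousLinearMap V).toAlgHom _ p)
    simp only [hJ, _root_.sub_apply, _root_.smul_apply, h3, h2,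
      one_apply_eq_self, sub_smul, one_smul, smul_smul]
  have hclose : ∀ᶠ s in 𝓝 s₀, ∀ v, (s, v) ∈ curve H →
      ‖p.eval (∑ i, a i * v i) - e (s, v)‖ < 1 / 4 := by
    refine eventually_forall_isJoint hd s₀
      (P := fun x => ‖p.eval (∑ i, a i * x.2 i) - e x‖ < 1 / 4) fun v hv => ?_
    have hcont : ContinuousWithinAt (fun x => ‖p.eval (∑ i, a i * x.2 i) - e x‖) (curve H)
        (s₀, v) := by
      refine ContinuousWithinAt.norm (ContinuousWithinAt.sub ?_ (hec _ hv))
      have : Continuous fun x : ℂ × (κ → ℂ) => p.eval (∑ i, a i * x.2 i) :=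
        p.continuous.comp (by fun_prop)
      exact this.continuousWithinAt
    refine hcont.tendsto.eventually (gt_mem_nhds ?_)
    obtain ⟨Ψ, hΨ⟩ := hv
    simp [hpe v Ψ hΨ]
  obtain ⟨S, hS⟩ := Involution.exists_local_retraction hJ₀
  refine ⟨fun s => (1 / 2 : ℂ) • (1 + S (J s)), ?_⟩
  filter_upwards [hclose, hJd.continuous.continuousAt.eventually hS] with s hs ⟨h1, h2, h3, h4⟩
  refine ⟨?_, ?_, fun B hB => ?_, fun v Ψ hΨ => ?_⟩
  · exact ((h1.comp s (hJd s)).const_add 1).fun_const_smul _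
  · have : (1 + S (J s)) * (1 + S (J s)) = (2 : ℂ) • (1 + S (J s)) := by
      rw [add_mul, mul_add, mul_add, h2]
      simp only [one_mul, mul_one]
      module
    rw [IsIdempotentElem, smul_mul_smul_comm, this, smul_smul]
    norm_num
  · exact ((Commute.one_right B).add_right (h4 B (hJc s B hB))).smul_right _
  · have hJS : Commute (J s) (S (J s)) := h4 _ (Commute.refl _)
    set j := 2 * p.eval (∑ i, a i * v i) - 1 with hj
    have hJj : J s Ψ = j • Ψ := hJe s v Ψ hΨ
    have hcl := hs v ⟨Ψ, hΨ⟩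
    have main : ∀ σ : ℂ, σ * σ = 1 → ‖σ‖ = 1 → ‖j - σ‖ < 1 / 2 → S (J s) Ψ = σ • Ψ := by
      intro σ hσ hσn hjσ
      by_contra hne
      set Θ := S (J s) Ψ - σ • Ψ with hΘ
      have hΘ0 : 0 < ‖Θ‖ := norm_pos_iff.mpr (sub_ne_zero.mpr hne)
      have e1 : S (J s) Θ = -σ • Θ := by
        have : S (J s) (S (J s) Ψ) = Ψ := congrArg (fun F : V →L[ℂ] V => F Ψ) h2
        rw [hΘ, map_sub, map_smul, this, smul_sub, smul_smul, neg_mul, hσ]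
        module
      have e2 : J s Θ = j • Θ := by
        have : J s (S (J s) Ψ) = S (J s) (J s Ψ) := congrArg (fun F : V →L[ℂ] V => F Ψ) hJS.eq
        rw [hΘ, map_sub, map_smul, this, hJj, map_smul, smul_sub, smul_comm σ]
      have e3 : (S (J s) - J s) Θ = -(σ + j) • Θ := by
        rw [_root_.sub_apply, e1, e2]
        module
      have e4 := (S (J s) - J s).le_opNorm Θ
      rw [e3, norm_smul, norm_neg] at e4
      have e5 := le_of_mul_le_mul_right e4 hΘ0
      have e6 : ‖σ + j‖ ≥ 2 - 1 / 2 := by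
        have : 2 * σ = (σ + j) - (j - σ) := by ring
        have h7 := norm_sub_le (σ + j) (j - σ)
        rw [← this, norm_mul, hσn] at h7
        simp only [Complex.norm_ofNat] at h7
        linarith
      linarith
    have hfin : ∀ ε : ℂ, e (s, v) = ε → ‖j - (2 * ε - 1)‖ < 1 / 2 := by
      intro ε hε
      have : j - (2 * ε - 1) = 2 * (p.eval (∑ i, a i * v i) - e (s, v)) := by
        rw [hj, hε]
        ring
      rw [this, norm_mul, Complex.norm_ofNat]
      linarith
    simp only [_root_.smul_apply, _root_.add_apply,
      one_apply_eq_self]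
    rcases he (s, v) ⟨Ψ, hΨ⟩ with h0 | h0
    · rw [main (-1) (by norm_num) (by norm_num) (by simpa using hfin 0 h0), h0]
      module
    · rw [main 1 (by norm_num) (by norm_num) (by
        have := hfin 1 h0
        norm_num at this ⊢
        exact this), h0]
      module

/-- A Boolean-valued continuous function on the spectral curve gives an entire family of
projectors. -/
theorem exists_projector {H : κ → ℂ → Module.End ℂ V}
    (hd : ∀ i x, Differentiable ℂ fun s => H i s x) (hH : ∀ s i j, Commute (H i s) (H j s))
    {e : ℂ × (κ → ℂ) → ℂ} (hec : ContinuousOn e (curve H))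
    (he : ∀ x ∈ curve H, e x = 0 ∨ e x = 1) :
    ∃ E : ℂ → (V →L[ℂ] V), Differentiable ℂ E ∧
      ∀ s v Ψ, IsJoint (fun i => H i s) v Ψ → E s Ψ = e (s, v) • Ψ := by
  choose E hE using exists_local_projector hd hH hec he
  refine ⟨fun s => E s s, fun s₀ => ?_, fun s => (hE s).self_of_nhds.2.2.2⟩
  have : (fun s => E s s) =ᶠ[𝓝 s₀] E s₀ := by
    filter_upwards [hE s₀] with s hs
    have hs' := (hE s).self_of_nhds
    have hconv : ∀ P : V →L[ℂ] V, (∀ B, (∀ i, Commute B (Φ (H i s))) → Commute B P) →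
        ∀ B, (∀ i, Commute B (H i s)) → Commute B ((Φ).symm P) := fun P hP B hB => by
      have h1 := hP (Φ B) fun i => (hB i).map Φ
      have h2 := h1.map (Φ).symm
      simpa using h2
    refine (Φ).symm.injective (eq_of_isIdempotentElem (hH s) (hs'.2.1.map (Φ).symm)
      (hs.2.1.map (Φ).symm) (hconv _ hs'.2.2.1) (hconv _ hs.2.2.1) (e := fun v => e (s, v))
      hs'.2.2.2 hs.2.2.2)
  exact (hE s₀).self_of_nhds.1.congr_of_eventuallyEq this

end CommutingFamily

namespace CommutingFamily

open Polynomial Module.End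

variable {V : Type*} [NormedAddCommGroup V] [NormedSpace ℂ V] [FiniteDimensional ℂ V]

theorem eventually_exists_hasEigenvalue {S : Type*} {l : Filter S} {T : S → (V →L[ℂ] V)}
    {T₀ : V →L[ℂ] V} (hT : Tendsto T l (𝓝 T₀)) {μ : ℂ}
    (hμ : Module.End.HasEigenvalue (T₀ : V →ₗ[ℂ] V) μ) {δ : ℝ} (hδ : 0 < δ) :
    ∀ᶠ s in l, ∃ ν, Module.End.HasEigenvalue (T s : V →ₗ[ℂ] V) ν ∧ ‖μ - ν‖ < δ := by
  have hdet : ∀ A : V →L[ℂ] V, (A : Module.End ℂ V).charpoly.eval μ =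
      (algebraMap ℂ (V →L[ℂ] V) μ - A).det := fun A => LinearMap.eval_charpoly _ _
  have h1 : Tendsto (fun s => (T s : V →ₗ[ℂ] V).charpoly.eval μ) l (𝓝 0) := by
    have h0 : (T₀ : V →ₗ[ℂ] V).charpoly.eval μ = 0 :=
      (Module.End.hasEigenvalue_iff_isRoot_charpoly _ _).mp hμ
    rw [← h0]
    simp only [hdet]
    exact (ContinuousLinearMap.continuous_det.tendsto _).comp (tendsto_const_nhds.sub hT)
  have h2 := h1.norm
  rw [norm_zero] at h2
  filter_upwards [h2.eventually (gt_mem_nhds (pow_pos hδ (Module.finrank ℂ V)))] with s hs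
  by_contra! hcon
  refine not_le_of_gt hs ?_
  have hsp := IsAlgClosed.splits (T s : V →ₗ[ℂ] V).charpoly
  rw [hsp.eval_eq_prod_roots_of_monic (LinearMap.charpoly_monic _),
    ← LinearMap.charpoly_natDegree (T s : V →ₗ[ℂ] V), hsp.natDegree_eq_card_roots]
  have : ∀ m : Multiset ℂ, (∀ ν ∈ m, δ ≤ ‖μ - ν‖) →
      δ ^ m.card ≤ ‖(m.map (μ - ·)).prod‖ := by
    intro m
    induction m using Multiset.induction_on with
    | empty => simp
    | cons a m ih =>
      intro h
      rw [Multiset.map_cons, Multiset.prod_cons, norm_mul, Multiset.card_cons, pow_succ, mul_comm]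
      exact mul_le_mul (h a (Multiset.mem_cons_self a m))
        (ih fun ν hν => h ν (Multiset.mem_cons_of_mem hν)) (by positivity) (by positivity)
  refine this _ fun ν hν => hcon ν ?_
  rw [Module.End.hasEigenvalue_iff_isRoot_charpoly]
  exact isRoot_of_mem_roots hν

theorem norm_aeval_prod_le {V : Type*} [NormedAddCommGroup V] [NormedSpace ℂ V] {ι : Type*}
    (T : V →L[ℂ] V) (f : ι → ℂ[X]) {M : ℝ}
    (s : Finset ι) (h : ∀ i ∈ s, ‖aeval T (f i)‖ ≤ M) :
    ‖aeval T (∏ i ∈ s, f i)‖ ≤ M ^ s.card := by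
  classical
  induction s using Finset.induction_on with
  | empty =>
    rw [Finset.prod_empty, map_one, Finset.card_empty, pow_zero]
    exact ContinuousLinearMap.norm_id_le
  | insert a s ha ih =>
    rw [Finset.prod_insert ha, map_mul, Finset.card_insert_of_notMem ha, pow_succ, mul_comm (M ^ _)]
    have h1 := h a (Finset.mem_insert_self a s)
    exact (norm_mul_le _ _).trans (mul_le_mul h1
      (ih fun i hi => h i (Finset.mem_insert_of_mem hi)) (norm_nonneg _)
      ((norm_nonneg _).trans h1))

/-- Spectral projectors of a family of operators converging to one with simple spectrum are
bounded. -/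
theorem exists_bound_of_simple_spectrum {S : Type*} {l : Filter S} {T E : S → (V →L[ℂ] V)}
    {T₀ : V →L[ℂ] V} (hT : Tendsto T l (𝓝 T₀)) {J : Type*} [Fintype J] {μ : J → ℂ}
    (hcard : Fintype.card J = Module.finrank ℂ V) (hinj : Function.Injective μ)
    (hμ : ∀ j, Module.End.HasEigenvalue (T₀ : V →ₗ[ℂ] V) (μ j))
    (hE : ∀ᶠ s in l, ∀ ν, Module.End.HasEigenvalue (T s : V →ₗ[ℂ] V) ν →
      ∃ Ψ, Ψ ≠ 0 ∧ T s Ψ = ν • Ψ ∧ (E s Ψ = 0 ∨ E s Ψ = Ψ)) :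
    ∃ C, ∀ᶠ s in l, ‖E s‖ ≤ C := by
  classical
  obtain ⟨δ, hδ, hsep⟩ : ∃ δ : ℝ, 0 < δ ∧ ∀ i j, i ≠ j → 4 * δ ≤ ‖μ i - μ j‖ := by
    have : ∀ᶠ δ : ℝ in 𝓝[>] 0, ∀ i j, i ≠ j → 4 * δ ≤ ‖μ i - μ j‖ := by
      refine eventually_all.mpr fun i => eventually_all.mpr fun j => ?_
      by_cases hij : i = j
      · simp [hij]
      · have hpos : 0 < ‖μ i - μ j‖ := norm_pos_iff.mpr (sub_ne_zero.mpr (hinj.ne hij))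
        filter_upwards [Ioo_mem_nhdsGT (show (0 : ℝ) < ‖μ i - μ j‖ / 4 by positivity)] with δ hδ _
        linarith [hδ.2]
    obtain ⟨δ, h1, h2⟩ := (this.and self_mem_nhdsWithin).exists
    exact ⟨δ, h2, h1⟩
  set R : ℝ := ∑ j, ‖μ j‖ with hR
  set M : ℝ := (2 * δ)⁻¹ * ((‖T₀‖ + 1) + (R + δ)) with hM
  have hnear : ∀ᶠ s in l, ∀ j, ∃ ν, Module.End.HasEigenvalue (T s : V →ₗ[ℂ] V) ν ∧ ‖μ j - ν‖ < δ :=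
    eventually_all.mpr fun j => eventually_exists_hasEigenvalue hT (hμ j) hδ
  have hnorm : ∀ᶠ s in l, ‖T s‖ < ‖T₀‖ + 1 := hT.norm.eventually_lt_const (by linarith)
  refine ⟨∑ _j : J, M ^ (Fintype.card J - 1), ?_⟩
  filter_upwards [hE, hnear, hnorm] with s hs h1 h2
  choose ν hν hνμ using h1
  choose Ψ hΨ0 hΨ hEΨ using fun j => hs (ν j) (hν j)
  have hνsep : ∀ i j, i ≠ j → 2 * δ ≤ ‖ν i - ν j‖ := fun i j hij => by
    have e1 := hsep i j hij
    have : μ i - μ j = (μ i - ν i) + (ν i - ν j) - (μ j - ν j) := by ring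
    have e2 := norm_sub_le ((μ i - ν i) + (ν i - ν j)) (μ j - ν j)
    have e3 := norm_add_le (μ i - ν i) (ν i - ν j)
    rw [← this] at e2
    linarith [hνμ i, hνμ j]
  have hνinj : Function.Injective ν := fun i j hij => by
    by_contra hne
    have := hνsep i j hne
    rw [hij, sub_self, norm_zero] at this
    linarith
  have hindep : LinearIndependent ℂ Ψ :=
    Module.End.eigenvectors_linearIndependent' (T s : V →ₗ[ℂ] V) ν hνinj Ψ
      fun j => ⟨Module.End.mem_eigenspace_iff.mpr (hΨ j), hΨ0 j⟩
  have : Nonempty J ∨ IsEmpty J := (isEmpty_or_nonempty J).symm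
  let b := basisOfLinearIndependentOfCardEqFinrank' Ψ hindep hcard
  have hb : ∀ j, b j = Ψ j := fun j => by simp [b]
  choose ε hε01 hε using fun j => (show ∃ ε : ℂ, ‖ε‖ ≤ 1 ∧ E s (Ψ j) = ε • Ψ j from by
    rcases hEΨ j with h | h
    · exact ⟨0, by simp, by simp [h]⟩
    · exact ⟨1, by simp, by simp [h]⟩)
  have hEsum : E s = ∑ j, ε j • aeval (T s) (Lagrange.basis Finset.univ ν j) := by
    have : (E s : V →ₗ[ℂ] V) =
        ((∑ j, ε j • aeval (T s) (Lagrange.basis Finset.univ ν j) : V →L[ℂ] V) : V →ₗ[ℂ] V) := by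
      refine b.ext fun k => ?_
      have hev : ∀ p : ℂ[X], aeval (T s) p (Ψ k) = p.eval (ν k) • Ψ k := fun p => by
        have h3 := aeval_apply_of_apply_eq (T := (T s : V →ₗ[ℂ] V)) (hΨ k) p
        rw [← h3]
        exact congrArg (fun F : Module.End ℂ V => F (Ψ k)) (aeval_algHom_apply
          (Module.End.toContinuousLinearMap V).symm.toAlgHom (T s) p).symm
      rw [hb]
      simp only [ContinuousLinearMap.coe_coe, _root_.sum_apply, _root_.smul_apply, hev, hε]
      rw [Finset.sum_eq_single k]
      · rw [Lagrange.eval_basis_self hνinj.injOn (Finset.mem_univ k), one_smul]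
      · intro j _ hjk
        rw [Lagrange.eval_basis_of_ne hjk (Finset.mem_univ k), zero_smul, smul_zero]
      · simp
    exact ContinuousLinearMap.coe_injective this
  rw [hEsum]
  refine norm_sum_le_of_le _ fun j _ => ?_
  rw [norm_smul]
  have hbd : ‖aeval (T s) (Lagrange.basis Finset.univ ν j)‖ ≤ M ^ (Fintype.card J - 1) := by
    have := norm_aeval_prod_le (T s) (fun i => Lagrange.basisDivisor (ν j) (ν i)) (M := M)
      (Finset.univ.erase j) ?_
    · rwa [Finset.card_erase_of_mem (Finset.mem_univ j), Finset.card_univ] at this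
    · intro i hi
      have hij : j ≠ i := (Finset.ne_of_mem_erase hi).symm
      have hpos := hνsep j i hij
      rw [Lagrange.basisDivisor, map_mul, aeval_C, map_sub, aeval_X, aeval_C,
        ← Algebra.smul_def, norm_smul, norm_inv]
      refine mul_le_mul (inv_anti₀ (by positivity) hpos) ?_ (norm_nonneg _) (by positivity)
      refine (norm_sub_le _ _).trans (add_le_add h2.le ?_)
      rw [Algebra.algebraMap_eq_smul_one, norm_smul]
      have h5 : ‖(1 : V →L[ℂ] V)‖ ≤ 1 := ContinuousLinearMap.norm_id_le
      have h6 : ‖ν i‖ ≤ R + δ := by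
        have e1 := Finset.single_le_sum (f := fun i => ‖μ i‖) (fun i _ => norm_nonneg _)
          (Finset.mem_univ i)
        have e2 := norm_sub_norm_le (ν i) (μ i)
        rw [norm_sub_rev] at e2
        linarith [hνμ i]
      calc _ ≤ ‖ν i‖ * 1 := by gcongr
        _ ≤ R + δ := by linarith
  calc _ ≤ 1 * M ^ (Fintype.card J - 1) :=
        mul_le_mul (hε01 j) hbd (norm_nonneg _) zero_le_one
    _ = _ := one_mul _

end CommutingFamily

namespace SymTensor

/-- The weight of a monomial. -/
def weight {m r : ℕ} (ν : Sym (Fin (m + 1)) r) : ℕ := (ν.1.map fun a : Fin (m + 1) => (a : ℕ)).sum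

theorem weight_cons {m r : ℕ} (a : Fin (m + 1)) (μ : Sym (Fin (m + 1)) r) :
    weight (a ::ₛ μ) = a + weight μ := by
  simp [weight, Sym.coe_cons, Multiset.map_cons, Multiset.sum_cons]

theorem weight_le {m r : ℕ} (ν : Sym (Fin (m + 1)) r) : weight ν ≤ r * m := by
  have := Multiset.sum_le_card_nsmul (ν.1.map fun a : Fin (m + 1) => (a : ℕ)) m fun x hx => by
    obtain ⟨a, -, rfl⟩ := Multiset.mem_map.mp hx
    exact Fin.is_le a
  simpa [weight] using this

theorem weight_replicate_last {m r : ℕ} : weight (Sym.replicate r (Fin.last m)) = r * m := by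
  simp [weight, Sym.replicate]

theorem eq_replicate_of_weight {m r : ℕ} {ν : Sym (Fin (m + 1)) r} (h : weight ν = r * m) :
    ν = Sym.replicate r (Fin.last m) := by
  induction r with
  | zero => exact Subsingleton.elim _ _
  | succ r ih =>
    obtain ⟨a, μ, rfl⟩ := Sym.exists_eq_cons_of_succ ν
    rw [weight_cons] at h
    have h1 := weight_le μ
    have h2 := Fin.is_le a
    rw [add_one_mul] at h
    have h3 : a = Fin.last m := Fin.ext (by simp; omega)
    rw [ih (ν := μ) (by omega), h3, Sym.replicate_succ]

/-- The dilation of the variables by `t`. -/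
def dil {m r : ℕ} (t : ℂ) : Tensor m r →ₗ[ℂ] Tensor m r where
  toFun Ψ := fun ν => t ^ weight ν * Ψ ν
  map_add' Ψ Φ := by
    ext ν
    simp [mul_add]
  map_smul' c Ψ := by
    ext ν
    simp only [Pi.smul_apply, smul_eq_mul, RingHom.id_apply]
    ring

theorem dil_apply {m r : ℕ} (t : ℂ) (Ψ : Tensor m r) (ν : Sym (Fin (m + 1)) r) :
    dil t Ψ ν = t ^ weight ν * Ψ ν := rfl

theorem dil_dil {m r : ℕ} {s t : ℂ} (h : s * t = 1) (Ψ : Tensor m r) : dil s (dil t Ψ) = Ψ := by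
  ext ν
  rw [dil_apply, dil_apply, ← mul_assoc, ← mul_pow, h, one_pow, one_mul]

theorem dil_single {m r : ℕ} (t : ℂ) (ν : Sym (Fin (m + 1)) r) :
    dil t (Pi.single ν 1) = t ^ weight ν • (Pi.single ν 1 : Tensor m r) := by
  ext ν'
  rw [dil_apply, Pi.smul_apply, smul_eq_mul]
  by_cases h : ν' = ν
  · rw [h]
  · simp [Pi.single_eq_of_ne h]

/-- The matrix in the dilated variable. -/
def dilMatrix {m k : ℕ} (s t : ℂ) (N : Matrix (Fin (m + k + 1)) (Fin (m + 1)) ℂ) :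
    Matrix (Fin (m + k + 1)) (Fin (m + 1)) ℂ :=
  fun a b => t ^ (k + 1) * s ^ (a : ℕ) * N a b * t ^ (b : ℕ)

theorem joint_dil {m k : ℕ} {s t : ℂ} (h : s * t = 1)
    (N : Matrix (Fin (m + k + 1)) (Fin (m + 1)) ℂ) (Ψ : Tensor m (k + 1)) (i : Fin (k + 1)) :
    joint m k i N (dil t Ψ) = s ^ (k + 1 - i : ℕ) • dil t (joint m k i (dilMatrix s t N) Ψ) := by
  refine joint_eq_of_sum
    (Φ := fun i : Fin (k + 1) => s ^ (k + 1 - i : ℕ) • dil t (joint m k i (dilMatrix s t N) Ψ)) ?_ i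
  ext a μ
  have h1 := congrFun (congrFun (sum_leftAct_joint (dilMatrix s t N) Ψ) a) μ
  simp only [Finset.sum_apply, leftAct_apply] at h1
  simp only [map_smul, Finset.sum_apply, Pi.smul_apply, smul_eq_mul, leftAct_apply, dil_apply,
    weight_cons]
  have hst : ∀ j : ℕ, s ^ j * t ^ j = 1 := fun j => by rw [← mul_pow, h, one_pow]
  calc _ = s ^ (k + 1) * t ^ (a : ℕ) * t ^ weight μ * ∑ i : Fin (k + 1), ∑ b,
        shift m k i a b * (joint m k i (dilMatrix s t N) Ψ) (b ::ₛ μ) := by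
        rw [Finset.mul_sum]
        refine Finset.sum_congr rfl fun i _ => ?_
        rw [Finset.mul_sum, Finset.mul_sum]
        refine Finset.sum_congr rfl fun b _ => ?_
        unfold shift
        split_ifs with hab
        · have e1 : s ^ (k + 1) = s ^ (k + 1 - i : ℕ) * s ^ (i : ℕ) := by
            rw [← pow_add, Nat.sub_add_cancel i.2.le]
          rw [hab, e1, pow_add, pow_add]
          linear_combination (- s ^ (k + 1 - i : ℕ) * t ^ (b : ℕ) * t ^ weight μ *
            (joint m k i (dilMatrix s t N) Ψ) (b ::ₛ μ)) * hst i
        · ring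
    _ = _ := by
        rw [h1, Finset.mul_sum]
        refine Finset.sum_congr rfl fun b _ => ?_
        unfold dilMatrix
        rw [pow_add]
        have := hst (k + 1)
        have h3 := hst a
        linear_combination (N a b * t ^ (b : ℕ) * t ^ weight μ * Ψ (b ::ₛ μ) * s ^ (a : ℕ) *
          t ^ (a : ℕ)) * this + (N a b * t ^ (b : ℕ) * t ^ weight μ * Ψ (b ::ₛ μ)) * h3

open CommutingFamily Module.End

/-- The family of operators attached to an entire family of matrices. -/
noncomputable def opFamily {m k : ℕ} (N : ℂ → Matrix (Fin (m + k + 1)) (Fin (m + 1)) ℂ)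
    (i : Fin (k + 1)) (s : ℂ) : Module.End ℂ (Tensor m (k + 1)) := joint m k i (N s)

theorem differentiable_opFamily {m k : ℕ} {N : ℂ → Matrix (Fin (m + k + 1)) (Fin (m + 1)) ℂ}
    (hN : ∀ a b, Differentiable ℂ fun s => N s a b) (i : Fin (k + 1)) (Ψ : Tensor m (k + 1)) :
    Differentiable ℂ fun s => opFamily N i s Ψ := by
  have h : (fun s => opFamily N i s Ψ) = fun s => ∑ a, ∑ b, N s a b •
      joint m k i (Matrix.single a b 1) Ψ := by
    ext1 s
    rw [opFamily]
    conv_lhs => rw [Matrix.matrix_eq_sum_single (N s)]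
    simp only [map_sum, LinearMap.sum_apply]
    refine Finset.sum_congr rfl fun a _ => Finset.sum_congr rfl fun b _ => ?_
    rw [show Matrix.single a b (N s a b) = N s a b • Matrix.single a b (1 : ℂ) by
      rw [Matrix.smul_single, smul_eq_mul, mul_one], map_smul, LinearMap.smul_apply]
  rw [h]
  exact Differentiable.fun_sum fun a _ => Differentiable.fun_sum fun b _ =>
    (hN a b).smul_const _

theorem exists_const_of_bound {f : ℂ → ℂ} (hf : Differentiable ℂ f) {C : ℝ}
    (h : ∀ᶠ s in Bornology.cobounded ℂ, ‖f s‖ ≤ C) : ∃ c, ∀ s, f s = c := by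
  refine hf.exists_const_forall_eq_of_bounded ?_
  obtain ⟨R, -, hR⟩ := (Filter.hasBasis_cobounded_norm (E := ℂ)).eventually_iff.mp h
  obtain ⟨C', hC'⟩ := ((isCompact_closedBall (0 : ℂ) R).image hf.continuous).isBounded.exists_norm_le
  refine isBounded_iff_forall_norm_le.mpr ⟨max C C', ?_⟩
  rintro _ ⟨s, rfl⟩
  rcases le_total R ‖s‖ with hs | hs
  · exact (hR hs).trans (le_max_left _ _)
  · exact (hC' _ ⟨s, by simpa using hs, rfl⟩).trans (le_max_right _ _)

theorem power_ne_zero {m r : ℕ} {q : Fin (m + 1) → ℂ} (hq : q ≠ 0) : power r q ≠ 0 := by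
  obtain ⟨a, ha⟩ := Function.ne_iff.mp hq
  intro h
  have := congrFun h (Sym.replicate r a)
  rw [power_replicate] at this
  exact pow_ne_zero r ha this

theorem exists_bound_dil {m k : ℕ} {N : ℂ → Matrix (Fin (m + k + 1)) (Fin (m + 1)) ℂ}
    {N₀ : Matrix (Fin (m + k + 1)) (Fin (m + 1)) ℂ}
    (hN₀ : Tendsto (fun s => dilMatrix s s⁻¹ (N s)) (Bornology.cobounded ℂ) (𝓝 N₀))
    {J : Type*} [Fintype J] {U : J → Fin (k + 1) → ℂ} (hU : Function.Injective U)
    {Q : J → Fin (m + 1) → ℂ} (hQ : ∀ j, Q j ≠ 0)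
    (hQU : ∀ j, N₀.mulVec (Q j) = (∑ i, U j i • shift m k i).mulVec (Q j))
    (hcard : Fintype.card J = (m + k + 1).choose (k + 1))
    {E : ℂ → (Tensor m (k + 1) →L[ℂ] Tensor m (k + 1))}
    (hE : ∀ s v Ψ, IsJoint (fun i => opFamily N i s) v Ψ → E s Ψ = 0 ∨ E s Ψ = Ψ) :
    ∃ C, ∀ᶠ s in Bornology.cobounded ℂ, ∀ Ψ, ‖dil s (E s (dil s⁻¹ Ψ))‖ ≤ C * ‖Ψ‖ := by
  classical
  obtain ⟨φ, hφ⟩ := exists_separating (Set.finite_range U)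
  set T' : Matrix (Fin (m + k + 1)) (Fin (m + 1)) ℂ →ₗ[ℂ] Module.End ℂ (Tensor m (k + 1)) :=
    ∑ i, φ (Pi.single i 1) • joint m k i with hT'
  have hT'app : ∀ M Ψ, T' M Ψ = ∑ i, φ (Pi.single i 1) • joint m k i M Ψ := fun M Ψ => by
    simp [hT', LinearMap.sum_apply]
  have hφsum : ∀ v : Fin (k + 1) → ℂ, φ v = ∑ i, φ (Pi.single i 1) * v i := fun v => by
    conv_lhs => rw [pi_eq_sum_univ' v, map_sum]
    refine Finset.sum_congr rfl fun i _ => ?_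
    rw [map_smul, smul_eq_mul, mul_comm]
  have hTeig : ∀ M v Ψ, (∀ i, joint m k i M Ψ = v i • Ψ) → T' M Ψ = φ v • Ψ := fun M v Ψ h => by
    rw [hT'app, hφsum, Finset.sum_smul]
    exact Finset.sum_congr rfl fun i _ => by rw [h, smul_smul]
  let F : Module.End ℂ (Tensor m (k + 1)) ≃ₐ[ℂ] (Tensor m (k + 1) →L[ℂ] Tensor m (k + 1)) :=
    Module.End.toContinuousLinearMap (Tensor m (k + 1))
  have hcont : Continuous fun M => F (T' M) :=
    (F.toLinearMap.comp T').continuous_of_finiteDimensional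
  let E' : ℂ → (Tensor m (k + 1) →L[ℂ] Tensor m (k + 1)) := fun s =>
    F (dil s) * E s * F (dil s⁻¹)
  have hE'app : ∀ s Ψ, E' s Ψ = dil s (E s (dil s⁻¹ Ψ)) := fun _ _ => rfl
  suffices h : ∃ C, ∀ᶠ s in Bornology.cobounded ℂ, ‖E' s‖ ≤ C by
    obtain ⟨C, hC⟩ := h
    exact ⟨C, hC.mono fun s hs Ψ => (hE'app s Ψ).symm ▸ (E' s).le_of_opNorm_le hs Ψ⟩
  refine exists_bound_of_simple_spectrum (T := fun s => F (T' (dilMatrix s s⁻¹ (N s))))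
    (E := E') ((hcont.tendsto N₀).comp hN₀) (J := J) (μ := fun j => φ (U j)) ?_ ?_ ?_ ?_
  · rw [hcard, Module.finrank_fintype_fun_eq_card, card_sym_eq, add_assoc]
  · exact fun i j hij => hU (hφ ⟨i, rfl⟩ ⟨j, rfl⟩ hij)
  · exact fun j => Module.End.hasEigenvalue_of_hasEigenvector
      ⟨Module.End.mem_eigenspace_iff.mpr (hTeig _ _ _ (joint_power (hQU j))),
        power_ne_zero (hQ j)⟩
  · filter_upwards [Bornology.eventually_ne_cobounded (0 : ℂ)] with s hs ν hν
    have hcomm : ∀ i, Commute (T' (dilMatrix s s⁻¹ (N s))) (joint m k i (dilMatrix s s⁻¹ (N s))) :=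
      fun i => by
        rw [hT', LinearMap.sum_apply]
        refine Commute.sum_left _ _ _ fun j _ => ?_
        rw [LinearMap.smul_apply]
        exact (joint_commute _ j i).smul_left _
    obtain ⟨v, Ψ, hΨ, h0, hv⟩ := exists_isJoint_of_hasEigenvalue
      (H := fun i => joint m k i (dilMatrix s s⁻¹ (N s))) (fun i j => joint_commute _ i j)
      (T := T' (dilMatrix s s⁻¹ (N s))) hcomm hν
    refine ⟨Ψ, h0, hΨ, ?_⟩
    have hss : s * s⁻¹ = 1 := mul_inv_cancel₀ hs
    have hj : IsJoint (fun i => opFamily N i s) (fun i : Fin (k + 1) => s ^ (k + 1 - i : ℕ) * v i)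
        (dil s⁻¹ Ψ) := by
      refine ⟨fun h => h0 ?_, fun i => ?_⟩
      · rw [← dil_dil hss Ψ, h, map_zero]
      · have hv' : joint m k i (dilMatrix s s⁻¹ (N s)) Ψ = v i • Ψ := hv i
        change joint m k i (N s) (dil s⁻¹ Ψ) = _
        rw [joint_dil hss, hv', map_smul, smul_smul]
    rcases hE s _ _ hj with h | h
    · left
      rw [hE'app, h, map_zero]
    · right
      rw [hE'app, h, dil_dil hss]

/-- If an entire family of matrices degenerates at infinity, after dilation, to a matrix with simple
spectrum, then its spectral curve is connected. -/
theorem exists_const_of_continuousOn_curve {m k : ℕ}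
    {N : ℂ → Matrix (Fin (m + k + 1)) (Fin (m + 1)) ℂ}
    (hN : ∀ a b, Differentiable ℂ fun s => N s a b)
    (hlast : ∀ s (u : Fin (k + 1) → ℂ) q, q ≠ 0 →
      (N s).mulVec q = (∑ i, u i • shift m k i).mulVec q → q (Fin.last m) ≠ 0)
    {N₀ : Matrix (Fin (m + k + 1)) (Fin (m + 1)) ℂ}
    (hN₀ : Tendsto (fun s => dilMatrix s s⁻¹ (N s)) (Bornology.cobounded ℂ) (𝓝 N₀))
    {J : Type*} [Fintype J] {U : J → Fin (k + 1) → ℂ} (hU : Function.Injective U)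
    {Q : J → Fin (m + 1) → ℂ} (hQ : ∀ j, Q j ≠ 0)
    (hQU : ∀ j, N₀.mulVec (Q j) = (∑ i, U j i • shift m k i).mulVec (Q j))
    (hcard : Fintype.card J = (m + k + 1).choose (k + 1))
    {e : ℂ × (Fin (k + 1) → ℂ) → ℂ} (hec : ContinuousOn e (curve (opFamily N)))
    (he : ∀ x ∈ curve (opFamily N), e x = 0 ∨ e x = 1) :
    ∃ c, ∀ x ∈ curve (opFamily N), e x = c := by
  classical
  obtain ⟨E, hEd, hE⟩ := exists_projector (differentiable_opFamily hN)
    (fun s i j => joint_commute (N s) i j) hec he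
  obtain ⟨C, hC⟩ := exists_bound_dil hN₀ hU hQ hQU hcard (E := E) fun s v Ψ h => by
    rw [hE s v Ψ h]
    rcases he (s, v) ⟨Ψ, h⟩ with h | h <;> simp [h]
  set ν₀ : Sym (Fin (m + 1)) (k + 1) := Sym.replicate (k + 1) (Fin.last m) with hν₀
  let f : Sym (Fin (m + 1)) (k + 1) → ℂ → ℂ := fun ν s => E s (Pi.single ν 1) ν₀
  have hfd : ∀ ν, Differentiable ℂ (f ν) := fun ν =>
    (differentiable_pi.mp (hEd.clm_apply (differentiable_const (Pi.single ν 1 : Tensor m (k + 1)))) ν₀)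
  have hfb : ∀ ν, ∀ᶠ s in Bornology.cobounded ℂ, ‖f ν s‖ ≤ C * (‖s‖⁻¹) ^ ((k + 1) * m - weight ν) := by
    intro ν
    filter_upwards [hC, Bornology.eventually_ne_cobounded (0 : ℂ)] with s hs h0
    have h1 := (norm_le_pi_norm _ ν₀).trans (hs (Pi.single ν 1))
    rw [dil_apply, hν₀, weight_replicate_last, ← hν₀, dil_single, map_smul, Pi.smul_apply,
      smul_eq_mul, Pi.norm_single, norm_one, mul_one] at h1
    have h2 : ‖s‖ ≠ 0 := norm_ne_zero_iff.mpr h0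
    have hw := weight_le ν
    have h3 : f ν s = (s⁻¹) ^ ((k + 1) * m - weight ν) *
        (s ^ ((k + 1) * m) * (s⁻¹ ^ weight ν * (E s) (Pi.single ν 1) ν₀)) := by
      rw [inv_pow, inv_pow, ← Nat.sub_add_cancel hw, pow_add, Nat.sub_add_cancel hw]
      change E s (Pi.single ν 1) ν₀ = _
      field_simp
    rw [h3, norm_mul, norm_pow, norm_inv, mul_comm]
    exact mul_le_mul_of_nonneg_right h1 (by positivity)
  have hf0 : ∀ ν, ν ≠ ν₀ → ∀ s, f ν s = 0 := by
    intro ν hν s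
    refine (hfd ν).apply_eq_of_tendsto_cocompact s ?_
    rw [← Metric.cobounded_eq_cocompact]
    refine squeeze_zero_norm' (hfb ν) ?_
    have hw : (k + 1) * m - weight ν ≠ 0 := fun h =>
      hν (eq_replicate_of_weight (by have := weight_le ν; omega))
    have := ((tendsto_inv_atTop_zero.comp (tendsto_norm_cobounded_atTop (E := ℂ))).pow
      ((k + 1) * m - weight ν)).const_mul C
    rw [zero_pow hw, mul_zero] at this
    exact this
  obtain ⟨c, hc⟩ := exists_const_of_bound (hfd ν₀) (C := C) ((hfb ν₀).mono fun s hs => by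
    rwa [hν₀, weight_replicate_last, Nat.sub_self, pow_zero, mul_one] at hs)
  refine ⟨c, ?_⟩
  rintro ⟨s, v⟩ ⟨Ψ, h0, hΨ⟩
  obtain ⟨q, hq0, hq⟩ := exists_mulVec_eq_of_joint h0 hΨ
  have hp := hE s v (power (k + 1) q) ⟨power_ne_zero hq0, fun i => joint_power hq i⟩
  have hp' := congrFun hp ν₀
  have hsum : power (k + 1) q = ∑ ν, power (k + 1) q ν • (Pi.single ν 1 : Tensor m (k + 1)) := by
    conv_lhs => rw [pi_eq_sum_univ' (power (k + 1) q)]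
  rw [hsum, map_sum, ← hsum, Finset.sum_apply, Finset.sum_eq_single ν₀ (fun ν _ hν => ?_)
    (by simp)] at hp'
  · rw [map_smul, Pi.smul_apply, Pi.smul_apply, smul_eq_mul, smul_eq_mul, mul_comm] at hp'
    have h5 : power (k + 1) q ν₀ ≠ 0 := by
      rw [hν₀, power_replicate]
      exact pow_ne_zero _ (hlast s v q hq0 hq)
    have h6 := mul_right_cancel₀ h5 hp'
    rw [← h6]
    exact hc s
  · rw [map_smul, Pi.smul_apply, smul_eq_mul]
    have : (E s) (Pi.single ν 1) ν₀ = 0 := hf0 ν hν s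
    rw [this, mul_zero]

end SymTensor

namespace SpectralPoly

open Polynomial SymTensor

/-- The monic polynomial with given roots. -/
noncomputable def rootPoly {n : ℕ} (γ : Fin n → ℂ) : ℂ[X] := ∏ i, (X - C (γ i))

theorem rootPoly_monic {n : ℕ} (γ : Fin n → ℂ) : (rootPoly γ).Monic :=
  monic_prod_of_monic _ _ fun i _ => monic_X_sub_C (γ i)

theorem natDegree_rootPoly {n : ℕ} (γ : Fin n → ℂ) : (rootPoly γ).natDegree = n := by
  rw [rootPoly, natDegree_prod_of_monic _ _ fun i _ => monic_X_sub_C (γ i)]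
  simp

theorem differentiable_coeff_rootPoly {n : ℕ} (c : ℕ) :
    Differentiable ℂ fun γ : Fin n → ℂ => (rootPoly γ).coeff c := by
  have : ∀ (s : Finset (Fin n)) (c : ℕ), Differentiable ℂ fun γ : Fin n → ℂ =>
      (∏ i ∈ s, (X - C (γ i))).coeff c := by
    intro s
    induction s using Finset.induction_on with
    | empty => exact fun c => by simp
    | insert a s ha ih =>
      intro c
      simp only [Finset.prod_insert ha, mul_comm (X - C _)]
      have ha' : Differentiable ℂ fun γ : Fin n → ℂ => γ a := differentiable_apply a
      cases c with
      | zero =>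
        simp only [mul_coeff_zero, coeff_sub, coeff_X_zero, coeff_C_zero, zero_sub]
        exact (ih 0).mul ha'.neg
      | succ c =>
        simp only [coeff_mul_X_sub_C]
        exact (ih c).sub ((ih (c + 1)).mul ha')
  exact this _ c

theorem coeff_rootPoly_smul {n : ℕ} (s : ℂ) (γ : Fin n → ℂ) (c : ℕ) :
    s ^ c * (rootPoly (s • γ)).coeff c = s ^ n * (rootPoly γ).coeff c := by
  have : (rootPoly (s • γ)).comp (C s * X) = C (s ^ n) * rootPoly γ := by
    rw [rootPoly, prod_comp, rootPoly]
    have : ∀ i, (X - C ((s • γ) i)).comp (C s * X) = C s * (X - C (γ i)) := fun i => by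
      simp only [Pi.smul_apply, smul_eq_mul, C_mul, sub_comp, X_comp, mul_comp, C_comp]
      ring
    rw [Finset.prod_congr rfl fun i _ => this i, Finset.prod_mul_distrib]
    simp
  have h := congrArg (fun p => p.coeff c) this
  simp only [comp_C_mul_X_coeff, coeff_C_mul] at h
  rw [mul_comm, h]

/-- The operator `ε Q'' - 2 b Q' + 2 m z ^ K Q` on polynomials. -/
noncomputable def diffOp (K m : ℕ) (ε : ℂ) (b : ℂ[X]) : ℂ[X] →ₗ[ℂ] ℂ[X] where
  toFun Q := C ε * derivative (derivative Q) - 2 * b * derivative Q + C (2 * m : ℂ) * (X ^ K * Q)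
  map_add' Q R := by
    simp only [derivative_add]
    ring
  map_smul' c Q := by
    simp only [smul_eq_C_mul, RingHom.id_apply, derivative_C_mul]
    ring

theorem diffOp_apply (K m : ℕ) (ε : ℂ) (b Q : ℂ[X]) : diffOp K m ε b Q =
    C ε * derivative (derivative Q) - 2 * b * derivative Q + C (2 * m : ℂ) * (X ^ K * Q) := rfl

theorem coeff_diffOp_of_natDegree_le {K m j : ℕ} {ε : ℂ} {b Q : ℂ[X]} (hb : b.Monic)
    (hK : b.natDegree = K + 1) (hQ : Q.natDegree ≤ j) :
    (diffOp K m ε b Q).coeff (j + K) = (2 * m - 2 * j) * Q.coeff j := by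
  have h1 : (derivative (derivative Q)).coeff (j + K) = 0 := by
    rw [coeff_derivative, coeff_derivative, coeff_eq_zero_of_natDegree_lt (by omega)]
    ring
  have h2 : (b * derivative Q).coeff (j + K) = j * Q.coeff j := by
    cases j with
    | zero =>
      rw [Nat.le_zero] at hQ
      rw [eq_C_of_natDegree_eq_zero hQ]
      simp
    | succ j =>
      have hd : (derivative Q).natDegree ≤ j := (natDegree_derivative_le Q).trans (by omega)
      have := coeff_mul_add_eq_of_natDegree_le hK.le hd
      rw [show j + 1 + K = K + 1 + j by ring, this, ← hK, hb.coeff_natDegree, coeff_derivative]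
      push_cast
      ring
  rw [diffOp_apply, mul_assoc, show (2 : ℂ[X]) = C 2 from rfl]
  simp only [coeff_add, coeff_sub, coeff_C_mul, h1, h2, coeff_X_pow_mul]
  ring

theorem natDegree_diffOp_le {K m j : ℕ} {ε : ℂ} {b Q : ℂ[X]}
    (hK : b.natDegree = K + 1) (hQ : Q.natDegree ≤ j) :
    (diffOp K m ε b Q).natDegree ≤ j + K := by
  rw [natDegree_le_iff_coeff_eq_zero]
  intro a ha
  have h1 : (derivative (derivative Q)).coeff a = 0 := by
    rw [coeff_derivative, coeff_derivative, coeff_eq_zero_of_natDegree_lt (by omega)]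
    ring
  have h2 : (b * derivative Q).coeff a = 0 := by
    cases j with
    | zero =>
      rw [Nat.le_zero] at hQ
      rw [eq_C_of_natDegree_eq_zero hQ]
      simp
    | succ j =>
      have hd : (derivative Q).natDegree ≤ j := (natDegree_derivative_le Q).trans (by omega)
      refine coeff_eq_zero_of_natDegree_lt (natDegree_mul_le.trans_lt ?_)
      omega
  have h3 : (X ^ K * Q).coeff a = 0 := by
    refine coeff_eq_zero_of_natDegree_lt (natDegree_mul_le.trans_lt ?_)
    rw [natDegree_X_pow]
    omega
  rw [diffOp_apply, mul_assoc, show (2 : ℂ[X]) = C 2 from rfl]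
  simp only [coeff_add, coeff_sub, coeff_C_mul, h1, h2, h3]
  ring

/-- The polynomial with given coefficients. -/
noncomputable def ofCoeffs {n : ℕ} (q : Fin n → ℂ) : ℂ[X] := ∑ i, C (q i) * X ^ (i : ℕ)

theorem coeff_ofCoeffs {n : ℕ} (q : Fin n → ℂ) (a : ℕ) :
    (ofCoeffs q).coeff a = if h : a < n then q ⟨a, h⟩ else 0 := by
  rw [ofCoeffs, finsetSum_coeff]
  simp only [coeff_C_mul, coeff_X_pow]
  split_ifs with h
  · rw [Finset.sum_eq_single ⟨a, h⟩]
    · simp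
    · intro i _ hi
      have : a ≠ i := fun h' => hi (Fin.ext h'.symm)
      simp [this]
    · simp
  · refine Finset.sum_eq_zero fun i _ => ?_
    have : a ≠ i := fun h' => h (h' ▸ i.2)
    simp [this]

theorem coeff_ofCoeffs_fin {n : ℕ} (q : Fin n → ℂ) (a : Fin n) : (ofCoeffs q).coeff a = q a := by
  rw [coeff_ofCoeffs, dif_pos a.2]

theorem ofCoeffs_coeff {n : ℕ} {p : ℂ[X]} (hp : ∀ a, n ≤ a → p.coeff a = 0) :
    ofCoeffs (fun a : Fin n => p.coeff a) = p := by
  ext a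
  rw [coeff_ofCoeffs]
  split_ifs with h
  · rfl
  · exact (hp a (not_lt.mp h)).symm

theorem natDegree_ofCoeffs_le {n : ℕ} (q : Fin (n + 1) → ℂ) : (ofCoeffs q).natDegree ≤ n := by
  rw [natDegree_le_iff_coeff_eq_zero]
  intro a ha
  rw [coeff_ofCoeffs, dif_neg (by omega)]

theorem ofCoeffs_ne_zero {n : ℕ} {q : Fin n → ℂ} (hq : q ≠ 0) : ofCoeffs q ≠ 0 := fun h => hq (by
  ext a
  rw [← coeff_ofCoeffs_fin q a, h, coeff_zero, Pi.zero_apply])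

/-- The matrix of `diffOp` on polynomials of degree at most `m`. -/
noncomputable def opMatrix (m k : ℕ) (ε : ℂ) (b : ℂ[X]) :
    Matrix (Fin (m + k + 1)) (Fin (m + 1)) ℂ :=
  fun a j => (diffOp (k + 1) m ε b (X ^ (j : ℕ))).coeff a

theorem opMatrix_mulVec {m k : ℕ} (ε : ℂ) (b : ℂ[X]) (q : Fin (m + 1) → ℂ)
    (a : Fin (m + k + 1)) :
    (opMatrix m k ε b).mulVec q a = (diffOp (k + 1) m ε b (ofCoeffs q)).coeff a := by
  simp only [Matrix.mulVec, dotProduct, opMatrix, ofCoeffs, ← smul_eq_C_mul, map_sum, map_smul,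
    finsetSum_coeff, coeff_smul, smul_eq_mul]
  exact Finset.sum_congr rfl fun _ _ => mul_comm _ _

theorem shift_mulVec {m k : ℕ} (u : Fin (k + 1) → ℂ) (q : Fin (m + 1) → ℂ)
    (a : Fin (m + k + 1)) :
    (∑ i, u i • shift m k i).mulVec q a = (ofCoeffs u * ofCoeffs q).coeff a := by
  simp only [Matrix.mulVec, dotProduct, Matrix.sum_apply, Matrix.smul_apply, smul_eq_mul, ofCoeffs,
    Finset.sum_mul, Finset.mul_sum, finsetSum_coeff, shift]
  refine Finset.sum_congr rfl fun j _ => Finset.sum_congr rfl fun i _ => ?_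
  rw [show C (u i) * X ^ (i : ℕ) * (C (q j) * X ^ (j : ℕ)) = C (u i * q j) * X ^ (i + j : ℕ) by
    rw [C_mul, pow_add]; ring, coeff_C_mul, coeff_X_pow, add_comm (i : ℕ)]
  split_ifs <;> ring

theorem mulVec_eq_iff {m k : ℕ} {ε : ℂ} {b : ℂ[X]} (hb : b.Monic) (hK : b.natDegree = k + 2)
    (u : Fin (k + 1) → ℂ) (q : Fin (m + 1) → ℂ) :
    (opMatrix m k ε b).mulVec q = (∑ i, u i • shift m k i).mulVec q ↔
      diffOp (k + 1) m ε b (ofCoeffs q) = ofCoeffs u * ofCoeffs q := by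
  constructor
  · intro h
    ext a
    by_cases ha : a < m + k + 1
    · have := congrFun h ⟨a, ha⟩
      rwa [opMatrix_mulVec, shift_mulVec] at this
    · rw [coeff_eq_zero_of_natDegree_lt (p := ofCoeffs u * ofCoeffs q)]
      · rcases eq_or_lt_of_le (not_lt.mp ha) with ha | ha
        · rw [← ha, add_assoc, coeff_diffOp_of_natDegree_le hb hK (natDegree_ofCoeffs_le q)]
          ring
        · refine coeff_eq_zero_of_natDegree_lt
            ((natDegree_diffOp_le hK (natDegree_ofCoeffs_le q)).trans_lt ?_)
          omega
      · have h1 := natDegree_ofCoeffs_le u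
        have h2 := natDegree_ofCoeffs_le q
        exact natDegree_mul_le.trans_lt (by omega)
  · intro h
    ext a
    rw [opMatrix_mulVec, shift_mulVec, h]

theorem coeff_ne_zero_of_diffOp_eq {K m : ℕ} {ε : ℂ} {b Q : ℂ[X]} (hb : b.Monic)
    (hK : b.natDegree = K + 1) (u : Fin K → ℂ) (hQ0 : Q ≠ 0)
    (h : diffOp K m ε b Q = ofCoeffs u * Q) : Q.natDegree = m := by
  have h1 := coeff_diffOp_of_natDegree_le (m := m) (ε := ε) hb hK (le_refl Q.natDegree)
  have h2 : (ofCoeffs u * Q).coeff (Q.natDegree + K) = 0 := by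
    cases K with
    | zero => simp [ofCoeffs]
    | succ K =>
      have := natDegree_ofCoeffs_le u
      exact coeff_eq_zero_of_natDegree_lt (natDegree_mul_le.trans_lt (by omega))
  rw [h, h2] at h1
  have h3 := (mul_eq_zero.mp h1.symm).resolve_right (by
    rw [coeff_natDegree]
    exact leadingCoeff_ne_zero.mpr hQ0)
  have h4 : (Q.natDegree : ℂ) = m := by linear_combination -h3 / 2
  exact_mod_cast h4

end SpectralPoly

namespace SpectralPoly

open Polynomial SymTensor

theorem opMatrix_apply {m k : ℕ} (ε : ℂ) (b : ℂ[X]) (a : Fin (m + k + 1)) (j : Fin (m + 1)) :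
    opMatrix m k ε b a j = ε * (if (a : ℕ) + 2 = j then ((a : ℂ) + 2) * (a + 1) else 0) -
      2 * (j * (if (j : ℕ) - 1 ≤ a then b.coeff (a - (j - 1)) else 0)) +
      2 * m * (if (a : ℕ) = k + 1 + j then 1 else 0) := by
  rw [opMatrix, diffOp_apply, mul_assoc, show (2 : ℂ[X]) = C 2 from rfl, derivative_X_pow,
    mul_left_comm b, ← derivative_X_pow, ← pow_add]
  simp only [coeff_add, coeff_sub, coeff_C_mul]
  simp only [coeff_derivative, coeff_X_pow, coeff_mul_X_pow']
  congr 2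
  split_ifs
  · push_cast
    ring
  · ring

theorem differentiable_opMatrix {m k : ℕ} (a : Fin (m + k + 1)) (j : Fin (m + 1)) :
    Differentiable ℂ fun p : ℂ × (Fin (k + 2) → ℂ) => opMatrix m k p.1 (rootPoly p.2) a j := by
  simp only [opMatrix_apply]
  have h : Differentiable ℂ fun p : ℂ × (Fin (k + 2) → ℂ) =>
      if (j : ℕ) - 1 ≤ a then (rootPoly p.2).coeff (a - (j - 1)) else 0 := by
    split_ifs
    · exact (differentiable_coeff_rootPoly _).comp differentiable_snd
    · exact differentiable_const _
  exact ((differentiable_fst.mul_const _).sub ((h.const_mul _).const_mul _)).add_const _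

theorem dilMatrix_opMatrix {m k : ℕ} {s t : ℂ} (h : s * t = 1) (x : Fin (k + 2) → ℂ) :
    dilMatrix s t (opMatrix m k 1 (rootPoly (s • x))) = opMatrix m k (t ^ (k + 3)) (rootPoly x) := by
  ext a j
  have hst : ∀ j : ℕ, s ^ j * t ^ j = 1 := fun j => by rw [← mul_pow, h, one_pow]
  have h1 : t ^ (k + 1) * s ^ (a : ℕ) *
      (if (a : ℕ) + 2 = j then ((a : ℂ) + 2) * (a + 1) else 0) * t ^ (j : ℕ) =
      t ^ (k + 3) * (if (a : ℕ) + 2 = j then ((a : ℂ) + 2) * (a + 1) else 0) := by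
    split_ifs with hj
    · rw [← hj, pow_add t a, pow_add t k 3]
      linear_combination (t ^ k * t ^ 3 * (((a : ℂ) + 2) * (a + 1))) * hst a
    · ring
  have h2 : t ^ (k + 1) * s ^ (a : ℕ) * (j * (if (j : ℕ) - 1 ≤ a then
        (rootPoly (s • x)).coeff (a - (j - 1)) else 0)) * t ^ (j : ℕ) =
      j * (if (j : ℕ) - 1 ≤ a then (rootPoly x).coeff (a - (j - 1)) else 0) := by
    rcases Nat.eq_zero_or_pos (j : ℕ) with hj | hj
    · simp [hj]
    · split_ifs with hja
      · have e1 : (a : ℕ) = (j - 1 : ℕ) + (a - (j - 1) : ℕ) := by omega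
        have e2 : t ^ (j : ℕ) = t ^ (j - 1 : ℕ) * t := by rw [← pow_succ, Nat.sub_add_cancel hj]
        have e3 : s ^ (a : ℕ) = s ^ (j - 1 : ℕ) * s ^ (a - (j - 1) : ℕ) := by
          rw [← pow_add, ← e1]
        have e4 := coeff_rootPoly_smul s x (a - (j - 1))
        have e5 : t ^ (k + 1) * t * s ^ (k + 2) = 1 := by
          rw [← pow_succ, mul_comm]
          exact hst _
        rw [e2, e3]
        linear_combination (t ^ (k + 1) * t * (j : ℂ)) * (s ^ (j - 1 : ℕ) * t ^ (j - 1 : ℕ)) * e4 +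
          (j : ℂ) * (rootPoly x).coeff (a - (j - 1)) * (s ^ (j - 1 : ℕ) * t ^ (j - 1 : ℕ)) * e5 +
          (j : ℂ) * (rootPoly x).coeff (a - (j - 1)) * hst (j - 1)
      · ring
  have h3 : t ^ (k + 1) * s ^ (a : ℕ) * (if (a : ℕ) = k + 1 + j then (1 : ℂ) else 0) *
      t ^ (j : ℕ) = (if (a : ℕ) = k + 1 + j then 1 else 0) := by
    split_ifs with hj
    · rw [hj]
      have := hst (k + 1 + j)
      rw [pow_add t] at this
      linear_combination this
    · ring
  rw [dilMatrix, opMatrix_apply, opMatrix_apply]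
  linear_combination h1 - 2 * h2 + 2 * m * h3

theorem tendsto_dilMatrix {m k : ℕ} (γ β : Fin (k + 2) → ℂ) :
    Tendsto (fun s : ℂ => dilMatrix s s⁻¹ (opMatrix m k 1 (rootPoly (γ + s • β))))
      (Bornology.cobounded ℂ) (𝓝 (opMatrix m k 0 (rootPoly β))) := by
  have hc : Continuous fun p : ℂ × (Fin (k + 2) → ℂ) => opMatrix m k p.1 (rootPoly p.2) :=
    continuous_matrix fun a j => (differentiable_opMatrix a j).continuous
  have h0 : Tendsto (fun s : ℂ => s⁻¹) (Bornology.cobounded ℂ) (𝓝 0) := tendsto_inv₀_cobounded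
  have h1 : Tendsto (fun s : ℂ => ((s⁻¹) ^ (k + 3), s⁻¹ • γ + β)) (Bornology.cobounded ℂ)
      (𝓝 (0, β)) := by
    refine Tendsto.prodMk_nhds ?_ ?_
    · simpa using h0.pow (k + 3)
    · simpa using (h0.smul_const γ).add_const β
  refine ((hc.tendsto _).comp h1).congr' ?_
  filter_upwards [Bornology.eventually_ne_cobounded (0 : ℂ)] with s hs
  have hss : s * s⁻¹ = 1 := mul_inv_cancel₀ hs
  change opMatrix m k _ _ = _
  rw [← dilMatrix_opMatrix hss]
  congr 3
  rw [smul_add, smul_smul, hss, one_smul]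

section Limit

variable {K : ℕ} (β : Fin (K + 1) → ℂ)

/-- The sum of the products with one of the roots in `M` left out. -/
noncomputable def omitSum (M : Multiset (Fin (K + 1))) : ℂ[X] :=
  (M.map fun i => ∏ j ∈ Finset.univ.erase i, (X - C (β j))).sum

/-- The polynomial with roots indexed by a multiset. -/
noncomputable def multiRoot (M : Multiset (Fin (K + 1))) : ℂ[X] := (M.map fun i => X - C (β i)).prod

theorem multiRoot_monic (M : Multiset (Fin (K + 1))) : (multiRoot β M).Monic :=
  monic_multiset_prod_of_monic _ _ fun i _ => monic_X_sub_C (β i)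

theorem natDegree_multiRoot (M : Multiset (Fin (K + 1))) : (multiRoot β M).natDegree = M.card := by
  rw [multiRoot, natDegree_multiset_prod_of_monic]
  · simp
  · intro f hf
    obtain ⟨i, -, rfl⟩ := Multiset.mem_map.mp hf
    exact monic_X_sub_C (β i)

theorem rootPoly_mul_derivative_multiRoot (M : Multiset (Fin (K + 1))) :
    rootPoly β * derivative (multiRoot β M) = omitSum β M * multiRoot β M := by
  induction M using Multiset.induction_on with
  | empty => simp [multiRoot, omitSum]
  | cons a M ih =>
    have h1 : multiRoot β (a ::ₘ M) = (X - C (β a)) * multiRoot β M := by simp [multiRoot]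
    have h2 : omitSum β (a ::ₘ M) = ∏ j ∈ Finset.univ.erase a, (X - C (β j)) + omitSum β M := by
      simp [omitSum]
    have h3 : rootPoly β = (X - C (β a)) * ∏ j ∈ Finset.univ.erase a, (X - C (β j)) :=
      (Finset.mul_prod_erase _ _ (Finset.mem_univ a)).symm
    have h4 : derivative (multiRoot β (a ::ₘ M)) =
        multiRoot β M + (X - C (β a)) * derivative (multiRoot β M) := by
      rw [h1, derivative_mul]
      simp
    rw [h4, h1, h2, mul_add, mul_left_comm, ih]
    conv_lhs => rw [h3]
    ring

theorem coeff_omitSum (M : Multiset (Fin (K + 1))) : (omitSum β M).coeff K = M.card ∧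
    ∀ a, K < a → (omitSum β M).coeff a = 0 := by
  have hm : ∀ i, (∏ j ∈ Finset.univ.erase i, (X - C (β j))).Monic := fun i =>
    monic_prod_of_monic _ _ fun j _ => monic_X_sub_C (β j)
  have hd : ∀ i, (∏ j ∈ Finset.univ.erase i, (X - C (β j))).natDegree = K := fun i => by
    rw [natDegree_prod_of_monic _ _ fun j _ => monic_X_sub_C (β j)]
    simp
  induction M using Multiset.induction_on with
  | empty => simp [omitSum]
  | cons a M ih =>
    have h2 : omitSum β (a ::ₘ M) = ∏ j ∈ Finset.univ.erase a, (X - C (β j)) + omitSum β M := by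
      simp [omitSum]
    rw [h2]
    refine ⟨?_, fun b hb => ?_⟩
    · have := (hm a).coeff_natDegree
      rw [hd] at this
      rw [coeff_add, ih.1, this, Multiset.card_cons]
      push_cast
      ring
    · rw [coeff_add, ih.2 b hb, coeff_eq_zero_of_natDegree_lt (by rw [hd]; exact hb), add_zero]

theorem eval_omitSum (M : Multiset (Fin (K + 1))) (i : Fin (K + 1)) :
    (omitSum β M).eval (β i) = M.count i * ∏ j ∈ Finset.univ.erase i, (β i - β j) := by
  induction M using Multiset.induction_on with
  | empty => simp [omitSum]
  | cons a M ih =>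
    have h2 : omitSum β (a ::ₘ M) = ∏ j ∈ Finset.univ.erase a, (X - C (β j)) + omitSum β M := by
      simp [omitSum]
    rw [h2, eval_add, ih, eval_prod, Multiset.count_cons]
    simp only [eval_sub, eval_X, eval_C]
    split_ifs with hia
    · rw [hia]
      push_cast
      ring
    · rw [Finset.prod_eq_zero (i := i) (by simp [hia]) (sub_self _)]
      simp

theorem omitSum_injective (hβ : Function.Injective β) : Function.Injective (omitSum β) := by
  intro M M' h
  ext i
  have h1 := congrArg (eval (β i)) h
  rw [eval_omitSum, eval_omitSum] at h1
  have h2 : ∏ j ∈ Finset.univ.erase i, (β i - β j) ≠ 0 :=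
    Finset.prod_ne_zero_iff.mpr fun j hj => sub_ne_zero.mpr
      (hβ.ne (Finset.ne_of_mem_erase hj).symm)
  exact_mod_cast mul_right_cancel₀ h2 h1

theorem diffOp_multiRoot (M : Multiset (Fin (K + 1))) {m : ℕ} :
    diffOp K m 0 (rootPoly β) (multiRoot β M) =
      (C (2 * m : ℂ) * X ^ K - 2 * omitSum β M) * multiRoot β M := by
  rw [diffOp_apply]
  linear_combination (-2 : ℂ[X]) * rootPoly_mul_derivative_multiRoot β M +
    (derivative (derivative (multiRoot β M))) * (C_0 : C (0 : ℂ) = 0)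

theorem coeff_limit {m : ℕ} {M : Multiset (Fin (K + 1))} (hM : M.card = m) (a : ℕ) (ha : K ≤ a) :
    (C (2 * m : ℂ) * X ^ K - 2 * omitSum β M).coeff a = 0 := by
  rw [show (2 : ℂ[X]) = C 2 from rfl, coeff_sub, coeff_C_mul, coeff_C_mul, coeff_X_pow]
  rcases eq_or_lt_of_le ha with rfl | ha
  · rw [(coeff_omitSum β M).1, hM]
    simp
  · rw [(coeff_omitSum β M).2 a ha, if_neg ha.ne']
    simp

end Limit

/-- Connectedness of the spectral curve along a generic line of roots. -/
theorem exists_const_of_continuousOn_line {m k : ℕ} {γ β : Fin (k + 2) → ℂ}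
    (hβ : Function.Injective β) {e : ℂ × (Fin (k + 1) → ℂ) → ℂ}
    (hec : ContinuousOn e
      (CommutingFamily.curve (opFamily fun s => opMatrix m k 1 (rootPoly (γ + s • β)))))
    (he : ∀ x ∈ CommutingFamily.curve (opFamily fun s => opMatrix m k 1 (rootPoly (γ + s • β))),
      e x = 0 ∨ e x = 1) :
    ∃ c, ∀ x ∈ CommutingFamily.curve (opFamily fun s => opMatrix m k 1 (rootPoly (γ + s • β))),
      e x = c := by
  have hmon := fun γ : Fin (k + 2) → ℂ => rootPoly_monic γ
  have hdeg := fun γ : Fin (k + 2) → ℂ => natDegree_rootPoly γ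
  refine exists_const_of_continuousOn_curve (N := fun s => opMatrix m k 1 (rootPoly (γ + s • β)))
    (J := Sym (Fin (k + 2)) m)
    (U := fun M i => (C (2 * m : ℂ) * X ^ (k + 1) - 2 * omitSum β M.1).coeff i)
    (Q := fun M i => (multiRoot β M.1).coeff i)
    (fun a j => ?_) (fun s u q hq h => ?_) (tendsto_dilMatrix γ β) ?_ (fun M h => ?_) (fun M => ?_)
    ?_ hec he
  · refine (differentiable_opMatrix a j).comp (f := fun s : ℂ => ((1 : ℂ), γ + s • β)) ?_
    exact (differentiable_const _).prodMk ((differentiable_id.smul_const β).const_add γ)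
  · rw [mulVec_eq_iff (hmon _) (hdeg _)] at h
    have h1 := coeff_ne_zero_of_diffOp_eq (hmon _) (hdeg _) u (ofCoeffs_ne_zero hq) h
    have h2 := leadingCoeff_ne_zero.mpr (ofCoeffs_ne_zero hq)
    rw [leadingCoeff, h1] at h2
    rwa [← coeff_ofCoeffs_fin q (Fin.last m), Fin.val_last]
  · intro M M' h
    refine Sym.coe_injective (omitSum_injective β hβ ?_)
    have h1 := ofCoeffs_coeff (coeff_limit β M.2)
    have h2 := ofCoeffs_coeff (coeff_limit β M'.2)
    have h3 : C (2 * m : ℂ) * X ^ (k + 1) - 2 * omitSum β M.1 =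
        C (2 * m : ℂ) * X ^ (k + 1) - 2 * omitSum β M'.1 := by
      rw [← h1, ← h2]
      exact congrArg ofCoeffs h
    exact mul_left_cancel₀ (two_ne_zero (α := ℂ[X])) (sub_right_injective h3)
  · have h1 := congrFun h (Fin.last m)
    have h2 := (multiRoot_monic β M.1).coeff_natDegree
    rw [natDegree_multiRoot, M.2] at h2
    simp only [Fin.val_last, Pi.zero_apply] at h1
    rw [h2] at h1
    exact one_ne_zero h1
  · rw [mulVec_eq_iff (hmon _) (hdeg _), ofCoeffs_coeff (coeff_limit β M.2), ofCoeffs_coeff,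
      diffOp_multiRoot]
    intro a ha
    refine coeff_eq_zero_of_natDegree_lt ?_
    rw [natDegree_multiRoot, M.2]
    omega
  · rw [card_sym_eq, ← Nat.choose_symm_add]
    congr 1
    omega

end SpectralPoly

namespace SpectralPoly

open Polynomial SymTensor CommutingFamily

/-- The pairs consisting of the roots of `b` and of a polynomial `u` of degree less than `K` for
which `Q'' - 2 b Q' + 2 m z ^ K Q = u Q` has a nonzero polynomial solution of degree at most `m`. -/
def spectralSet (K m : ℕ) : Set ((Fin (K + 1) → ℂ) × (Fin K → ℂ)) :=
  {x | ∃ Q : ℂ[X], Q ≠ 0 ∧ Q.natDegree ≤ m ∧ diffOp K m 1 (rootPoly x.1) Q = ofCoeffs x.2 * Q}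

theorem mem_spectralSet_iff {m k : ℕ} {γ : Fin (k + 2) → ℂ} {v : Fin (k + 1) → ℂ} :
    (γ, v) ∈ spectralSet (k + 1) m ↔
      ∃ Ψ, IsJoint (fun i => joint m k i (opMatrix m k 1 (rootPoly γ))) v Ψ := by
  constructor
  · rintro ⟨Q, hQ0, hQ, h⟩
    have hc : ofCoeffs (fun a : Fin (m + 1) => Q.coeff a) = Q :=
      ofCoeffs_coeff fun a ha => coeff_eq_zero_of_natDegree_lt (by omega)
    refine ⟨power (k + 1) fun a : Fin (m + 1) => Q.coeff a, power_ne_zero fun h0 => hQ0 ?_,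
      joint_power ?_⟩
    · rw [← hc, h0]
      simp [ofCoeffs]
    · rw [mulVec_eq_iff (rootPoly_monic γ) (natDegree_rootPoly γ), hc]
      exact h
  · rintro ⟨Ψ, h0, h⟩
    obtain ⟨q, hq0, hq⟩ := exists_mulVec_eq_of_joint h0 h
    rw [mulVec_eq_iff (rootPoly_monic γ) (natDegree_rootPoly γ)] at hq
    exact ⟨ofCoeffs q, ofCoeffs_ne_zero hq0, natDegree_ofCoeffs_le q, hq⟩

theorem exists_mem_spectralSet {m k : ℕ} (γ : Fin (k + 2) → ℂ) :
    ∃ v, (γ, v) ∈ spectralSet (k + 1) m := by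
  obtain ⟨v, Ψ, -, h⟩ := exists_isJoint_mem
    (H := fun i => joint m k i (opMatrix m k 1 (rootPoly γ))) (fun i j => joint_commute _ i j)
    ⊤ top_ne_bot fun _ _ _ => Submodule.mem_top
  exact ⟨v, mem_spectralSet_iff.mpr ⟨Ψ, h⟩⟩

theorem eq_of_continuousOn_spectralSet {m k : ℕ} {f : (Fin (k + 2) → ℂ) × (Fin (k + 1) → ℂ) → Bool}
    (hf : ContinuousOn f (spectralSet (k + 1) m)) {γ β : Fin (k + 2) → ℂ}
    (hβ : Function.Injective β) {v w : Fin (k + 1) → ℂ} (hv : (γ, v) ∈ spectralSet (k + 1) m)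
    (hw : (γ + β, w) ∈ spectralSet (k + 1) m) : f (γ, v) = f (γ + β, w) := by
  have hmaps : ∀ s v, (s, v) ∈ curve (opFamily fun s => opMatrix m k 1 (rootPoly (γ + s • β))) ↔
      (γ + s • β, v) ∈ spectralSet (k + 1) m := fun s v => mem_spectralSet_iff.symm
  let g : Bool → ℂ := fun b => if b then 1 else 0
  obtain ⟨c, hc⟩ := exists_const_of_continuousOn_line (m := m) (γ := γ) hβ
    (e := fun x => g (f (γ + x.1 • β, x.2))) (by
      refine (continuous_of_discreteTopology (f := g)).comp_continuousOn (hf.comp ?_ ?_)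
      · exact Continuous.continuousOn (by fun_prop)
      · exact fun x hx => (hmaps x.1 x.2).mp hx) (fun x _ => by
      change (if _ then _ else _ : ℂ) = 0 ∨ (if _ then _ else _ : ℂ) = 1
      split_ifs <;> simp)
  have h1 := hc (0, v) ((hmaps _ _).mpr (by simpa using hv))
  have h2 := hc (1, w) ((hmaps _ _).mpr (by simpa using hw))
  simp only [zero_smul, add_zero, one_smul] at h1 h2
  rw [← h2] at h1
  change (if _ then _ else _ : ℂ) = (if _ then _ else _ : ℂ) at h1
  cases h3 : f (γ, v) <;> cases h4 : f (γ + β, w) <;> simp_all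

theorem exists_injective_add_eq {n : ℕ} (γ γ' : Fin n → ℂ) :
    ∃ β β' : Fin n → ℂ, Function.Injective β ∧ Function.Injective β' ∧ γ + β = γ' + β' := by
  have hfin : (({0} : Set ℂ) ∪ Set.range fun p : Fin n × Fin n =>
      ((γ' p.1 - γ p.1) - (γ' p.2 - γ p.2)) / ((p.1 : ℂ) - p.2)).Finite :=
    (Set.finite_singleton 0).union (Set.finite_range _)
  obtain ⟨c, hc⟩ := hfin.exists_notMem
  simp only [Set.mem_union, Set.mem_singleton_iff, Set.mem_range, not_or, not_exists] at hc
  refine ⟨fun i => c * i, fun i => c * i + (γ i - γ' i), fun i j hij => ?_, fun i j hij => ?_, ?_⟩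
  · have := mul_left_cancel₀ hc.1 hij
    exact Fin.ext (by exact_mod_cast this)
  · by_contra hne
    have hne' : ((i : ℕ) : ℂ) - (j : ℕ) ≠ 0 := sub_ne_zero.mpr fun h => hne
      (Fin.ext (by exact_mod_cast h))
    refine hc.2 (i, j) ?_
    rw [div_eq_iff hne']
    simp only at hij
    linear_combination -hij
  · ext i
    simp only [Pi.add_apply]
    ring

theorem isConnected_spectralSet (K m : ℕ) : IsConnected (spectralSet K m) := by
  cases K with
  | zero =>
    have : spectralSet 0 m = Set.univ := by
      refine Set.eq_univ_of_forall fun x => ?_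
      let A : (Fin (m + 1) → ℂ) →ₗ[ℂ] (Fin m → ℂ) :=
        { toFun := fun q a => (diffOp 0 m 1 (rootPoly x.1) (ofCoeffs q)).coeff a
          map_add' := fun q r => by
            have : ofCoeffs (q + r) = ofCoeffs q + ofCoeffs r := by
              simp [ofCoeffs, add_mul, Finset.sum_add_distrib]
            ext a
            simp [this]
          map_smul' := fun c q => by
            have : ofCoeffs (c • q) = c • ofCoeffs q := by
              simp [ofCoeffs, Finset.smul_sum, smul_eq_C_mul, mul_assoc]
            ext a
            simp [this] }
      obtain ⟨q, hq, hq0⟩ := (Submodule.ne_bot_iff _).mp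
        (A.ker_ne_bot_of_finrank_lt (by simp))
      refine ⟨ofCoeffs q, ofCoeffs_ne_zero hq0, natDegree_ofCoeffs_le q, ?_⟩
      have h1 : ofCoeffs x.2 = 0 := by simp [ofCoeffs]
      rw [h1, zero_mul]
      ext a
      rw [coeff_zero]
      rcases lt_trichotomy a m with ha | rfl | ha
      · exact congrFun (LinearMap.mem_ker.mp hq) ⟨a, ha⟩
      · have := coeff_diffOp_of_natDegree_le (m := a) (ε := 1) (rootPoly_monic x.1)
          (natDegree_rootPoly x.1) (natDegree_ofCoeffs_le q)
        rw [add_zero] at this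
        rw [this]
        ring
      · exact coeff_eq_zero_of_natDegree_lt ((natDegree_diffOp_le (natDegree_rootPoly x.1)
          (natDegree_ofCoeffs_le q)).trans_lt ha)
    rw [this]
    exact isConnected_univ
  | succ k =>
    refine ⟨?_, isPreconnected_of_forall_constant fun f hf => ?_⟩
    · obtain ⟨v, hv⟩ := exists_mem_spectralSet (m := m) (0 : Fin (k + 2) → ℂ)
      exact ⟨_, hv⟩
    · rintro ⟨γ, v⟩ hv ⟨γ', v'⟩ hv'
      obtain ⟨β, β', hβ, hβ', h⟩ := exists_injective_add_eq γ γ'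
      obtain ⟨w, hw⟩ := exists_mem_spectralSet (m := m) (γ + β)
      rw [eq_of_continuousOn_spectralSet hf hβ hv hw,
        eq_of_continuousOn_spectralSet hf hβ' hv' (h ▸ hw), h]

end SpectralPoly

namespace RayGrowth

theorem le_of_mul_deriv_le {f f' : ℝ → ℝ} {x₀ p : ℝ} (hx₀ : 0 < x₀)
    (hf : ∀ x, x₀ ≤ x → HasDerivAt f (f' x) x) (h : ∀ x, x₀ ≤ x → x * f' x ≤ p * f x)
    {x : ℝ} (hx : x₀ ≤ x) : f x ≤ f x₀ * (x / x₀) ^ p := by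
  have hd : ∀ x, x₀ ≤ x → HasDerivAt (fun x => f x * x ^ (-p))
      (f' x * x ^ (-p) + f x * (-p * x ^ (-p - 1))) x := fun x hx =>
    (hf x hx).mul (Real.hasDerivAt_rpow_const (Or.inl (hx₀.trans_le hx).ne'))
  have hanti : AntitoneOn (fun x => f x * x ^ (-p)) (Set.Ici x₀) := by
    refine antitoneOn_of_deriv_nonpos (convex_Ici x₀)
      (fun x hx => (hd x hx).continuousAt.continuousWithinAt) (fun x hx => ?_) fun x hx => ?_
    · rw [interior_Ici] at hx
      exact (hd x hx.le).differentiableAt.differentiableWithinAt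
    · rw [interior_Ici] at hx
      have hpos : 0 < x := hx₀.trans hx
      rw [(hd x hx.le).deriv]
      have e1 : x ^ (-p) = x * x ^ (-p - 1) := by
        rw [Real.rpow_sub_one hpos.ne']
        field_simp
      have e2 : 0 < x ^ (-p - 1) := Real.rpow_pos_of_pos hpos _
      rw [e1]
      nlinarith [mul_le_mul_of_nonneg_right (h x hx.le) e2.le]
  have hpos : 0 < x := hx₀.trans_le hx
  have := hanti (Set.mem_Ici.mpr le_rfl) (Set.mem_Ici.mpr hx) hx
  simp only at this
  rw [Real.div_rpow hpos.le hx₀.le]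
  rw [Real.rpow_neg hpos.le, Real.rpow_neg hx₀.le, ← div_eq_mul_inv, ← div_eq_mul_inv,
    div_le_iff₀ (Real.rpow_pos_of_pos hpos p)] at this
  calc f x ≤ f x₀ / x₀ ^ p * x ^ p := this
    _ = _ := by ring

theorem hasDerivAt_norm_sq {f : ℝ → ℂ} {f' : ℂ} {x : ℝ} (hf : HasDerivAt f f' x) :
    HasDerivAt (fun x => ‖f x‖ ^ 2) (2 * (star (f x) * f').re) x := by
  have := hf.norm_sq
  rwa [Complex.inner, mul_comm f'] at this

theorem abs_re_star_mul_le (z w : ℂ) : |(star z * w).re| ≤ ‖z‖ * ‖w‖ := by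
  refine (abs_re_le_norm _).trans ?_
  rw [norm_mul, norm_star]

theorem re_star_mul_mul (z a : ℂ) : (star z * (a * z)).re = a.re * ‖z‖ ^ 2 := by
  rw [show star z * (a * z) = a * (star z * z) by ring]
  have : star z * z = ((‖z‖ ^ 2 : ℝ) : ℂ) := by
    rw [mul_comm]
    exact_mod_cast mul_conj' z
  rw [this, re_mul_ofReal]

/-- Polynomial bound in a direction in which the exponential factor is decreasing. -/
theorem exists_bound_of_re_le {U W a v : ℝ → ℂ} {K : ℕ} {x₀ c C : ℝ} (hx₀ : 1 ≤ x₀) (hc : 0 < c)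
    (hU : ∀ x, x₀ ≤ x → HasDerivAt U (W x) x)
    (hW : ∀ x, x₀ ≤ x → HasDerivAt W (a x * W x + v x * U x) x)
    (ha : ∀ x, x₀ ≤ x → (a x).re ≤ -c * x ^ (K + 1)) (hv : ∀ x, x₀ ≤ x → ‖v x‖ ≤ C * x ^ K) :
    ∃ A p : ℝ, ∀ x, x₀ ≤ x → ‖U x‖ ^ 2 ≤ A * x ^ p := by
  have hpos : ∀ x, x₀ ≤ x → 0 < x := fun x hx => by linarith
  have hk : ∀ x, x₀ ≤ x → HasDerivAt (fun x : ℝ => (x ^ K)⁻¹) (-(K * x ^ (K - 1)) / (x ^ K) ^ 2) x :=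
    fun x hx => (hasDerivAt_pow K x).inv (pow_pos (hpos x hx) K).ne'
  have hf := fun x hx => (hasDerivAt_norm_sq (hU x hx)).add
    ((hk x hx).mul (hasDerivAt_norm_sq (hW x hx)))
  have hmain := fun x hx => le_of_mul_deriv_le (p := (1 + C) ^ 2 / (2 * c)) (by linarith) hf
    (fun x hx => ?_) (x := x) hx
  · refine ⟨(‖U x₀‖ ^ 2 + (x₀ ^ K)⁻¹ * ‖W x₀‖ ^ 2) * (x₀ ^ ((1 + C) ^ 2 / (2 * c)))⁻¹,
      (1 + C) ^ 2 / (2 * c), fun x hx => ?_⟩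
    have h1 := hmain x hx
    have h2 : 0 ≤ (x ^ K)⁻¹ * ‖W x‖ ^ 2 := by
      have := hpos x hx
      positivity
    rw [Real.div_rpow (hpos x hx).le (by linarith)] at h1
    simp only [Pi.add_apply, Pi.mul_apply] at h1
    calc ‖U x‖ ^ 2 ≤ _ := by linarith
      _ ≤ _ := h1
      _ = _ := by ring
  · have hx' := hpos x hx
    have hxK := pow_pos hx' K
    have h1 := (abs_le.mp (abs_re_star_mul_le (U x) (W x))).2
    have h2 : (star (W x) * (a x * W x + v x * U x)).re ≤
        -c * x ^ (K + 1) * ‖W x‖ ^ 2 + C * x ^ K * (‖U x‖ * ‖W x‖) := by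
      rw [mul_add, add_re, re_star_mul_mul]
      have h3 := (abs_le.mp (abs_re_star_mul_le (W x) (v x * U x))).2
      rw [norm_mul] at h3
      have h4 := mul_le_mul_of_nonneg_right (hv x hx) (by positivity : 0 ≤ ‖U x‖ * ‖W x‖)
      nlinarith [mul_le_mul_of_nonneg_right (ha x hx) (sq_nonneg ‖W x‖)]
    have h5 : -(K * x ^ (K - 1)) / (x ^ K) ^ 2 * ‖W x‖ ^ 2 ≤ 0 := by
      refine mul_nonpos_of_nonpos_of_nonneg (div_nonpos_of_nonpos_of_nonneg ?_ (by positivity))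
        (by positivity)
      have : 0 ≤ (K : ℝ) * x ^ (K - 1) := by positivity
      linarith
    have h6 : (x ^ K)⁻¹ * (2 * (star (W x) * (a x * W x + v x * U x)).re) ≤
        -2 * c * x * ‖W x‖ ^ 2 + 2 * C * (‖U x‖ * ‖W x‖) := by
      have := mul_le_mul_of_nonneg_left h2 (by positivity : 0 ≤ 2 * (x ^ K)⁻¹)
      calc _ = 2 * (x ^ K)⁻¹ * (star (W x) * (a x * W x + v x * U x)).re := by ring
        _ ≤ _ := this
        _ = _ := by
          rw [pow_succ]
          field_simp
    have h7 : 0 ≤ (x ^ K)⁻¹ * ‖W x‖ ^ 2 := by positivity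
    simp only [Pi.add_apply, Pi.mul_apply]
    have h8 : 2 * (1 + C) * ‖U x‖ * (x * ‖W x‖) - 2 * c * (x * ‖W x‖) ^ 2 ≤
        (1 + C) ^ 2 / (2 * c) * ‖U x‖ ^ 2 := by
      rw [div_mul_eq_mul_div, le_div_iff₀ (by positivity)]
      nlinarith [sq_nonneg ((1 + C) * ‖U x‖ - 2 * c * (x * ‖W x‖))]
    have h9 : 0 ≤ (1 + C) ^ 2 / (2 * c) * ((x ^ K)⁻¹ * ‖W x‖ ^ 2) := by positivity
    have h10 : x * (2 * (star (U x) * W x).re + (-(K * x ^ (K - 1)) / (x ^ K) ^ 2 * ‖W x‖ ^ 2 +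
        (x ^ K)⁻¹ * (2 * (star (W x) * (a x * W x + v x * U x)).re))) ≤
        x * (2 * (‖U x‖ * ‖W x‖) + (0 +
          (-2 * c * x * ‖W x‖ ^ 2 + 2 * C * (‖U x‖ * ‖W x‖)))) :=
      mul_le_mul_of_nonneg_left (by linarith) hx'.le
    refine h10.trans ?_
    linarith

/-- A function whose second derivative is bounded below by a positive constant is unbounded. -/
theorem not_tendsto_zero_of_le_deriv {h h' h'' : ℝ → ℝ} {x₀ δ : ℝ} (hδ : 0 < δ)
    (hh : ∀ x, x₀ ≤ x → HasDerivAt h (h' x) x) (hh' : ∀ x, x₀ ≤ x → HasDerivAt h' (h'' x) x)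
    (hge : ∀ x, x₀ ≤ x → δ ≤ h'' x) : ¬ Tendsto h atTop (𝓝 0) := by
  have grow : ∀ {f f' : ℝ → ℝ} {x₀ δ : ℝ}, (∀ x, x₀ ≤ x → HasDerivAt f (f' x) x) →
      (∀ x, x₀ ≤ x → δ ≤ f' x) → ∀ x, x₀ ≤ x → f x₀ + δ * (x - x₀) ≤ f x := by
    intro f f' x₀ δ hf hge x hx
    have := (convex_Ici x₀).mul_sub_le_image_sub_of_le_deriv
      (fun x hx => (hf x hx).continuousAt.continuousWithinAt)
      (fun x hx => by
        rw [interior_Ici] at hx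
        exact (hf x hx.le).differentiableAt.differentiableWithinAt)
      (C := δ) (fun x hx => by
        rw [interior_Ici] at hx
        rw [(hf x hx.le).deriv]
        exact hge x hx.le) x₀ (Set.mem_Ici.mpr le_rfl) x hx hx
    linarith
  intro ht
  obtain ⟨x₁, h1, h2⟩ : ∃ x₁, x₀ ≤ x₁ ∧ ∀ x, x₁ ≤ x → 1 ≤ h' x := by
    refine ⟨max x₀ (x₀ + (1 - h' x₀) / δ), le_max_left _ _, fun x hx => ?_⟩
    have e1 := grow hh' hge x ((le_max_left _ _).trans hx)
    have e2 := (le_max_right _ _).trans hx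
    have e3 : (1 - h' x₀) / δ ≤ x - x₀ := by linarith
    rw [div_le_iff₀ hδ] at e3
    linarith
  have e3 := grow (fun x hx => hh x (h1.trans hx)) h2
  have e4 := (ht.eventually_lt_const (show (0 : ℝ) < 1 by norm_num)).and
    (eventually_ge_atTop (max x₁ (x₁ + 1 - h x₁)))
  obtain ⟨x, hx1, hx2⟩ := e4.exists
  have e5 := e3 x ((le_max_left _ _).trans hx2)
  have e6 := (le_max_right _ _).trans hx2
  linarith

/-- In a direction in which the exponential factor is increasing, a solution tending to zero stays
in the cone of the recessive solutions. -/
theorem exists_norm_le_div_mul {Y g β v τ R : ℝ → ℂ} {K : ℕ} {x₀ c C : ℝ} (hx₀ : 1 ≤ x₀)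
    (hc : 0 < c) (hC : 0 < C) (hτ : ∀ x, ‖τ x‖ = 1)
    (hY : ∀ x, x₀ ≤ x → HasDerivAt Y (-β x * Y x + τ x * g x) x)
    (hg : ∀ x, x₀ ≤ x → HasDerivAt g (β x * g x + v x * Y x) x)
    (hYY : ∀ x, x₀ ≤ x → HasDerivAt (fun x => -β x * Y x + τ x * g x) (R x * Y x) x)
    (hβ : ∀ x, x₀ ≤ x → c * x ^ (K + 1) ≤ (β x).re) (hβ' : ∀ x, x₀ ≤ x → ‖β x‖ ≤ C * x ^ (K + 1))
    (hv : ∀ x, x₀ ≤ x → ‖v x‖ ≤ C * x ^ K)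
    (hR : ∀ x, x₀ ≤ x → c * (x ^ (K + 1)) ^ 2 ≤ (R x).re) (ht : Tendsto Y atTop (𝓝 0)) :
    ∃ A x₁ : ℝ, x₀ ≤ x₁ ∧ 0 ≤ A ∧ ∀ x, x₁ ≤ x → x * ‖g x‖ ≤ A * ‖Y x‖ := by
  set A := C / c with hA
  have hApos : 0 < A := by positivity
  set x₁ := max x₀ (A / c) with hx₁
  have hx01 : x₀ ≤ x₁ := le_max_left _ _
  refine ⟨A, x₁, hx01, hApos.le, ?_⟩
  have hpos : ∀ x, x₁ ≤ x → 0 < x := fun x hx => by linarith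
  have hD := fun x (hx : x₁ ≤ x) => (hasDerivAt_norm_sq (hg x (hx01.trans hx))).sub
    (((hasDerivAt_pow 2 x).inv (pow_pos (hpos x hx) 2).ne').mul
      ((hasDerivAt_norm_sq (hY x (hx01.trans hx))).const_mul (A ^ 2)))
  have hmono : MonotoneOn (fun x => ‖g x‖ ^ 2 - (x ^ 2)⁻¹ * (A ^ 2 * ‖Y x‖ ^ 2)) (Set.Ici x₁) := by
    refine monotoneOn_of_deriv_nonneg (convex_Ici x₁)
      (fun x hx => (hD x hx).continuousAt.continuousWithinAt) (fun x hx => ?_) fun x hx => ?_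
    · rw [interior_Ici] at hx
      exact (hD x hx.le).differentiableAt.differentiableWithinAt
    · rw [interior_Ici] at hx
      have hd := (hD x hx.le).deriv
      refine le_of_le_of_eq ?_ hd.symm
      clear hd
      have hx' := hpos x hx.le
      have hx0 : x₀ ≤ x := hx01.trans hx.le
      have h1 : c * x ^ (K + 1) * ‖g x‖ ^ 2 - C * x ^ K * (‖g x‖ * ‖Y x‖) ≤
          (star (g x) * (β x * g x + v x * Y x)).re := by
        rw [mul_add, add_re, re_star_mul_mul]
        have h3 := (abs_le.mp (abs_re_star_mul_le (g x) (v x * Y x))).1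
        rw [norm_mul] at h3
        have h4 := mul_le_mul_of_nonneg_right (hv x hx0) (by positivity : 0 ≤ ‖g x‖ * ‖Y x‖)
        nlinarith [mul_le_mul_of_nonneg_right (hβ x hx0) (sq_nonneg ‖g x‖)]
      have h2 : (star (Y x) * (-β x * Y x + τ x * g x)).re ≤
          -(c * x ^ (K + 1)) * ‖Y x‖ ^ 2 + ‖g x‖ * ‖Y x‖ := by
        rw [mul_add, add_re, re_star_mul_mul, neg_re]
        have h3 := (abs_le.mp (abs_re_star_mul_le (Y x) (τ x * g x))).2
        rw [norm_mul, hτ, one_mul] at h3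
        nlinarith [mul_le_mul_of_nonneg_right (hβ x hx0) (sq_nonneg ‖Y x‖)]
      set t := A * ‖Y x‖ / x with ht'
      have hYt : ‖Y x‖ = x * t / A := by
        rw [ht']
        field_simp
      have h5 : 0 ≤ (2 : ℕ) * x ^ (2 - 1) / (x ^ 2) ^ 2 * (A ^ 2 * ‖Y x‖ ^ 2) := by positivity
      have h6 : (x ^ 2)⁻¹ * (A ^ 2 * (2 * (star (Y x) * (-β x * Y x + τ x * g x)).re)) ≤
          -2 * (c * x ^ (K + 1)) * t ^ 2 + 2 * (A / x) * (‖g x‖ * t) := by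
        have := mul_le_mul_of_nonneg_left h2 (by positivity : 0 ≤ 2 * ((x ^ 2)⁻¹ * A ^ 2))
        calc _ = 2 * ((x ^ 2)⁻¹ * A ^ 2) * (star (Y x) * (-β x * Y x + τ x * g x)).re := by ring
          _ ≤ _ := this
          _ = _ := by
            rw [hYt]
            field_simp
      have h7 : C * x ^ K * (‖g x‖ * ‖Y x‖) = c * x ^ (K + 1) * (‖g x‖ * t) := by
        rw [hYt, hA]
        field_simp
        ring
      have h8 : A / x ≤ c * x ^ (K + 1) := by
        have e1 : A / c ≤ x := (le_max_right _ _).trans hx.le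
        rw [div_le_iff₀ hc] at e1
        rw [div_le_iff₀ hx']
        have e2 : 1 ≤ x ^ (K + 1) := one_le_pow₀ (by linarith)
        nlinarith [mul_le_mul_of_nonneg_right e2 (by positivity : 0 ≤ c * x)]
      rw [h7] at h1
      have h9 : ‖g x‖ * t ≤ (‖g x‖ ^ 2 + t ^ 2) / 2 := by nlinarith [sq_nonneg (‖g x‖ - t)]
      have h10 : 0 ≤ ‖g x‖ * t := by
        rw [ht']
        positivity
      have h11 : 0 < c * x ^ (K + 1) := by positivity
      have h12 := mul_le_mul_of_nonneg_right h8 h10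
      have h13 := mul_le_mul_of_nonneg_left h9 h11.le
      have h14 : -(((2 : ℕ) : ℝ) * x ^ (2 - 1)) / (x ^ 2) ^ 2 * (A ^ 2 * ‖Y x‖ ^ 2) =
        -(((2 : ℕ) : ℝ) * x ^ (2 - 1) / (x ^ 2) ^ 2 * (A ^ 2 * ‖Y x‖ ^ 2)) := by ring
      rw [h14]
      simp only [Pi.inv_apply]
      linarith
  intro x hx
  by_contra! hlt
  have hx' := hpos x hx
  set δ := ‖g x‖ ^ 2 - (x ^ 2)⁻¹ * (A ^ 2 * ‖Y x‖ ^ 2) with hδ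
  have hδpos : 0 < δ := by
    have e1 : A ^ 2 * ‖Y x‖ ^ 2 < x ^ 2 * ‖g x‖ ^ 2 := by
      rw [← mul_pow, ← mul_pow]
      exact pow_lt_pow_left₀ hlt (by positivity) two_ne_zero
    rw [hδ, sub_pos, inv_mul_lt_iff₀ (by positivity)]
    exact e1
  have hge : ∀ w, x ≤ w → δ ≤ ‖g w‖ ^ 2 := fun w hw => by
    have e1 := hmono (Set.mem_Ici.mpr hx) (Set.mem_Ici.mpr (hx.trans hw)) hw
    have e2 : 0 ≤ (w ^ 2)⁻¹ * (A ^ 2 * ‖Y w‖ ^ 2) := by positivity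
    simp only at e1
    linarith
  set Z : ℝ → ℂ := fun x => -β x * Y x + τ x * g x with hZ
  set B := 1 + C ^ 2 / c with hB
  have hBpos : 0 < B := by positivity
  have hh' : ∀ w, x ≤ w → HasDerivAt (fun w => 2 * (star (Y w) * Z w).re)
      (2 * (‖Z w‖ ^ 2 + (R w).re * ‖Y w‖ ^ 2)) w := fun w hw => by
    have hw0 : x₀ ≤ w := (hx01.trans hx).trans hw
    have e1 := ((hY w hw0).star.mul (hYY w hw0))
    have e2 := (Complex.reCLM.hasFDerivAt.comp_hasDerivAt w e1).const_mul 2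
    refine e2.congr_deriv ?_
    change 2 * (star (Z w) * Z w + star (Y w) * (R w * Y w)).re = _
    rw [add_re, re_star_mul_mul]
    have e3 := re_star_mul_mul (Z w) 1
    rw [one_mul, one_re, one_mul] at e3
    rw [e3]
  refine not_tendsto_zero_of_le_deriv (h := fun x => ‖Y x‖ ^ 2) (x₀ := x) (div_pos hδpos hBpos)
    (fun w hw => hasDerivAt_norm_sq (hY w ((hx01.trans hx).trans hw))) hh' (fun w hw => ?_) ?_
  · have hw0 : x₀ ≤ w := (hx01.trans hx).trans hw
    rw [div_le_iff₀ hBpos]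
    refine (hge w hw).trans ?_
    have e1 : ‖g w‖ ≤ ‖Z w‖ + C * w ^ (K + 1) * ‖Y w‖ := by
      have : τ w * g w = Z w + β w * Y w := by
        rw [hZ]
        ring
      calc ‖g w‖ = ‖τ w * g w‖ := by rw [norm_mul, hτ, one_mul]
        _ ≤ ‖Z w‖ + ‖β w * Y w‖ := by
          rw [this]
          exact norm_add_le _ _
        _ ≤ _ := by
          rw [norm_mul]
          exact add_le_add_right (mul_le_mul_of_nonneg_right (hβ' w hw0) (norm_nonneg _)) _
    have e2 : ‖g w‖ ^ 2 ≤ 2 * (‖Z w‖ ^ 2 + (C * w ^ (K + 1) * ‖Y w‖) ^ 2) := by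
      have := pow_le_pow_left₀ (norm_nonneg _) e1 2
      nlinarith [sq_nonneg (‖Z w‖ - C * w ^ (K + 1) * ‖Y w‖)]
    have e3 : (C * w ^ (K + 1) * ‖Y w‖) ^ 2 ≤ C ^ 2 / c * ((R w).re * ‖Y w‖ ^ 2) := by
      have := mul_le_mul_of_nonneg_right (hR w hw0)
        (by positivity : 0 ≤ C ^ 2 / c * ‖Y w‖ ^ 2)
      calc _ = c * (w ^ (K + 1)) ^ 2 * (C ^ 2 / c * ‖Y w‖ ^ 2) := by
            field_simp
        _ ≤ _ := this
        _ = _ := by ring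
    have e4 : 0 ≤ (R w).re * ‖Y w‖ ^ 2 := by
      refine mul_nonneg (le_trans ?_ (hR w hw0)) (by positivity)
      positivity
    have e5 : 0 ≤ C ^ 2 / c * ‖Z w‖ ^ 2 := by positivity
    rw [hB]
    nlinarith
  · simpa using ht.norm.pow 2

end RayGrowth

namespace RayGrowth

open Polynomial

theorem exists_derivative_eq (p : ℂ[X]) : ∃ q : ℂ[X], derivative q = p := by
  induction p using Polynomial.induction_on' with
  | add p q hp hq =>
    obtain ⟨P, rfl⟩ := hp
    obtain ⟨Q, rfl⟩ := hq
    exact ⟨P + Q, derivative_add⟩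
  | monomial n a =>
    refine ⟨monomial (n + 1) (a / (n + 1)), ?_⟩
    have : (n : ℂ) + 1 ≠ 0 := Nat.cast_add_one_ne_zero n
    rw [derivative_monomial]
    simp [this]

theorem tendsto_eval_div {p : ℂ[X]} {N : ℕ} (hp : p.natDegree ≤ N) (ω : ℂ) :
    Tendsto (fun x : ℝ => p.eval (ω * x) / (x : ℂ) ^ N) atTop (𝓝 (p.coeff N * ω ^ N)) := by
  have h : ∀ x : ℝ, p.eval (ω * x) / (x : ℂ) ^ N =
      ∑ i ∈ Finset.range (N + 1), p.coeff i * ω ^ i * (((x ^ i / x ^ N : ℝ)) : ℂ) := fun x => by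
    rw [eval_eq_sum_range' (Nat.lt_succ_of_le hp), Finset.sum_div]
    refine Finset.sum_congr rfl fun i _ => ?_
    push_cast
    ring
  simp only [h]
  have h2 : p.coeff N * ω ^ N = ∑ i ∈ Finset.range (N + 1),
      p.coeff i * ω ^ i * (((if i = N then 1 else 0 : ℝ)) : ℂ) := by
    rw [Finset.sum_eq_single N]
    · simp
    · intro i _ hi
      simp [hi]
    · simp
  rw [h2]
  refine tendsto_finsetSum _ fun i hi => ?_
  refine ((continuous_ofReal.tendsto _).comp ?_).const_mul _
  split_ifs with hiN
  · subst hiN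
    refine tendsto_const_nhds.congr' ?_
    filter_upwards [eventually_gt_atTop 0] with x hx
    rw [div_self (pow_pos hx _).ne']
  · have : i < N := lt_of_le_of_ne (Nat.lt_succ_iff.mp (Finset.mem_range.mp hi)) hiN
    exact tendsto_pow_div_pow_atTop_zero this

theorem re_div_ofReal_pow (z : ℂ) (x : ℝ) (N : ℕ) : (z / (x : ℂ) ^ N).re = z.re / x ^ N := by
  rw [← ofReal_pow, div_ofReal_re]

theorem eventually_re_eval_le {p : ℂ[X]} {N : ℕ} (hp : p.natDegree ≤ N) {ω : ℂ} {c : ℝ}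
    (hc : (p.coeff N * ω ^ N).re < c) : ∀ᶠ x : ℝ in atTop, (p.eval (ω * x)).re ≤ c * x ^ N := by
  have := (continuous_re.tendsto _).comp (tendsto_eval_div hp ω)
  filter_upwards [this.eventually_lt_const hc, eventually_gt_atTop 0] with x hx h0
  simp only [Function.comp] at hx
  rw [re_div_ofReal_pow, div_lt_iff₀ (pow_pos h0 N)] at hx
  exact hx.le

theorem eventually_le_re_eval {p : ℂ[X]} {N : ℕ} (hp : p.natDegree ≤ N) {ω : ℂ} {c : ℝ}
    (hc : c < (p.coeff N * ω ^ N).re) : ∀ᶠ x : ℝ in atTop, c * x ^ N ≤ (p.eval (ω * x)).re := by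
  have := eventually_re_eval_le (p := -p) (N := N) (by rwa [natDegree_neg]) (ω := ω) (c := -c)
    (by
      rw [coeff_neg, neg_mul, neg_re]
      linarith)
  filter_upwards [this] with x hx
  simp only [eval_neg, neg_re] at hx
  linarith

theorem exists_norm_eval_le {p : ℂ[X]} {N : ℕ} (hp : p.natDegree ≤ N) :
    ∃ C : ℝ, 0 < C ∧ ∀ z : ℂ, ‖p.eval z‖ ≤ C * (1 + ‖z‖) ^ N := by
  refine ⟨1 + ∑ i ∈ Finset.range (N + 1), ‖p.coeff i‖, by positivity, fun z => ?_⟩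
  rw [eval_eq_sum_range' (Nat.lt_succ_of_le hp), add_mul, Finset.sum_mul]
  have : ∑ i ∈ Finset.range (N + 1), ‖p.coeff i * z ^ i‖ ≤
      ∑ i ∈ Finset.range (N + 1), ‖p.coeff i‖ * (1 + ‖z‖) ^ N := by
    refine Finset.sum_le_sum fun i hi => ?_
    rw [norm_mul, norm_pow]
    refine mul_le_mul_of_nonneg_left ?_ (norm_nonneg _)
    calc ‖z‖ ^ i ≤ (1 + ‖z‖) ^ i := pow_le_pow_left₀ (norm_nonneg _) (by linarith) i
      _ ≤ _ := pow_le_pow_right₀ (by linarith [norm_nonneg z])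
        (Nat.lt_succ_iff.mp (Finset.mem_range.mp hi))
  have h1 : (0 : ℝ) ≤ 1 * (1 + ‖z‖) ^ N := by positivity
  linarith [norm_sum_le (Finset.range (N + 1)) fun i => p.coeff i * z ^ i]

theorem exists_norm_eval_le_mul_pow {p : ℂ[X]} {N : ℕ} (hp : p.natDegree ≤ N) {ω : ℂ}
    (hω : ‖ω‖ = 1) : ∃ C : ℝ, 0 < C ∧ ∀ x : ℝ, 1 ≤ x → ‖p.eval (ω * x)‖ ≤ C * x ^ N := by
  obtain ⟨C, hC, h⟩ := exists_norm_eval_le hp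
  refine ⟨C * 2 ^ N, by positivity, fun x hx => (h _).trans ?_⟩
  rw [norm_mul, hω, one_mul, norm_real, Real.norm_of_nonneg (by linarith), mul_assoc, ← mul_pow]
  gcongr
  linarith

theorem hasDerivAt_ray {f : ℂ → ℂ} {f' ω : ℂ} {x : ℝ} (hf : HasDerivAt f f' (ω * x)) :
    HasDerivAt (fun x : ℝ => f (ω * x)) (ω * f') x := by
  have h1 : HasDerivAt (fun z : ℂ => ω * z) ω (x : ℂ) := by
    simpa using (hasDerivAt_id (x : ℂ)).const_mul ω
  have := (hf.comp (x : ℂ) h1).comp_ofReal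
  rwa [mul_comm] at this

/-- The exponential prefactor removed, a solution grows at most polynomially along the ray. -/
def PolyRay (u : ℂ → ℂ) (ω : ℂ) : Prop :=
  ∃ C : ℝ, ∃ N : ℕ, ∀ x : ℝ, 0 ≤ x → ‖u (ω * x)‖ ≤ C * (1 + x) ^ N

theorem polyRay_of_sq_le {u : ℂ → ℂ} (hu : Continuous u) {ω : ℂ} {A p x₀ : ℝ} (hx₀ : 1 ≤ x₀)
    (h : ∀ x : ℝ, x₀ ≤ x → ‖u (ω * x)‖ ^ 2 ≤ A * x ^ p) : PolyRay u ω := by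
  obtain ⟨N, hN⟩ := exists_nat_ge p
  have hcont : Continuous fun x : ℝ => u (ω * x) := by fun_prop
  obtain ⟨M, hM⟩ := (isCompact_Icc (a := 0) (b := x₀)).exists_bound_of_continuousOn
    hcont.continuousOn
  have hM0 : 0 ≤ M := (norm_nonneg _).trans (hM 0 ⟨le_rfl, by linarith⟩)
  refine ⟨M + (1 + |A|), N, fun x hx => ?_⟩
  have h1 : (1 : ℝ) ≤ (1 + x) ^ N := one_le_pow₀ (by linarith)
  rcases le_total x x₀ with hxx | hxx
  · have := hM x ⟨hx, hxx⟩
    nlinarith [mul_le_mul_of_nonneg_left h1 hM0, abs_nonneg A]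
  · have h2 := h x hxx
    have h3 : x ^ p ≤ (1 + x) ^ N := by
      calc x ^ p ≤ x ^ (N : ℝ) := Real.rpow_le_rpow_of_exponent_le (by linarith) hN
        _ = x ^ N := Real.rpow_natCast _ _
        _ ≤ _ := pow_le_pow_left₀ hx (by linarith) N
    have h4 : 0 ≤ x ^ p := Real.rpow_nonneg hx p
    have h5 : ‖u (ω * x)‖ ^ 2 ≤ ((1 + |A|) * (1 + x) ^ N) ^ 2 := by
      calc _ ≤ A * x ^ p := h2
        _ ≤ |A| * (1 + x) ^ N := by
          have := abs_nonneg A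
          have := le_abs_self A
          nlinarith
        _ ≤ _ := by
          rw [mul_pow]
          have := abs_nonneg A
          gcongr
          · nlinarith
          · nlinarith
    have h6 := (pow_le_pow_iff_left₀ (norm_nonneg _)
      (by positivity) two_ne_zero).mp h5
    have h7 : 0 ≤ M * (1 + x) ^ N := by positivity
    linarith

/-- The data of a solution of `y'' = (b² + r) y` together with an antiderivative of `b`. -/
structure Data (K : ℕ) where
  b : ℂ[X]
  r : ℂ[X]
  B : ℂ[X]
  y : ℂ → ℂ
  monic : b.Monic
  natDegree_b : b.natDegree = K + 1
  natDegree_r : r.natDegree ≤ K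
  derivative_B : derivative B = b
  differentiable : Differentiable ℂ y
  eq : ∀ z, deriv (deriv y) z = (b ^ 2 + r).eval z * y z

namespace Data

variable {K : ℕ} (D : Data K)

noncomputable def g (z : ℂ) : ℂ := deriv D.y z + D.b.eval z * D.y z

noncomputable def s : ℂ[X] := D.r + derivative D.b

noncomputable def u (z : ℂ) : ℂ := D.y z * exp (D.B.eval z)

noncomputable def w (z : ℂ) : ℂ := D.g z * exp (D.B.eval z)

theorem hasDerivAt_y (z : ℂ) : HasDerivAt D.y (-D.b.eval z * D.y z + D.g z) z := by
  refine (D.differentiable z).hasDerivAt.congr_deriv ?_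
  rw [g]
  ring

theorem differentiable_deriv : Differentiable ℂ (deriv D.y) :=
  fun z => (D.differentiable.analyticAt z).deriv.differentiableAt

theorem hasDerivAt_deriv (z : ℂ) : HasDerivAt (deriv D.y) ((D.b ^ 2 + D.r).eval z * D.y z) z :=
  (D.differentiable_deriv z).hasDerivAt.congr_deriv (D.eq z)

theorem hasDerivAt_g (z : ℂ) : HasDerivAt D.g (D.b.eval z * D.g z + D.s.eval z * D.y z) z := by
  refine ((D.hasDerivAt_deriv z).add ((D.b.hasDerivAt z).mul (D.hasDerivAt_y z))).congr_deriv ?_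
  simp only [s, g, eval_add, eval_pow]
  ring

theorem hasDerivAt_exp (z : ℂ) :
    HasDerivAt (fun z => exp (D.B.eval z)) (exp (D.B.eval z) * D.b.eval z) z := by
  have := (D.B.hasDerivAt z).cexp
  rwa [D.derivative_B] at this

theorem hasDerivAt_u (z : ℂ) : HasDerivAt D.u (D.w z) z := by
  refine ((D.hasDerivAt_y z).mul (D.hasDerivAt_exp z)).congr_deriv ?_
  rw [w]
  ring

theorem hasDerivAt_w (z : ℂ) :
    HasDerivAt D.w (2 * D.b.eval z * D.w z + D.s.eval z * D.u z) z := by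
  refine ((D.hasDerivAt_g z).mul (D.hasDerivAt_exp z)).congr_deriv ?_
  rw [w, u]
  ring

theorem continuous_u : Continuous D.u :=
  Differentiable.continuous fun z => (D.hasDerivAt_u z).differentiableAt

theorem natDegree_s : D.s.natDegree ≤ K := by
  refine (natDegree_add_le _ _).trans (max_le D.natDegree_r ?_)
  have := natDegree_derivative_le D.b
  have := D.natDegree_b
  omega

theorem coeff_b : D.b.coeff (K + 1) = 1 := by
  rw [← D.natDegree_b]
  exact D.monic.coeff_natDegree

theorem natDegree_potential : (D.b ^ 2 + D.r).natDegree ≤ 2 * (K + 1) := by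
  have h1 := natDegree_add_le (D.b ^ 2) D.r
  have h2 := D.monic.natDegree_pow 2
  have h3 := D.natDegree_b
  have h4 := D.natDegree_r
  rw [h2] at h1
  refine h1.trans (max_le ?_ ?_) <;> omega

theorem coeff_potential : (D.b ^ 2 + D.r).coeff (2 * (K + 1)) = 1 := by
  have h2 := D.monic.natDegree_pow 2
  have h3 := D.natDegree_b
  have h4 := D.natDegree_r
  rw [coeff_add, coeff_eq_zero_of_natDegree_lt (p := D.r) (by omega), add_zero, ← h3, ← h2]
  exact (D.monic.pow 2).coeff_natDegree

theorem polyRay_of_re_neg {ω : ℂ} (hω : ‖ω‖ = 1) (h : (ω ^ (K + 2)).re < 0) : PolyRay D.u ω := by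
  obtain ⟨C, hC, hC'⟩ := exists_norm_eval_le_mul_pow D.natDegree_s hω
  set c := -(ω ^ (K + 2)).re with hc
  have hcpos : 0 < c := by linarith
  have h1 := eventually_re_eval_le (p := Polynomial.C (2 * ω) * D.b) (N := K + 1)
    ((natDegree_C_mul_le _ _).trans D.natDegree_b.le) (ω := ω) (c := -c)
    (by
      rw [coeff_C_mul, D.coeff_b, show 2 * ω * 1 * ω ^ (K + 1) = ((2 : ℝ) : ℂ) * ω ^ (K + 2) by
        push_cast
        ring, re_ofReal_mul]
      linarith)
  obtain ⟨x₀, hx₀⟩ := eventually_atTop.mp h1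
  obtain ⟨A, p, hA⟩ := exists_bound_of_re_le (U := fun x => D.u (ω * x))
    (W := fun x => ω * D.w (ω * x)) (a := fun x => 2 * ω * D.b.eval (ω * x))
    (v := fun x => ω ^ 2 * D.s.eval (ω * x)) (K := K) (x₀ := max 1 x₀) (c := c) (C := C)
    (le_max_left _ _) hcpos (fun x _ => hasDerivAt_ray (D.hasDerivAt_u _))
    (fun x _ => ((hasDerivAt_ray (D.hasDerivAt_w _)).const_mul ω).congr_deriv (by ring))
    (fun x hx => by
      have := hx₀ x ((le_max_right _ _).trans hx)
      rwa [eval_mul, eval_C] at this)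
    (fun x hx => by
      rw [norm_mul, norm_pow, hω, one_pow, one_mul]
      exact hC' x ((le_max_left _ _).trans hx))
  exact polyRay_of_sq_le D.continuous_u (le_max_left _ _) hA

theorem polyRay_of_tendsto {ω : ℂ} (hω : ‖ω‖ = 1) (h : ω ^ (K + 2) = 1)
    (ht : Tendsto (fun x : ℝ => D.y (ω * x)) atTop (𝓝 0)) : PolyRay D.u ω := by
  obtain ⟨C₁, hC₁, hs⟩ := exists_norm_eval_le_mul_pow D.natDegree_s hω
  obtain ⟨C₂, hC₂, hb⟩ := exists_norm_eval_le_mul_pow D.natDegree_b.le hω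
  have h1 := eventually_le_re_eval (p := Polynomial.C ω * D.b) (N := K + 1)
    ((natDegree_C_mul_le _ _).trans D.natDegree_b.le) (ω := ω) (c := 1 / 2)
    (by
      rw [coeff_C_mul, D.coeff_b, mul_one, ← pow_succ', h]
      norm_num)
  have h2 := eventually_le_re_eval (p := Polynomial.C (ω ^ 2) * (D.b ^ 2 + D.r))
    (N := 2 * (K + 1))
    ((natDegree_C_mul_le _ _).trans D.natDegree_potential) (ω := ω) (c := 1 / 2)
    (by
      rw [coeff_C_mul, D.coeff_potential, mul_one, ← pow_add,
        show 2 + 2 * (K + 1) = (K + 2) * 2 by ring, pow_mul, h]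
      norm_num)
  obtain ⟨x₀, hx₀⟩ := eventually_atTop.mp (h1.and h2)
  obtain ⟨A, x₁, hx₁, hA0, hA⟩ := exists_norm_le_div_mul (Y := fun x => D.y (ω * x))
    (g := fun x => D.g (ω * x)) (β := fun x => ω * D.b.eval (ω * x))
    (v := fun x => ω * D.s.eval (ω * x)) (τ := fun _ => ω)
    (R := fun x => ω ^ 2 * (D.b ^ 2 + D.r).eval (ω * x)) (K := K) (x₀ := max 1 x₀) (c := 1 / 2)
    (C := max C₁ C₂) (le_max_left _ _) (by norm_num) (lt_max_of_lt_left hC₁) (fun _ => hω)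
    (fun x _ => (hasDerivAt_ray (D.hasDerivAt_y _)).congr_deriv (by ring))
    (fun x _ => (hasDerivAt_ray (D.hasDerivAt_g _)).congr_deriv (by ring))
    (fun x _ => by
      have h3 := ((hasDerivAt_ray (ω := ω) (x := x) (D.hasDerivAt_deriv _)).const_mul ω)
      have h4 : (fun x : ℝ => -(ω * D.b.eval (ω * x)) * D.y (ω * x) + ω * D.g (ω * x)) =
          fun x : ℝ => ω * deriv D.y (ω * x) := by
        funext x
        rw [g]
        ring
      rw [h4]
      exact h3.congr_deriv (by ring))
    (fun x hx => by
      have := (hx₀ x ((le_max_right _ _).trans hx)).1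
      rwa [eval_mul, eval_C] at this)
    (fun x hx => by
      have hx' := (le_max_left _ _).trans hx
      rw [norm_mul, hω, one_mul]
      refine (hb x hx').trans (mul_le_mul_of_nonneg_right (le_max_right _ _) ?_)
      positivity)
    (fun x hx => by
      have hx' := (le_max_left _ _).trans hx
      rw [norm_mul, hω, one_mul]
      refine (hs x hx').trans (mul_le_mul_of_nonneg_right (le_max_left _ _) ?_)
      positivity)
    (fun x hx => by
      have := (hx₀ x ((le_max_right _ _).trans hx)).2
      rwa [eval_mul, eval_C, mul_comm 2, pow_mul] at this)
    ht
  have hx1 : 1 ≤ x₁ := (le_max_left _ _).trans hx₁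
  have h5 := fun x (hx : x₁ ≤ x) => le_of_mul_deriv_le (f := fun x : ℝ => ‖D.u (ω * x)‖ ^ 2)
    (p := 2 * A) (by linarith : 0 < x₁)
    (fun x _ => hasDerivAt_norm_sq (hasDerivAt_ray (D.hasDerivAt_u (ω * x)))) (fun x hx => ?_) hx
  · refine polyRay_of_sq_le D.continuous_u (A := ‖D.u (ω * x₁)‖ ^ 2 * (x₁ ^ (2 * A))⁻¹)
      (p := 2 * A) hx1 fun x hx => (h5 x hx).trans_eq ?_
    rw [Real.div_rpow (by linarith) (by linarith)]
    ring
  · have hxpos : 0 < x := by linarith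
    have e1 := (abs_le.mp (abs_re_star_mul_le (D.u (ω * x)) (ω * D.w (ω * x)))).2
    rw [norm_mul ω, hω, one_mul] at e1
    have e2 : x * ‖D.w (ω * x)‖ ≤ A * ‖D.u (ω * x)‖ := by
      rw [w, u, norm_mul, norm_mul, ← mul_assoc, ← mul_assoc]
      exact mul_le_mul_of_nonneg_right (hA x hx) (norm_nonneg _)
    have e3 := mul_le_mul_of_nonneg_left e1 hxpos.le
    have e4 := mul_le_mul_of_nonneg_right e2 (norm_nonneg (D.u (ω * x)))
    linarith

end Data

end RayGrowth

namespace RayGrowth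

open Polynomial

theorem exists_polynomial_eq {u : ℂ → ℂ} (hu : Differentiable ℂ u) {C : ℝ} {N : ℕ}
    (h : ∀ z, ‖u z‖ ≤ C * (1 + ‖z‖) ^ N) : ∃ Q : ℂ[X], ∀ z, u z = Q.eval z := by
  have hC : 0 ≤ C := by simpa using (norm_nonneg _).trans (h 0)
  have hz : ∀ k, N < k → iteratedDeriv k u 0 = 0 := fun k hk => by
    have h1 : ∀ R : ℝ, 1 ≤ R → ‖iteratedDeriv k u 0‖ ≤ k.factorial * (C * 2 ^ N) / R := by
      intro R hR
      have h2 := norm_iteratedDeriv_le_of_forall_mem_sphere_norm_le (c := 0) (R := R)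
        (C := C * (2 * R) ^ N) k (by linarith) hu.diffContOnCl (fun z hz => by
          refine (h z).trans ?_
          rw [mem_sphere_zero_iff_norm.mp hz]
          gcongr
          linarith)
      refine h2.trans ?_
      rw [div_le_div_iff₀ (by positivity) (by positivity), mul_pow]
      have h3 : R ^ N * R ≤ R ^ k := by
        rw [← pow_succ]
        exact pow_le_pow_right₀ hR hk
      calc _ = (k.factorial * (C * 2 ^ N)) * (R ^ N * R) := by ring
        _ ≤ _ := mul_le_mul_of_nonneg_left h3 (by positivity)
    rw [← norm_le_zero_iff]
    refine ge_of_tendsto (x := atTop) (f := fun R : ℝ => k.factorial * (C * 2 ^ N) / R)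
      (tendsto_const_nhds.div_atTop tendsto_id) ?_
    filter_upwards [eventually_ge_atTop 1] with R hR using h1 R hR
  refine ⟨∑ k ∈ Finset.range (N + 1),
    Polynomial.C ((k.factorial : ℂ)⁻¹ * iteratedDeriv k u 0) * X ^ k, fun z => ?_⟩
  rw [← taylorSeries_eq_of_entire' 0 z hu, tsum_eq_sum (s := Finset.range (N + 1))]
  · simp [eval_finsetSum]
  · intro k hk
    rw [hz k (by simpa using hk)]
    simp

theorem one_le_norm_one_add {w : ℂ} (hw : 0 ≤ w.re) : 1 ≤ ‖1 + w‖ := by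
  have := re_le_norm (1 + w)
  simp only [add_re, one_re] at this
  linarith

theorem one_add_norm_le {w : ℂ} (hw : 0 ≤ w.re) : 1 + ‖w‖ ≤ 2 * ‖1 + w‖ := by
  have h1 := one_le_norm_one_add hw
  have h2 : ‖w‖ ≤ ‖1 + w‖ := by
    rw [← sq_le_sq₀ (norm_nonneg _) (norm_nonneg _), Complex.sq_norm, Complex.sq_norm,
      normSq_apply, normSq_apply]
    simp only [add_re, one_re, add_im, one_im]
    nlinarith
  linarith

/-- Polynomial bounds on both sides of a narrow sector extend to the sector. -/
theorem exists_bound_sector {u : ℂ → ℂ} (hu : Differentiable ℂ u) {C₀ : ℝ} {M : ℕ}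
    (hC₀ : 0 ≤ C₀) (hgrowth : ∀ z, ‖u z‖ ≤ C₀ * Real.exp (C₀ * (1 + ‖z‖) ^ M)) {ω : ℂ} {a : ℝ}
    (hω : ‖ω‖ = 1) (ha : 0 < a) (ha' : a ≤ Real.pi / 3) (hM : M < Real.pi / a)
    (h0 : PolyRay u ω) (h1 : PolyRay u (ω * exp (a * I))) :
    ∃ C : ℝ, ∃ N : ℕ, 0 ≤ C ∧ ∀ x θ : ℝ, 0 ≤ x → 0 ≤ θ → θ ≤ a →
      ‖u (ω * (x * exp (θ * I)))‖ ≤ C * (1 + x) ^ N := by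
  obtain ⟨C₁, N₁, h0⟩ := h0
  obtain ⟨C₂, N₂, h1⟩ := h1
  have hC₁ : 0 ≤ C₁ := by simpa using (norm_nonneg _).trans (h0 0 le_rfl)
  have hC₂ : 0 ≤ C₂ := by simpa using (norm_nonneg _).trans (h1 0 le_rfl)
  set N := N₁ + N₂ with hN
  set C := (C₁ + C₂) * 2 ^ N with hC
  have hre : ∀ ζ : ℂ, 0 ≤ ζ.im → ζ.im ≤ a → 0 ≤ (exp ζ).re := fun ζ h2 h3 => by
    rw [exp_re]
    refine mul_nonneg (Real.exp_pos _).le (Real.cos_nonneg_of_neg_pi_div_two_le_of_le ?_ ?_) <;>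
      linarith [Real.pi_pos]
  have hne : ∀ ζ : ℂ, 0 ≤ ζ.im → ζ.im ≤ a → 1 ≤ ‖(1 + exp ζ) ^ N‖ := fun ζ h2 h3 => by
    rw [norm_pow]
    exact one_le_pow₀ (one_le_norm_one_add (hre ζ h2 h3))
  set f : ℂ → ℂ := fun ζ => u (ω * exp ζ) / (1 + exp ζ) ^ N with hf
  have key : ∀ ζ : ℂ, 0 ≤ ζ.im → ζ.im ≤ a → ∀ C' : ℝ, ∀ N' : ℕ, 0 ≤ C' → C' ≤ C₁ + C₂ → N' ≤ N →
      ‖u (ω * exp ζ)‖ ≤ C' * (1 + ‖exp ζ‖) ^ N' → ‖f ζ‖ ≤ C := by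
    intro ζ h2 h3 C' N' hC' hC'' hN' hle
    rw [hf]
    simp only [norm_div]
    rw [div_le_iff₀ (by linarith [hne ζ h2 h3]), norm_pow, hC, mul_assoc, ← mul_pow]
    refine hle.trans ?_
    have e1 := one_add_norm_le (hre ζ h2 h3)
    calc C' * (1 + ‖exp ζ‖) ^ N' ≤ (C₁ + C₂) * (1 + ‖exp ζ‖) ^ N := by
          gcongr
          linarith [norm_nonneg (exp ζ)]
      _ ≤ _ := by
          gcongr
  have hfd : DiffContOnCl ℂ f (im ⁻¹' Set.Ioo 0 a) := by
    refine DifferentiableOn.diffContOnCl ?_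
    rw [closure_preimage_im, closure_Ioo ha.ne]
    intro ζ hζ
    refine DifferentiableAt.differentiableWithinAt ?_
    refine DifferentiableAt.div ?_ (by fun_prop) ?_
    · exact (hu _).comp ζ (by fun_prop)
    · have := hne ζ hζ.1 hζ.2
      intro h
      rw [h] at this
      norm_num at this
  have hmain : ∀ ζ : ℂ, 0 ≤ ζ.im → ζ.im ≤ a → ‖f ζ‖ ≤ C := fun ζ h2 h3 => by
    refine PhragmenLindelof.horizontal_strip hfd ⟨M, by simpa using hM, C₀ * 2 ^ M, ?_⟩ ?_ ?_ h2 h3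
    · refine Asymptotics.IsBigO.of_bound C₀ ?_
      refine (eventually_principal.mpr fun ζ hζ => ?_).filter_mono inf_le_right
      have e1 := hne ζ hζ.1.le hζ.2.le
      rw [hf]
      simp only [norm_div]
      refine (div_le_self (norm_nonneg _) e1).trans ((hgrowth _).trans ?_)
      rw [Real.norm_of_nonneg (Real.exp_pos _).le]
      refine mul_le_mul_of_nonneg_left (Real.exp_le_exp.mpr ?_) hC₀
      rw [mul_assoc]
      refine mul_le_mul_of_nonneg_left ?_ hC₀
      rw [norm_mul, hω, one_mul, norm_exp, Real.exp_nat_mul, ← mul_pow]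
      have e2 : Real.exp ζ.re ≤ Real.exp |ζ.re| := Real.exp_le_exp.mpr (le_abs_self _)
      have e3 : 1 ≤ Real.exp |ζ.re| := Real.one_le_exp (abs_nonneg _)
      have e4 := Real.exp_pos ζ.re
      gcongr
      linarith
    · intro z hz
      have hz' : exp z = (Real.exp z.re : ℂ) := by
        rw [ofReal_exp]
        congr 1
        apply Complex.ext <;> simp [hz]
      refine key z hz.ge (hz.trans_le ha.le) C₁ N₁ hC₁ (by linarith) (by omega) ?_
      rw [hz', norm_real, Real.norm_of_nonneg (Real.exp_pos _).le]
      exact h0 _ (Real.exp_pos _).le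
    · intro z hz
      have hz' : exp z = exp (a * I) * (Real.exp z.re : ℂ) := by
        rw [ofReal_exp, ← Complex.exp_add]
        congr 1
        apply Complex.ext <;> simp [hz]
      refine key z (ha.le.trans hz.ge) hz.le C₂ N₂ hC₂ (by linarith) (by omega) ?_
      rw [hz', norm_mul, norm_real, Real.norm_of_nonneg (Real.exp_pos _).le,
        norm_exp_ofReal_mul_I, one_mul, ← mul_assoc]
      exact h1 _ (Real.exp_pos _).le
  refine ⟨C + ‖u 0‖, N, by positivity, fun x θ hx hθ hθ' => ?_⟩
  have hx1 : (1 : ℝ) ≤ (1 + x) ^ N := one_le_pow₀ (by linarith)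
  have hCpos : 0 ≤ C := by positivity
  rcases hx.eq_or_lt with rfl | hx
  · simp only [ofReal_zero, zero_mul, mul_zero]
    nlinarith [norm_nonneg (u 0)]
  · have e1 : exp ((Real.log x : ℂ) + θ * I) = x * exp (θ * I) := by
      rw [Complex.exp_add, ← ofReal_exp, Real.exp_log hx]
    have e2 := hmain ((Real.log x : ℂ) + θ * I) (by simpa using hθ) (by simpa using hθ')
    have e3 := hne ((Real.log x : ℂ) + θ * I) (by simpa using hθ) (by simpa using hθ')
    rw [hf] at e2
    simp only [norm_div] at e2
    rw [div_le_iff₀ (by linarith), e1] at e2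
    refine e2.trans ?_
    have e4 : ‖(1 + (x : ℂ) * exp (θ * I)) ^ N‖ ≤ (1 + x) ^ N := by
      rw [norm_pow]
      gcongr
      refine (norm_add_le _ _).trans ?_
      rw [norm_mul, norm_exp_ofReal_mul_I, norm_real, Real.norm_of_nonneg hx.le, norm_one, mul_one]
    nlinarith [mul_le_mul_of_nonneg_left e4 hCpos, norm_nonneg (u 0)]

/-- Polynomial bounds on sufficiently many equally spaced rays give a global polynomial bound. -/
theorem exists_bound_of_polyRay {u : ℂ → ℂ} (hu : Differentiable ℂ u) {C₀ : ℝ} {M : ℕ}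
    (hC₀ : 0 ≤ C₀) (hgrowth : ∀ z, ‖u z‖ ≤ C₀ * Real.exp (C₀ * (1 + ‖z‖) ^ M)) {a : ℝ}
    (ha : 0 < a) (ha' : a ≤ Real.pi / 3) (hM : M < Real.pi / a)
    (h : ∀ l : ℕ, PolyRay u (exp ((l * a : ℝ) * I))) :
    ∃ C : ℝ, ∃ N : ℕ, ∀ z, ‖u z‖ ≤ C * (1 + ‖z‖) ^ N := by
  have hsector : ∀ L : ℕ, ∃ C : ℝ, ∃ N : ℕ, 0 ≤ C ∧ ∀ l < L, ∀ x θ : ℝ, 0 ≤ x → 0 ≤ θ → θ ≤ a →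
      ‖u (exp ((l * a : ℝ) * I) * (x * exp (θ * I)))‖ ≤ C * (1 + x) ^ N := by
    intro L
    induction L with
    | zero => exact ⟨0, 0, le_rfl, fun l hl => absurd hl (Nat.not_lt_zero l)⟩
    | succ L ih =>
      obtain ⟨C₁, N₁, hC₁, h1⟩ := ih
      obtain ⟨C₂, N₂, hC₂, h2⟩ := exists_bound_sector hu hC₀ hgrowth
        (norm_exp_ofReal_mul_I (L * a)) ha ha' hM (h L) (by
          rw [← Complex.exp_add]
          convert h (L + 1) using 2
          push_cast
          ring)
      refine ⟨C₁ + C₂, N₁ + N₂, by positivity, fun l hl x θ hx hθ hθ' => ?_⟩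
      have hx1 : (1 : ℝ) ≤ 1 + x := by linarith
      rcases Nat.lt_succ_iff_lt_or_eq.mp hl with hl | rfl
      · refine (h1 l hl x θ hx hθ hθ').trans ?_
        gcongr
        · linarith
        · omega
      · refine (h2 x θ hx hθ hθ').trans ?_
        gcongr
        · linarith
        · omega
  obtain ⟨L, hL⟩ := exists_nat_gt (3 * Real.pi / a)
  obtain ⟨C, N, -, hb⟩ := hsector L
  refine ⟨C, N, fun z => ?_⟩
  set φ := z.arg + 2 * Real.pi with hφ
  have hφ0 : 0 ≤ φ := by linarith [neg_pi_lt_arg z, Real.pi_pos]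
  have hφ1 : φ ≤ 3 * Real.pi := by linarith [arg_le_pi z]
  have h1 : ((⌊φ / a⌋₊ : ℕ) : ℝ) ≤ φ / a := Nat.floor_le (by positivity)
  have h2 := Nat.lt_floor_add_one (φ / a)
  rw [le_div_iff₀ ha] at h1
  rw [div_lt_iff₀ ha] at h2
  have h3 : ⌊φ / a⌋₊ < L := by
    have : ((⌊φ / a⌋₊ : ℕ) : ℝ) < L := by
      refine lt_of_le_of_lt ?_ hL
      rw [le_div_iff₀ ha]
      linarith
    exact_mod_cast this
  have h4 := hb _ h3 ‖z‖ (φ - ⌊φ / a⌋₊ * a) (norm_nonneg z) (by linarith) (by linarith)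
  have h5 : exp ((⌊φ / a⌋₊ * a : ℝ) * I) * (‖z‖ * exp ((φ - ⌊φ / a⌋₊ * a : ℝ) * I)) = z := by
    rw [mul_left_comm, ← Complex.exp_add, ← add_mul, ← ofReal_add, add_sub_cancel, hφ,
      ofReal_add, add_mul, Complex.exp_add, ofReal_mul, ofReal_ofNat, exp_two_pi_mul_I, mul_one,
      norm_mul_exp_arg_mul_I]
  rwa [h5] at h4

namespace Data

variable {K : ℕ} (D : Data K)

theorem exists_growth : ∃ C₀ : ℝ, 0 ≤ C₀ ∧
    ∀ z, ‖D.u z‖ ≤ C₀ * Real.exp (C₀ * (1 + ‖z‖) ^ (K + 2)) := by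
  obtain ⟨C₁, hC₁, hb⟩ := exists_norm_eval_le D.natDegree_b.le
  obtain ⟨C₂, hC₂, hs⟩ := exists_norm_eval_le D.natDegree_s
  set δ := ‖(D.u 0, D.w 0)‖ with hδ
  have hδ0 : 0 ≤ δ := norm_nonneg _
  refine ⟨δ + (1 + 2 * C₁ + C₂), by positivity, fun z => ?_⟩
  set L := (1 + 2 * C₁ + C₂) * (1 + ‖z‖) ^ (K + 2) with hL
  have hz := norm_nonneg z
  have hder : ∀ t : ℝ, HasDerivAt (fun t : ℝ => (D.u (z * t), D.w (z * t)))
      (z * D.w (z * t), z * (2 * D.b.eval (z * t) * D.w (z * t) + D.s.eval (z * t) * D.u (z * t))) t :=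
    fun t => (hasDerivAt_ray (D.hasDerivAt_u _)).prodMk (hasDerivAt_ray (D.hasDerivAt_w _))
  have hbound : ∀ t ∈ Set.Ico (0 : ℝ) 1, ‖((z * D.w (z * t), z * (2 * D.b.eval (z * t) * D.w (z * t) +
      D.s.eval (z * t) * D.u (z * t))) : ℂ × ℂ)‖ ≤ L * ‖(D.u (z * t), D.w (z * t))‖ + 0 := by
    intro t ht
    have hu := norm_fst_le (D.u (z * t), D.w (z * t))
    have hw := norm_snd_le (D.u (z * t), D.w (z * t))
    set n := ‖(D.u (z * t), D.w (z * t))‖ with hn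
    have hn0 : 0 ≤ n := norm_nonneg _
    simp only at hu hw
    have hzt : ‖z * t‖ ≤ ‖z‖ := by
      rw [norm_mul, norm_real, Real.norm_of_nonneg ht.1]
      nlinarith [ht.2]
    have hb' : ‖D.b.eval (z * t)‖ ≤ C₁ * (1 + ‖z‖) ^ (K + 1) := (hb _).trans (by gcongr)
    have hs' : ‖D.s.eval (z * t)‖ ≤ C₂ * (1 + ‖z‖) ^ (K + 1) := by
      refine (hs _).trans (mul_le_mul_of_nonneg_left ?_ hC₂.le)
      calc _ ≤ (1 + ‖z‖) ^ K := by gcongr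
        _ ≤ _ := pow_le_pow_right₀ (by linarith) (by omega)
    have hp : 1 ≤ (1 + ‖z‖) ^ (K + 1) := one_le_pow₀ (by linarith)
    have hLz : ‖z‖ * ((1 + 2 * C₁ + C₂) * (1 + ‖z‖) ^ (K + 1)) ≤ L := by
      rw [hL, pow_succ _ (K + 1)]
      have : 0 ≤ (1 + 2 * C₁ + C₂) * (1 + ‖z‖) ^ (K + 1) := by positivity
      linarith
    have hfin : ∀ q : ℂ, ‖q‖ ≤ (1 + 2 * C₁ + C₂) * (1 + ‖z‖) ^ (K + 1) * n → ‖z * q‖ ≤ L * n + 0 := by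
      intro q hq
      rw [norm_mul, add_zero]
      calc _ ≤ ‖z‖ * ((1 + 2 * C₁ + C₂) * (1 + ‖z‖) ^ (K + 1) * n) := by gcongr
        _ = ‖z‖ * ((1 + 2 * C₁ + C₂) * (1 + ‖z‖) ^ (K + 1)) * n := by ring
        _ ≤ _ := by gcongr
    refine max_le (hfin _ ?_) (hfin _ ?_)
    · refine hw.trans (le_mul_of_one_le_left hn0 ?_)
      nlinarith
    · refine (norm_add_le _ _).trans ?_
      rw [norm_mul, norm_mul, norm_mul, Complex.norm_two]
      have e1 : 2 * ‖D.b.eval (z * t)‖ * ‖D.w (z * t)‖ ≤ 2 * (C₁ * (1 + ‖z‖) ^ (K + 1)) * n := by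
        gcongr
      have e2 : ‖D.s.eval (z * t)‖ * ‖D.u (z * t)‖ ≤ C₂ * (1 + ‖z‖) ^ (K + 1) * n := by
        gcongr
      have e3 : 0 ≤ (1 + ‖z‖) ^ (K + 1) * n := by positivity
      linarith
  have hg := norm_le_gronwallBound_of_norm_deriv_right_le
    (f := fun t : ℝ => (D.u (z * t), D.w (z * t))) (δ := δ) (a := 0) (b := 1)
    (fun t _ => (hder t).continuousAt.continuousWithinAt) (fun t _ => (hder t).hasDerivWithinAt)
    (by simp [hδ]) hbound 1 ⟨zero_le_one, le_rfl⟩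
  rw [gronwallBound_ε0] at hg
  have h1 := (norm_fst_le _).trans hg
  simp only [ofReal_one, mul_one, sub_zero] at h1
  refine h1.trans ?_
  have : L ≤ (δ + (1 + 2 * C₁ + C₂)) * (1 + ‖z‖) ^ (K + 2) := by
    rw [hL]
    exact mul_le_mul_of_nonneg_right (by linarith) (by positivity)
  exact mul_le_mul (by linarith) (Real.exp_le_exp.mpr this) (Real.exp_pos _).le (by positivity)

/-- A solution tending to zero along the centres of all even sectors is a polynomial times the
exponential prefactor. -/
theorem exists_polynomial (h : ∀ i < K + 2,
    Tendsto (fun x : ℝ => D.y (exp ((2 * Real.pi * i / (K + 2) : ℝ) * I) * x)) atTop (𝓝 0)) :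
    ∃ Q : ℂ[X], ∀ z, D.u z = Q.eval z := by
  obtain ⟨C₀, hC₀, hgrowth⟩ := D.exists_growth
  have hK : (0 : ℝ) < K + 2 := by positivity
  have hu : Differentiable ℂ D.u := fun z => (D.hasDerivAt_u z).differentiableAt
  set a := 2 * Real.pi / (3 * (K + 2)) with ha
  obtain ⟨C, N, hb⟩ := exists_bound_of_polyRay hu hC₀ hgrowth (a := a) (by positivity)
    (by
      rw [ha, div_le_div_iff₀ (by positivity) (by positivity)]
      nlinarith [Real.pi_pos, mul_nonneg Real.pi_pos.le (Nat.cast_nonneg (α := ℝ) K)])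
    (by
      rw [ha, div_div_eq_mul_div, lt_div_iff₀ (by positivity)]
      push_cast
      nlinarith [mul_pos Real.pi_pos hK])
    (fun l => by
      have hpow : exp ((l * a : ℝ) * I) ^ (K + 2) = exp ((2 * Real.pi * l / 3 : ℝ) * I) := by
        rw [← Complex.exp_nat_mul]
        congr 1
        rw [ha]
        push_cast
        have : (K : ℂ) + 2 ≠ 0 := by exact_mod_cast hK.ne'
        field_simp
      have hcos : ∀ q : ℕ, ∀ t : ℝ, exp ((2 * Real.pi * q + t : ℝ) * I) = exp (t * I) := by
        intro q t
        rw [ofReal_add, add_mul, Complex.exp_add]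
        have : exp ((2 * Real.pi * q : ℝ) * I) = 1 := by
          rw [← exp_nat_mul_two_pi_mul_I q]
          congr 1
          push_cast
          ring
        rw [this, one_mul]
      have hdiv := Nat.div_add_mod l 3
      have hmod := Nat.mod_lt l (show 0 < 3 by norm_num)
      have hangle : (2 * Real.pi * l / 3 : ℝ) = 2 * Real.pi * (l / 3 : ℕ) +
          2 * Real.pi * (l % 3 : ℕ) / 3 := by
        have : (l : ℝ) = 3 * (l / 3 : ℕ) + (l % 3 : ℕ) := by exact_mod_cast hdiv.symm
        rw [this]
        ring
      have hcos3 : Real.cos (2 * Real.pi / 3) = -(1 / 2) := by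
        rw [show 2 * Real.pi / 3 = Real.pi - Real.pi / 3 by ring, Real.cos_pi_sub,
          Real.cos_pi_div_three]
      rw [hangle, hcos] at hpow
      have hlt : l % 3 = 0 ∨ l % 3 = 1 ∨ l % 3 = 2 := by omega
      rcases hlt with h3 | h3 | h3
      · rw [h3] at hpow
        refine D.polyRay_of_tendsto (norm_exp_ofReal_mul_I _) (by simpa using hpow) ?_
        have hi := h (l / 3 % (K + 2)) (Nat.mod_lt _ (by omega))
        convert hi using 4
        have h4 := Nat.div_add_mod (l / 3) (K + 2)
        have h5 : (l : ℝ) = 3 * ((K + 2) * (l / 3 / (K + 2) : ℕ) + (l / 3 % (K + 2) : ℕ)) := by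
          have : l = 3 * ((K + 2) * (l / 3 / (K + 2)) + l / 3 % (K + 2)) := by omega
          exact_mod_cast this
        rw [show (l * a : ℝ) = 2 * Real.pi * (l / 3 / (K + 2) : ℕ) +
          2 * Real.pi * (l / 3 % (K + 2) : ℕ) / (K + 2) by
            rw [h5, ha]
            field_simp, hcos]
      · refine D.polyRay_of_re_neg (norm_exp_ofReal_mul_I _) ?_
        rw [hpow, h3, exp_ofReal_mul_I_re, Nat.cast_one, mul_one, hcos3]
        norm_num
      · refine D.polyRay_of_re_neg (norm_exp_ofReal_mul_I _) ?_
        rw [hpow, h3, exp_ofReal_mul_I_re,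
          show 2 * Real.pi * (2 : ℕ) / 3 = 2 * Real.pi - 2 * Real.pi / 3 by ring, Real.cos_two_pi_sub, hcos3]
        norm_num)
  exact exists_polynomial_eq hu hb

end Data

end RayGrowth

namespace RayGrowth

open Polynomial SpectralPoly

theorem rootMultiplicity_eq_one {Q b s : ℂ[X]} (hQ : Q ≠ 0)
    (h : derivative (derivative Q) - 2 * b * derivative Q = s * Q) {z : ℂ} (hz : Q.IsRoot z) :
    Q.rootMultiplicity z = 1 := by
  have h1 := (rootMultiplicity_pos hQ).mpr hz
  by_contra hne
  have h2 : 1 < Q.rootMultiplicity z := by omega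
  have hz' : (derivative Q).IsRoot z := ((one_lt_rootMultiplicity_iff_isRoot hQ).mp h2).2
  have hconst : ∀ {p : ℂ[X]}, p ≠ 0 → p.IsRoot z → derivative p ≠ 0 := fun {p} hp hr h0 => by
    have := derivative_eq_zero.mp h0
    rw [eq_C_of_natDegree_eq_zero this] at hr hp
    simp only [IsRoot, eval_C] at hr
    rw [hr] at hp
    simp at hp
  have hQ' := hconst hQ hz
  have e1 := derivative_rootMultiplicity_of_root hz
  have e2 := derivative_rootMultiplicity_of_root hz'
  have d1 := pow_rootMultiplicity_dvd (derivative Q) z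
  have d2 := (pow_dvd_pow (X - C z) (Nat.sub_le _ 1)).trans (pow_rootMultiplicity_dvd Q z)
  rw [← e1] at d2
  have d3 : (X - C z) ^ (derivative Q).rootMultiplicity z ∣ derivative (derivative Q) := by
    rw [eq_add_of_sub_eq h]
    exact dvd_add (d2.mul_left _) (d1.mul_left _)
  have d4 := (le_rootMultiplicity_iff (hconst hQ' hz')).mpr d3
  omega

theorem zeros_finite_ncard {Q b s : ℂ[X]} (hQ : Q ≠ 0)
    (h : derivative (derivative Q) - 2 * b * derivative Q = s * Q) {y : ℂ → ℂ} {B : ℂ[X]}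
    (hy : ∀ z, y z = Q.eval z * exp (-B.eval z)) :
    (y ⁻¹' {0}).Finite ∧ (y ⁻¹' {0}).ncard = Q.natDegree := by
  have hset : y ⁻¹' {0} = (Q.roots.toFinset : Set ℂ) := by
    ext z
    simp [hy, hQ, exp_ne_zero]
  rw [hset]
  refine ⟨Finset.finite_toSet _, ?_⟩
  rw [Set.ncard_coe_finset, Multiset.toFinset_card_of_nodup,
    ← (IsAlgClosed.splits Q).natDegree_eq_card_roots]
  refine Multiset.nodup_iff_count_le_one.mpr fun z => ?_
  rw [count_roots]
  by_cases hz : Q.IsRoot z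
  · exact (rootMultiplicity_eq_one hQ h hz).le
  · rw [rootMultiplicity_eq_zero hz]
    exact zero_le_one

theorem natDegree_eq_of_eq {Q b s : ℂ[X]} {K : ℕ} (hb : b.Monic) (hK : b.natDegree = K + 1)
    (hs : s.natDegree ≤ K) (hQ : Q ≠ 0)
    (h : derivative (derivative Q) - 2 * b * derivative Q = s * Q) :
    s.coeff K = -2 * Q.natDegree := by
  have h1 := coeff_diffOp_of_natDegree_le (m := 0) (ε := 1) hb hK (le_refl Q.natDegree)
  have h2 : diffOp K 0 1 b Q = s * Q := by
    rw [diffOp_apply, ← h]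
    simp
  rw [h2, add_comm, coeff_mul_add_eq_of_natDegree_le hs le_rfl] at h1
  have h3 : Q.coeff Q.natDegree ≠ 0 := by simpa using hQ
  have h4 := mul_right_cancel₀ h3 h1
  rw [h4]
  simp

namespace Data

variable {K : ℕ} (D : Data K)

theorem exists_eq_polynomial_mul_exp (hy : D.y ≠ 0) (h : ∀ i < K + 2,
    Tendsto (fun x : ℝ => D.y (exp ((2 * Real.pi * i / (K + 2) : ℝ) * I) * x)) atTop (𝓝 0)) :
    ∃ Q : ℂ[X], Q ≠ 0 ∧ derivative (derivative Q) - 2 * D.b * derivative Q = D.s * Q ∧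
      ∀ z, D.y z = Q.eval z * exp (-D.B.eval z) := by
  obtain ⟨Q, hQ⟩ := D.exists_polynomial h
  have hyQ : ∀ z, D.y z = Q.eval z * exp (-D.B.eval z) := fun z => by
    rw [← hQ, u, mul_assoc, ← Complex.exp_add, add_neg_cancel, Complex.exp_zero, mul_one]
  have hw : ∀ z, D.w z = (derivative Q).eval z := fun z => by
    have h1 := D.hasDerivAt_u z
    rw [funext hQ] at h1
    exact h1.unique (Q.hasDerivAt z)
  refine ⟨Q, fun h0 => hy ?_, ?_, hyQ⟩
  · funext z
    rw [hyQ, h0]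
    simp
  · refine Polynomial.funext fun z => ?_
    have h1 := D.hasDerivAt_w z
    rw [hw, hQ, funext hw] at h1
    have h2 := h1.unique ((derivative Q).hasDerivAt z)
    simp only [eval_sub, eval_mul, eval_ofNat]
    rw [← h2]
    ring

end Data

theorem tendsto_polynomial_mul_exp {K : ℕ} {b B : ℂ[X]} (hb : b.Monic) (hK : b.natDegree = K + 1)
    (hB : derivative B = b) (Q : ℂ[X]) {ω : ℂ} (hω : ‖ω‖ = 1) (h : 0 < (ω ^ (K + 2)).re) :
    Tendsto (fun x : ℝ => Q.eval (ω * x) * exp (-B.eval (ω * x))) atTop (𝓝 0) := by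
  have hK0 : (K : ℂ) + 1 + 1 ≠ 0 := by exact_mod_cast (Nat.succ_ne_zero (K + 1))
  have hcoeff : ∀ k, B.coeff (k + 1) = b.coeff k / (k + 1) := fun k => by
    have : (k : ℂ) + 1 ≠ 0 := Nat.cast_add_one_ne_zero k
    rw [← hB, coeff_derivative]
    field_simp
  have hBdeg : B.natDegree ≤ K + 2 := by
    rw [natDegree_le_iff_coeff_eq_zero]
    intro k hk
    obtain ⟨j, rfl⟩ : ∃ j, k = j + 1 := ⟨k - 1, by omega⟩
    rw [hcoeff, coeff_eq_zero_of_natDegree_lt (by omega), zero_div]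
  set c := (ω ^ (K + 2)).re / (K + 2) / 2 with hc
  have hcpos : 0 < c := by positivity
  have h1 := eventually_le_re_eval hBdeg (ω := ω) (c := c) (by
    rw [hcoeff, ← hK, hb.coeff_natDegree, hK, show (1 / (((K + 1 : ℕ) : ℂ) + 1)) * ω ^ (K + 2) =
      ((1 / (K + 2) : ℝ) : ℂ) * ω ^ (K + 2) by
        push_cast
        ring, re_ofReal_mul]
    have : 0 < (ω ^ (K + 2)).re / (K + 2) := by positivity
    rw [hc]
    have e : 1 / ((K : ℝ) + 2) * (ω ^ (K + 2)).re = (ω ^ (K + 2)).re / (K + 2) := by ring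
    rw [e]
    linarith)
  obtain ⟨C, hC, h2⟩ := exists_norm_eval_le_mul_pow (le_refl Q.natDegree) hω
  have h3 := (tendsto_rpow_mul_exp_neg_mul_atTop_nhds_zero (Q.natDegree : ℝ) c hcpos).const_mul C
  rw [mul_zero] at h3
  refine squeeze_zero_norm' ?_ h3
  filter_upwards [h1, eventually_ge_atTop 1] with x hx hx1
  rw [norm_mul, norm_exp, neg_re, Real.rpow_natCast, ← mul_assoc]
  refine mul_le_mul (h2 x hx1) (Real.exp_le_exp.mpr ?_) (Real.exp_pos _).le (by positivity)
  have e1 : x ≤ x ^ (K + 2) := le_self_pow₀ hx1 (by omega)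
  nlinarith

theorem isSol_polynomial_mul_exp {Q b s B : ℂ[X]} (hB : derivative B = b)
    (h : derivative (derivative Q) - 2 * b * derivative Q = s * Q) :
    Differentiable ℂ (fun z => Q.eval z * exp (-B.eval z)) ∧
      ∀ z, deriv (deriv fun z => Q.eval z * exp (-B.eval z)) z =
        (b ^ 2 - derivative b + s).eval z * (Q.eval z * exp (-B.eval z)) := by
  have hexp : ∀ z, HasDerivAt (fun z => exp (-B.eval z)) (exp (-B.eval z) * -b.eval z) z :=
    fun z => by
      have := (B.hasDerivAt z).neg.cexp
      rwa [hB] at this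
  have h1 : ∀ P : ℂ[X], ∀ z, HasDerivAt (fun z => P.eval z * exp (-B.eval z))
      ((derivative P - b * P).eval z * exp (-B.eval z)) z := fun P z => by
    refine ((P.hasDerivAt z).mul (hexp z)).congr_deriv ?_
    simp only [eval_sub, eval_mul]
    ring
  refine ⟨fun z => (h1 Q z).differentiableAt, fun z => ?_⟩
  rw [funext fun z => (h1 Q z).deriv, (h1 _ z).deriv, ← mul_assoc, ← eval_mul]
  congr 2
  rw [add_mul, ← h]
  simp only [derivative_sub, derivative_mul]
  ring

end RayGrowth

namespace RayGrowth

open Polynomial SpectralPoly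

theorem continuous_coeff_sq {T : Type*} [TopologicalSpace T] {b : T → ℂ[X]}
    (hb : ∀ k, Continuous fun x => (b x).coeff k) (k : ℕ) :
    Continuous fun x => ((b x) ^ 2).coeff k := by
  simp only [sq, coeff_mul]
  exact continuous_finsetSum _ fun i _ => (hb _).mul (hb _)

theorem exists_partial_sqrt {T : Type*} [TopologicalSpace T] {P : T → ℂ[X]} {n : ℕ}
    (hP : ∀ k, Continuous fun x => (P x).coeff k) (hmonic : ∀ x, (P x).Monic)
    (hdeg : ∀ x, (P x).natDegree = 2 * n) (j : ℕ) : ∀ i, j + i = n →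
    ∃ b : T → ℂ[X], (∀ k, Continuous fun x => (b x).coeff k) ∧ (∀ x, (b x).Monic) ∧
      (∀ x, (b x).natDegree = n) ∧ ∀ x k, n + i ≤ k → (P x - b x ^ 2).coeff k = 0 := by
  induction j with
  | zero =>
    intro i hi
    refine ⟨fun _ => X ^ n, fun k => continuous_const, fun _ => monic_X_pow n,
      fun _ => natDegree_X_pow n, fun x k hk => ?_⟩
    rw [coeff_sub, ← pow_mul, coeff_X_pow]
    rcases eq_or_ne k (n * 2) with rfl | hne
    · rw [if_pos rfl, mul_comm, ← hdeg x, (hmonic x).coeff_natDegree, sub_self]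
    · rw [if_neg hne, sub_zero]
      refine coeff_eq_zero_of_natDegree_lt ?_
      rw [hdeg]
      omega
  | succ j ih =>
    intro i hi
    obtain ⟨b, hb, hbm, hbd, hbe⟩ := ih (i + 1) (by omega)
    have hlt : ∀ x c, (C c * X ^ i : ℂ[X]).natDegree < (b x).natDegree := fun x c => by
      rw [hbd]
      exact (natDegree_C_mul_X_pow_le c i).trans_lt (by omega)
    have hc : Continuous fun x => (P x - b x ^ 2).coeff (n + i) / 2 := by
      simp only [coeff_sub]
      exact ((hP _).sub (continuous_coeff_sq hb _)).div_const 2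
    refine ⟨fun x => b x + C ((P x - b x ^ 2).coeff (n + i) / 2) * X ^ i, fun k => ?_,
      fun x => (hbm x).add_of_left (degree_lt_degree (hlt x _)), fun x => ?_, fun x k hk => ?_⟩
    · simp only [coeff_add, coeff_C_mul]
      exact (hb k).add (hc.mul continuous_const)
    · rw [natDegree_add_eq_left_of_natDegree_lt (hlt x _), hbd]
    · set c := (P x - b x ^ 2).coeff (n + i) / 2 with hc'
      have e1 : P x - (b x + C c * X ^ i) ^ 2 =
          (P x - b x ^ 2) - C (2 * c) * (b x * X ^ i) - C (c ^ 2) * X ^ (2 * i) := by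
        simp only [C_mul, C_pow, pow_mul']
        rw [show (C 2 : ℂ[X]) = 2 from rfl]
        ring
      rw [e1, coeff_sub, coeff_sub, coeff_C_mul, coeff_C_mul_X_pow, if_neg (by omega), sub_zero]
      obtain ⟨l, rfl⟩ : ∃ l, k = n + l + i := ⟨k - n - i, by omega⟩
      rw [coeff_mul_X_pow]
      rcases Nat.eq_zero_or_pos l with rfl | hl
      · have := (hbm x).coeff_natDegree
        rw [hbd] at this
        rw [add_zero, this, hc']
        ring
      · rw [hbe x _ (by omega), coeff_eq_zero_of_natDegree_lt (p := b x) (by rw [hbd]; omega)]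
        ring

/-- The truncated square root of a continuous family of monic polynomials of even degree. -/
theorem exists_sqrt {T : Type*} [TopologicalSpace T] {P : T → ℂ[X]} {K : ℕ}
    (hP : ∀ k, Continuous fun x => (P x).coeff k) (hmonic : ∀ x, (P x).Monic)
    (hdeg : ∀ x, (P x).natDegree = 2 * (K + 1)) :
    ∃ b : T → ℂ[X], (∀ k, Continuous fun x => (b x).coeff k) ∧ (∀ x, (b x).Monic) ∧
      (∀ x, (b x).natDegree = K + 1) ∧ ∀ x, (P x - b x ^ 2).natDegree ≤ K := by
  obtain ⟨b, hb, hbm, hbd, hbe⟩ := exists_partial_sqrt hP hmonic hdeg (K + 1) 0 rfl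
  refine ⟨b, hb, hbm, hbd, fun x => natDegree_le_iff_coeff_eq_zero.mpr fun k hk => hbe x k ?_⟩
  omega

/-- The polynomial `P_α - λ`. -/
noncomputable def potential (d : ℕ) (p : (Fin (d - 1) → ℂ) × ℂ) : ℂ[X] :=
  X ^ d + (∑ i, C (p.1 i) * X ^ ((i : ℕ) + 1) - C p.2)

theorem degree_potential_tail {d : ℕ} (hd : 0 < d) (p : (Fin (d - 1) → ℂ) × ℂ) :
    (∑ i, C (p.1 i) * X ^ ((i : ℕ) + 1) - C p.2 : ℂ[X]).degree < d := by
  refine lt_of_le_of_lt degree_le_natDegree ?_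
  have : (∑ i, C (p.1 i) * X ^ ((i : ℕ) + 1) - C p.2 : ℂ[X]).natDegree ≤ d - 1 := by
    refine (natDegree_sub_le _ _).trans (max_le ?_ (by simp))
    refine natDegree_sum_le_of_forall_le _ _ fun i _ => (natDegree_C_mul_X_pow_le _ _).trans ?_
    have := i.isLt
    omega
  exact_mod_cast (show _ < d by omega)

theorem potential_monic {d : ℕ} (hd : 0 < d) (p : (Fin (d - 1) → ℂ) × ℂ) : (potential d p).Monic :=
  monic_X_pow_add (degree_potential_tail hd p)

theorem natDegree_potential {d : ℕ} (hd : 0 < d) (p : (Fin (d - 1) → ℂ) × ℂ) :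
    (potential d p).natDegree = d := by
  have h := degree_potential_tail hd p
  rw [potential, natDegree_add_eq_left_of_degree_lt, natDegree_X_pow]
  rwa [degree_X_pow]

theorem continuous_coeff_potential (d k : ℕ) :
    Continuous fun p : (Fin (d - 1) → ℂ) × ℂ => (potential d p).coeff k := by
  simp only [potential, coeff_add, coeff_sub, finsetSum_coeff, coeff_C_mul, coeff_C]
  refine continuous_const.add (Continuous.sub ?_ ?_)
  · fun_prop
  · split_ifs <;> fun_prop

/-- The parameters of a potential. -/
def params (d : ℕ) (M : ℂ[X]) : (Fin (d - 1) → ℂ) × ℂ :=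
  (fun i => M.coeff ((i : ℕ) + 1), -M.coeff 0)

theorem potential_params {d : ℕ} (hd : 0 < d) {M : ℂ[X]} (hM : M.Monic) (hdeg : M.natDegree = d) :
    potential d (params d M) = M := by
  obtain ⟨e, rfl⟩ : ∃ e, d = e + 1 := ⟨d - 1, by omega⟩
  have h1 := M.as_sum_range_C_mul_X_pow
  have h2 := hM.coeff_natDegree
  rw [hdeg] at h1 h2
  rw [Finset.sum_range_succ, h2, Finset.sum_range_succ'] at h1
  rw [potential, params]
  conv_rhs => rw [h1]
  rw [← Fin.sum_univ_eq_sum_range fun i => C (M.coeff (i + 1)) * X ^ (i + 1)]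
  simp
  ring

theorem params_potential {d : ℕ} (hd : 0 < d) (p : (Fin (d - 1) → ℂ) × ℂ) :
    params d (potential d p) = p := by
  have hne : ∀ i : Fin (d - 1), (i : ℕ) + 1 ≠ d := fun i => by
    have := i.isLt
    omega
  refine Prod.ext (funext fun i => ?_) ?_
  · simp only [params, potential, coeff_add, coeff_sub, finsetSum_coeff, coeff_C_mul_X_pow,
      coeff_X_pow, coeff_C_succ, if_neg (hne i), zero_add, sub_zero]
    rw [Finset.sum_eq_single i]
    · simp
    · intro j _ hj
      rw [if_neg]
      intro h
      exact hj (Fin.ext (by omega))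
    · simp
  · simp [params, potential, coeff_C_mul, coeff_X_pow, hd.ne]

theorem exists_rootPoly_eq {n : ℕ} {b : ℂ[X]} (hb : b.Monic) (hn : b.natDegree = n) :
    ∃ γ : Fin n → ℂ, rootPoly γ = b := by
  have hs := IsAlgClosed.splits b
  have hcard : b.roots.toList.length = n := by
    rw [Multiset.length_toList, ← hs.natDegree_eq_card_roots, hn]
  subst hcard
  refine ⟨fun i => b.roots.toList.get i, ?_⟩
  rw [rootPoly]
  have h1 := hs.eq_prod_roots_of_monic hb
  conv_rhs => rw [h1]
  rw [← Multiset.coe_toList b.roots, Multiset.map_coe, Multiset.prod_coe, ← List.prod_ofFn]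
  congr 1
  exact List.ext_get (by simp) (by simp)

end RayGrowth

namespace StokesSpectrum

open Polynomial SpectralPoly RayGrowth

theorem potential_eval (d : ℕ) (p : (Fin (d - 1) → ℂ) × ℂ) (z : ℂ) :
    (potential d p).eval z = Pol d p.1 z - p.2 := by
  simp [potential, Pol, eval_finsetSum]
  ring

/-- A nonzero solution subdominant in all even sectors. -/
def IsBound (d n : ℕ) (p : (Fin (d - 1) → ℂ) × ℂ) (y : ℂ → ℂ) : Prop :=
  y ≠ 0 ∧ IsSol d p.1 p.2 y ∧ ∀ i : ℕ, i < n / 2 → Subdominant n (2 * i) y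

/-- The potential having the exponential polynomial `Q e^{-B}` of degree `m` as a solution. -/
noncomputable def boundPotential (K m : ℕ) (x : (Fin (K + 1) → ℂ) × (Fin K → ℂ)) : ℂ[X] :=
  rootPoly x.1 ^ 2 - derivative (rootPoly x.1) + (ofCoeffs x.2 - C (2 * m : ℂ) * X ^ K)

theorem natDegree_boundPotential_tail (K m : ℕ) (x : (Fin (K + 1) → ℂ) × (Fin K → ℂ)) :
    (ofCoeffs x.2 - C (2 * m : ℂ) * X ^ K - derivative (rootPoly x.1)).natDegree ≤ K := by
  refine (natDegree_sub_le _ _).trans (max_le ((natDegree_sub_le _ _).trans (max_le ?_ ?_)) ?_)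
  · rw [natDegree_le_iff_coeff_eq_zero]
    intro k hk
    rw [coeff_ofCoeffs, dif_neg (by omega)]
  · exact natDegree_C_mul_X_pow_le _ _
  · have h1 := natDegree_derivative_le (rootPoly x.1)
    have h2 := natDegree_rootPoly x.1
    omega

theorem boundPotential_eq (K m : ℕ) (x : (Fin (K + 1) → ℂ) × (Fin K → ℂ)) :
    boundPotential K m x = rootPoly x.1 ^ 2 +
      (ofCoeffs x.2 - C (2 * m : ℂ) * X ^ K - derivative (rootPoly x.1)) := by
  rw [boundPotential]
  ring

theorem degree_boundPotential_tail_lt (K m : ℕ) (x : (Fin (K + 1) → ℂ) × (Fin K → ℂ)) :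
    (ofCoeffs x.2 - C (2 * m : ℂ) * X ^ K - derivative (rootPoly x.1)).natDegree <
      (rootPoly x.1 ^ 2).natDegree := by
  have h1 := natDegree_boundPotential_tail K m x
  rw [(rootPoly_monic x.1).natDegree_pow, natDegree_rootPoly]
  omega

theorem boundPotential_monic (K m : ℕ) (x : (Fin (K + 1) → ℂ) × (Fin K → ℂ)) :
    (boundPotential K m x).Monic := by
  rw [boundPotential_eq]
  exact ((rootPoly_monic x.1).pow 2).add_of_left
    (degree_lt_degree (degree_boundPotential_tail_lt K m x))

theorem natDegree_boundPotential (K m : ℕ) (x : (Fin (K + 1) → ℂ) × (Fin K → ℂ)) :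
    (boundPotential K m x).natDegree = 2 * (K + 1) := by
  rw [boundPotential_eq, natDegree_add_eq_left_of_natDegree_lt
    (degree_boundPotential_tail_lt K m x), (rootPoly_monic x.1).natDegree_pow, natDegree_rootPoly]

theorem continuous_coeff_boundPotential (K m k : ℕ) :
    Continuous fun x : (Fin (K + 1) → ℂ) × (Fin K → ℂ) => (boundPotential K m x).coeff k := by
  have h1 : ∀ k, Continuous fun x : (Fin (K + 1) → ℂ) × (Fin K → ℂ) => (rootPoly x.1).coeff k :=
    fun k => (differentiable_coeff_rootPoly k).continuous.comp continuous_fst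
  simp only [boundPotential, coeff_add, coeff_sub, coeff_derivative]
  refine ((continuous_coeff_sq h1 k).sub ((h1 _).mul continuous_const)).add
    (Continuous.sub ?_ continuous_const)
  simp only [coeff_ofCoeffs]
  split_ifs <;> fun_prop

theorem continuous_params_boundPotential (K m d : ℕ) :
    Continuous fun x => params d (boundPotential K m x) :=
  (continuous_pi fun _ => continuous_coeff_boundPotential K m _).prodMk
    (continuous_coeff_boundPotential K m _).neg

theorem exists_isBound {K m : ℕ} {x : (Fin (K + 1) → ℂ) × (Fin K → ℂ)} (hx : x ∈ spectralSet K m) :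
    ∃ y, IsBound (2 * (K + 1)) (2 * (K + 1) + 2) (params _ (boundPotential K m x)) y ∧
      (y ⁻¹' {0}).Finite ∧ (y ⁻¹' {0}).ncard = m := by
  obtain ⟨Q, hQ, -, h⟩ := hx
  have hdeg := coeff_ne_zero_of_diffOp_eq (rootPoly_monic x.1) (natDegree_rootPoly x.1) x.2 hQ h
  obtain ⟨B, hB⟩ := exists_derivative_eq (rootPoly x.1)
  have hode : derivative (derivative Q) - 2 * rootPoly x.1 * derivative Q =
      (ofCoeffs x.2 - C (2 * m : ℂ) * X ^ K) * Q := by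
    rw [sub_mul, ← h, diffOp_apply, C_1]
    ring
  have hz := zeros_finite_ncard (y := fun z => Q.eval z * exp (-B.eval z)) hQ hode fun _ => rfl
  rw [hdeg] at hz
  refine ⟨_, ⟨fun h0 => ?_, ?_, fun i hi θ hθ => ?_⟩, hz⟩
  · refine hQ (Polynomial.funext fun z => ?_)
    have := congrFun h0 z
    simpa [exp_ne_zero] using this
  · obtain ⟨h1, h2⟩ := isSol_polynomial_mul_exp hB hode
    refine ⟨h1, fun z => ?_⟩
    rw [h2 z, ← potential_eval, potential_params (by omega) (boundPotential_monic K m x)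
      (natDegree_boundPotential K m x)]
    rfl
  · have hpos : 0 < (exp (θ * I) ^ (K + 2)).re := by
      rw [← Complex.exp_nat_mul, show ((K + 2 : ℕ) : ℂ) * (θ * I) =
        (((K + 2) * θ - 2 * Real.pi * i : ℝ) : ℂ) * I + i * (2 * Real.pi * I) by
          push_cast
          ring, Complex.exp_add, exp_nat_mul_two_pi_mul_I, mul_one, exp_ofReal_mul_I_re]
      have hK : (0 : ℝ) < K + 2 := by positivity
      have e1 : (K + 2) * θ - 2 * Real.pi * i = (K + 2) *
          (θ - 2 * Real.pi * (2 * i : ℕ) / (2 * (K + 1) + 2 : ℕ)) := by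
        push_cast
        field_simp
        ring
      have e2 : (K + 2) * (Real.pi / (2 * (K + 1) + 2 : ℕ)) = Real.pi / 2 := by
        push_cast
        field_simp
        ring
      have e3 := mul_lt_mul_of_pos_left hθ hK
      rw [e2, ← abs_of_pos hK, ← abs_mul, ← e1, abs_lt] at e3
      exact Real.cos_pos_of_mem_Ioo ⟨by linarith [e3.1], e3.2⟩
    have := tendsto_polynomial_mul_exp (rootPoly_monic x.1) (natDegree_rootPoly x.1) hB Q
      (norm_exp_ofReal_mul_I θ) hpos
    simpa only [mul_comm] using this

/-- A bound solution is a polynomial times an exponential, and the degree of the polynomial is read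
off from the truncated square root of the potential. -/
theorem exists_mem_spectralSet {K : ℕ} {p : (Fin (2 * (K + 1) - 1) → ℂ) × ℂ} {y : ℂ → ℂ}
    (hy : IsBound (2 * (K + 1)) (2 * (K + 1) + 2) p y) {b : ℂ[X]} (hb : b.Monic)
    (hbd : b.natDegree = K + 1) (hr : (potential _ p - b ^ 2).natDegree ≤ K) :
    ∃ m : ℕ, (y ⁻¹' {0}).Finite ∧ (y ⁻¹' {0}).ncard = m ∧
      (potential _ p - b ^ 2 + derivative b).coeff K = -2 * m ∧
      ∃ x ∈ spectralSet K m, params _ (boundPotential K m x) = p := by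
  obtain ⟨hy0, hsol, hsub⟩ := hy
  obtain ⟨B, hB⟩ := exists_derivative_eq b
  let D : Data K := {
    b := b
    r := potential _ p - b ^ 2
    B := B
    y := y
    monic := hb
    natDegree_b := hbd
    natDegree_r := hr
    derivative_B := hB
    differentiable := hsol.1
    eq := fun z => by rw [add_sub_cancel, potential_eval, hsol.2 z] }
  obtain ⟨Q, hQ, hode, hyQ⟩ := D.exists_eq_polynomial_mul_exp hy0 fun i hi => by
    have h1 := hsub i (by omega) (2 * Real.pi * i / (K + 2)) (by
      rw [DirIn]
      have : 2 * Real.pi * i / (K + 2) -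
          2 * Real.pi * (2 * i : ℕ) / (2 * (K + 1) + 2 : ℕ) = 0 := by
        push_cast
        field_simp
        ring
      rw [this, abs_zero]
      positivity)
    simpa only [mul_comm] using h1
  obtain ⟨hfin, hcard⟩ := zeros_finite_ncard hQ hode hyQ
  have hs := natDegree_eq_of_eq hb hbd D.natDegree_s hQ hode
  obtain ⟨γ, hγ⟩ := exists_rootPoly_eq hb hbd
  set m := Q.natDegree with hm
  have hu : ofCoeffs (fun a : Fin K => (D.s + C (2 * m : ℂ) * X ^ K).coeff a) =
      D.s + C (2 * m : ℂ) * X ^ K := by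
    refine ofCoeffs_coeff fun a ha => ?_
    rw [coeff_add, coeff_C_mul_X_pow]
    rcases ha.eq_or_lt with rfl | ha
    · rw [hs, if_pos rfl]
      ring
    · rw [if_neg ha.ne', add_zero]
      exact coeff_eq_zero_of_natDegree_lt (D.natDegree_s.trans_lt ha)
  refine ⟨m, hfin, hcard, hs, (γ, fun a : Fin K => (D.s + C (2 * m : ℂ) * X ^ K).coeff a),
    ⟨Q, hQ, le_rfl, ?_⟩, ?_⟩
  · rw [hu, hγ, diffOp_apply, add_mul, ← hode, C_1]
    ring
  · have : boundPotential K m (γ, fun a : Fin K => (D.s + C (2 * m : ℂ) * X ^ K).coeff a) =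
        potential _ p := by
      rw [boundPotential, hu, hγ]
      change b ^ 2 - derivative b +
        (potential _ p - b ^ 2 + derivative b + C (2 * m : ℂ) * X ^ K - _) = _
      ring
    rw [this, params_potential (by omega)]

end StokesSpectrum

theorem stmt6 (d : ℕ) (hd : 2 ≤ d) (hev : Even d) (n : ℕ) (hn : n = d + 2)
    (Sig : Set ((Fin (d - 1) → ℂ) × ℂ))
    (hSig : Sig = {p : (Fin (d - 1) → ℂ) × ℂ |
      ∃ y : ℂ → ℂ, y ≠ 0 ∧ IsSol d p.1 p.2 y ∧
        ∀ i : ℕ, i < n / 2 → Subdominant n (2 * i) y})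
    (Sigm : ℕ → Set ((Fin (d - 1) → ℂ) × ℂ))
    (hSigm : ∀ m : ℕ, Sigm m = {p ∈ Sig |
      ∃ y : ℂ → ℂ, y ≠ 0 ∧ IsSol d p.1 p.2 y ∧
        (∀ i : ℕ, i < n / 2 → Subdominant n (2 * i) y) ∧
        (y ⁻¹' {0}).Finite ∧ (y ⁻¹' {0}).ncard = m}) :
    ∀ m : ℕ, (Sigm m).Nonempty ∧ IsConnected (Sigm m) ∧
      IsOpen (Subtype.val ⁻¹' (Sigm m) : Set ↥Sig) ∧
      IsClosed (Subtype.val ⁻¹' (Sigm m) : Set ↥Sig) ∧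
      ∀ p ∈ Sigm m, connectedComponentIn Sig p = Sigm m := by
  open Polynomial StokesSpectrum RayGrowth SpectralPoly in
  obtain ⟨K, rfl⟩ : ∃ K, d = 2 * (K + 1) := by
    obtain ⟨k, rfl⟩ := hev
    exact ⟨k - 1, by omega⟩
  subst hn
  have hd0 : 0 < 2 * (K + 1) := by omega
  obtain ⟨b, hb, hbm, hbd, hbr⟩ := exists_sqrt (continuous_coeff_potential (2 * (K + 1)))
    (potential_monic hd0) (natDegree_potential hd0)
  set F : (Fin (2 * (K + 1) - 1) → ℂ) × ℂ → ℂ := fun p =>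
    (potential _ p - b p ^ 2 + derivative (b p)).coeff K with hF
  have hFc : Continuous F := by
    simp only [hF, coeff_add, coeff_sub, coeff_derivative]
    exact ((continuous_coeff_potential _ K).sub (continuous_coeff_sq hb K)).add
      ((hb _).mul continuous_const)
  have hmem : ∀ p ∈ Sig, ∃ m : ℕ, F p = -2 * m ∧ p ∈ Sigm m := by
    intro p hp
    have hp' := hp
    rw [hSig] at hp'
    obtain ⟨y, hy⟩ := hp'
    obtain ⟨m, hfin, hcard, hFp, -⟩ := exists_mem_spectralSet hy (hbm p) (hbd p) (hbr p)
    refine ⟨m, hFp, ?_⟩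
    rw [hSigm]
    exact ⟨hp, y, hy.1, hy.2.1, hy.2.2, hfin, hcard⟩
  have hval : ∀ m, ∀ p ∈ Sigm m, F p = -2 * m ∧ ∃ x ∈ spectralSet K m,
      params _ (boundPotential K m x) = p := by
    intro m p hp
    rw [hSigm] at hp
    obtain ⟨-, y, hy0, hy1, hy2, -, hcard⟩ := hp
    obtain ⟨m', -, hcard', hFp, hx⟩ :=
      exists_mem_spectralSet ⟨hy0, hy1, hy2⟩ (hbm p) (hbd p) (hbr p)
    obtain rfl : m' = m := hcard'.symm.trans hcard
    exact ⟨hFp, hx⟩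
  have hsub : ∀ m, Sigm m ⊆ Sig := fun m p hp => by
    rw [hSigm] at hp
    exact hp.1
  have himage : ∀ m, Sigm m = (fun x => params _ (boundPotential K m x)) '' spectralSet K m := by
    intro m
    refine Set.Subset.antisymm (fun p hp => (hval m p hp).2) ?_
    rintro _ ⟨x, hx, rfl⟩
    obtain ⟨y, hy, hfin, hcard⟩ := exists_isBound hx
    rw [hSigm]
    refine ⟨?_, y, hy.1, hy.2.1, hy.2.2, hfin, hcard⟩
    rw [hSig]
    exact ⟨y, hy⟩
  intro m
  have hconn : IsConnected (Sigm m) := by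
    rw [himage]
    exact (isConnected_spectralSet K m).image _
      (continuous_params_boundPotential K m _).continuousOn
  have hiff : ∀ p ∈ Sig, (p ∈ Sigm m ↔ ‖F p + 2 * m‖ < 1) := by
    intro p hp
    obtain ⟨j, hj, hpj⟩ := hmem p hp
    refine ⟨fun h => by simp [(hval m p h).1], fun h => ?_⟩
    have h1 : F p + 2 * m = ((2 * ((m : ℤ) - j) : ℤ) : ℂ) := by
      rw [hj]
      push_cast
      ring
    rw [h1, norm_intCast] at h
    have h2 : |2 * ((m : ℤ) - j)| < 1 := by exact_mod_cast h
    obtain rfl : j = m := by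
      rw [Int.abs_lt_one_iff] at h2
      omega
    exact hpj
  have hiff' : ∀ p ∈ Sig, (p ∈ Sigm m ↔ F p = -2 * m) := by
    intro p hp
    refine ⟨fun h => (hval m p h).1, fun h => (hiff p hp).mpr ?_⟩
    rw [h]
    simp
  have hopen : IsOpen (Subtype.val ⁻¹' (Sigm m) : Set ↥Sig) := by
    have : (Subtype.val ⁻¹' (Sigm m) : Set ↥Sig) =
        {p : ↥Sig | ‖F p + 2 * m‖ < 1} := Set.ext fun p => hiff p p.2
    rw [this]
    exact isOpen_lt (by fun_prop) continuous_const
  have hclosed : IsClosed (Subtype.val ⁻¹' (Sigm m) : Set ↥Sig) := by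
    have : (Subtype.val ⁻¹' (Sigm m) : Set ↥Sig) =
        {p : ↥Sig | F p = -2 * m} := Set.ext fun p => hiff' p p.2
    rw [this]
    exact isClosed_eq (by fun_prop) continuous_const
  refine ⟨hconn.nonempty, hconn, hopen, hclosed, fun p hp => Set.Subset.antisymm ?_
    (hconn.isPreconnected.subset_connectedComponentIn hp (hsub m))⟩
  rw [connectedComponentIn_eq_image (hsub m hp)]
  rintro _ ⟨q, hq, rfl⟩
  exact IsClopen.connectedComponent_subset ⟨hclosed, hopen⟩
    (show (⟨p, hsub m hp⟩ : ↥Sig) ∈ _ from hp) hq
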